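/- arXiv:1902.02378 — 4 statements merged into one kernel-verified Lean document; each statement's English description precedes it below -/
import Mathlib

section
/- The intersection of any family of retracts of a free group of finite rank is a retract of that free group. -/
/-- `R` is a retract of the ambient group: there is an endomorphism with image `R`
restricting to the identity on `R` (equivalently, an idempotent endomorphism with image `R`). -/
def IsRetract {G : Type*} [Group G] (R : Subgroup G) : Prop :=
  ∃ r : G →* G, r.range = R ∧ ∀ x ∈ R, r x = x

/-- The subgroup `H` is free of rank `m`. -/
def HasFreeRank {G : Type*} [Group G] (H : Subgroup G) (m : ℕ) : Prop :=
  ∃ φ : FreeGroup (Fin m) →* G, Function.Injective φ ∧ φ.range = H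

/-! ### Free groups of finite rank are Hopfian -/

universe u

namespace FreeGroup

/-- The elements of word length at most `k` in a free group of finite rank. -/
theorem finite_norm_le {X : Type*} [Finite X] [DecidableEq X] (k : ℕ) :
    {h : FreeGroup X | h.norm ≤ k}.Finite :=
  Set.Finite.of_finite_image
    ((List.finite_length_le (X × Bool) k).subset (by rintro _ ⟨h, hh, rfl⟩; exact hh))
    toWord_injective.injOn

/-- Free groups of finite rank are residually finite. -/
theorem exists_finite_perm_ne_one {X : Type u} [Finite X] [DecidableEq X] {w : FreeGroup X}
    (hw : w ≠ 1) :
    ∃ (B : Type u) (_ : Finite B) (π : FreeGroup X →* Equiv.Perm B), π w ≠ 1 := by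
  let B : Type _ := {h : FreeGroup X // h.norm ≤ w.norm}
  have hB : Finite B := (finite_norm_le w.norm).to_subtype
  have := Fintype.ofFinite B
  let e (x : X) : {b : B // (of x * b.1).norm ≤ w.norm} ≃
      {b : B // ((of x)⁻¹ * b.1).norm ≤ w.norm} :=
    { toFun := fun b => ⟨⟨of x * b.1.1, b.2⟩, by simpa using b.1.2⟩
      invFun := fun b => ⟨⟨(of x)⁻¹ * b.1.1, b.2⟩, by simpa using b.1.2⟩
      left_inv := fun b => by simp
      right_inv := fun b => by simp }
  classical
  let π : FreeGroup X →* Equiv.Perm B := lift fun x => (e x).extendSubtype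
  have key (x : X) (b : B) (hb : (of x * b.1).norm ≤ w.norm) :
      π (of x) b = ⟨of x * b.1, hb⟩ := by
    simp only [π, lift_apply_of]
    exact Equiv.extendSubtype_apply_of_mem (e x) b hb
  have hL (L : List (X × Bool)) (hL : L.length ≤ w.norm) :
      π (mk L) ⟨1, by simp⟩ = ⟨mk L, norm_mk_le.trans hL⟩ := by
    induction L with
    | nil => simp [← one_eq_mk]
    | cons z L ih =>
      have hl : L.length ≤ w.norm := by simp at hL; lia
      specialize ih hl
      obtain ⟨x, b⟩ := z
      have hn : (mk ((x, b) :: L)).norm ≤ w.norm := norm_mk_le.trans hL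
      cases b
      · have h1 : mk ((x, false) :: L) = (of x)⁻¹ * mk L := by
          simp [of, inv_mk, mul_mk, invRev]
        simp only [h1] at hn ⊢
        rw [_root_.map_mul, Equiv.Perm.mul_apply, ih, _root_.map_inv, Equiv.Perm.inv_eq_iff_eq]
        rw [key x ⟨_, hn⟩ (by simpa using norm_mk_le.trans hl)]
        simp
      · have h1 : mk ((x, true) :: L) = of x * mk L := by simp [of, mul_mk]
        simp only [h1] at hn ⊢
        rw [_root_.map_mul, Equiv.Perm.mul_apply, ih, key x _ hn]
  refine ⟨B, hB, π, fun h => hw ?_⟩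
  have := hL w.toWord le_rfl
  simpa [mk_toWord, h] using (congrArg Subtype.val this).symm

/-- Free groups of finite rank are Hopfian. -/
theorem injective_of_surjective {X : Type*} [Finite X] (φ : FreeGroup X →* FreeGroup X)
    (hφ : Function.Surjective φ) : Function.Injective φ := by
  classical
  rw [injective_iff_map_eq_one]
  intro w hw
  by_contra hne
  obtain ⟨B, hB, π, hπ⟩ := exists_finite_perm_ne_one hne
  have : Finite (FreeGroup X →* Equiv.Perm B) := Finite.of_equiv _ (lift (α := X))
  have hinj : Function.Injective fun ψ : FreeGroup X →* Equiv.Perm B => ψ.comp φ :=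
    fun _ _ h => (MonoidHom.cancel_right hφ).1 h
  obtain ⟨ψ, rfl⟩ := Finite.surjective_of_injective hinj π
  simp [hw] at hπ

/-- A free group that is an image of a free group of rank `m` has rank at most `m`. -/
theorem finite_and_card_le_of_surjective {X Y : Type*} [Finite X]
    (φ : FreeGroup X →* FreeGroup Y) (hφ : Function.Surjective φ) :
    Finite Y ∧ Nat.card Y ≤ Nat.card X := by
  have hinj : Function.Injective fun f : Y → Multiplicative (ZMod 2) =>
      (lift (α := X)).symm ((lift f).comp φ) := by
    intro f g h
    exact lift.injective ((MonoidHom.cancel_right hφ).1 ((lift (α := X)).symm.injective h))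
  have hfin : Finite (Y → Multiplicative (ZMod 2)) := Finite.of_injective _ hinj
  have hY : Finite Y := by
    by_contra h
    rw [not_finite_iff_infinite] at h
    exact not_finite (Y → Multiplicative (ZMod 2))
  refine ⟨hY, ?_⟩
  have := Nat.card_le_card_of_injective _ hinj
  have h2 : Nat.card (Multiplicative (ZMod 2)) = 2 := Nat.card_zmod 2
  rw [Nat.card_fun, Nat.card_fun, h2] at this
  exact (Nat.pow_le_pow_iff_right (by norm_num)).1 this

end FreeGroup

section Rank

variable {X : Type*}

/-- The image of a free group of rank `m` in a free group is free of some rank `k ≤ m`, and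
the map is injective if `k = m`. -/
theorem exists_hasFreeRank_range {m : ℕ} (ψ : FreeGroup (Fin m) →* FreeGroup X) :
    ∃ k ≤ m, HasFreeRank ψ.range k ∧ (k = m → Function.Injective ψ) := by
  let e := IsFreeGroup.toFreeGroup ψ.range
  let φ := e.toMonoidHom.comp ψ.rangeRestrict
  have hφ : Function.Surjective φ := e.surjective.comp ψ.rangeRestrict_surjective
  obtain ⟨hfin, hcard⟩ := FreeGroup.finite_and_card_le_of_surjective φ hφ
  let t := Finite.equivFin (IsFreeGroup.Generators ψ.range)
  let e' : ψ.range ≃* FreeGroup (Fin (Nat.card (IsFreeGroup.Generators ψ.range))) :=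
    e.trans (FreeGroup.freeGroupCongr t)
  refine ⟨_, by simpa using hcard, ⟨ψ.range.subtype.comp e'.symm.toMonoidHom, ?_, ?_⟩, ?_⟩
  · exact Subtype.val_injective.comp e'.symm.injective
  · have htop : e'.symm.toMonoidHom.range = ⊤ := MonoidHom.range_eq_top.2 e'.symm.surjective
    rw [MonoidHom.range_comp, htop, ← MonoidHom.range_eq_map, Subgroup.range_subtype]
  · intro h
    have key : ∀ k, k = m → ∀ e'' : ψ.range ≃* FreeGroup (Fin k), Function.Injective ψ := by
      rintro k rfl e''
      have := FreeGroup.injective_of_surjective (e''.toMonoidHom.comp ψ.rangeRestrict)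
        (e''.surjective.comp ψ.rangeRestrict_surjective)
      intro a b hab
      exact this (congrArg e'' (Subtype.ext hab))
    exact key _ h e'

theorem HasFreeRank.map {Y : Type*} {H : Subgroup (FreeGroup X)} {m : ℕ} (hH : HasFreeRank H m)
    (ψ : FreeGroup X →* FreeGroup Y) :
    ∃ k ≤ m, HasFreeRank (H.map ψ) k ∧ (k = m → Set.InjOn ψ H) := by
  obtain ⟨j, hj, rfl⟩ := hH
  obtain ⟨k, hk, h1, h2⟩ := exists_hasFreeRank_range (ψ.comp j)
  refine ⟨k, hk, by rwa [← MonoidHom.range_comp], fun h => ?_⟩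
  rintro _ ⟨a, rfl⟩ _ ⟨b, rfl⟩ hab
  exact congrArg j (h2 h hab)

theorem HasFreeRank.unique {H : Subgroup (FreeGroup X)} {k m : ℕ} (hk : HasFreeRank H k)
    (hm : HasFreeRank H m) : k = m := by
  have key : ∀ {k m : ℕ}, HasFreeRank H k → HasFreeRank H m → k ≤ m := by
    rintro k m ⟨i, hi, hiH⟩ ⟨j, hj, hjH⟩
    let e : i.range ≃* FreeGroup (Fin k) := (MonoidHom.ofInjective hi).symm
    let f : j.range ≃* i.range := MulEquiv.subgroupCongr (hjH.trans hiH.symm)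
    have := (FreeGroup.finite_and_card_le_of_surjective
      ((f.trans e).toMonoidHom.comp j.rangeRestrict)
      ((f.trans e).surjective.comp j.rangeRestrict_surjective)).2
    simpa using this
  exact le_antisymm (key hk hm) (key hm hk)

/-- A proper subgroup of `H` onto which `H` retracts has smaller rank. -/
theorem HasFreeRank.lt_of_map {H L : Subgroup (FreeGroup X)} {k m : ℕ} (hH : HasFreeRank H m)
    (hL : HasFreeRank L k) (r : FreeGroup X →* FreeGroup X) (hr : H.map r = L) (hLH : L < H)
    (hfix : ∀ x ∈ L, r x = x) : k < m := by
  obtain ⟨k', hk', h1, h2⟩ := hH.map r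
  rw [hr] at h1
  obtain rfl := hL.unique h1
  refine lt_of_le_of_ne hk' fun h => hLH.not_ge fun x hx => ?_
  have hrx : r x ∈ L := hr ▸ Subgroup.mem_map_of_mem r hx
  have := h2 h (hLH.le hrx) hx (hfix _ hrx)
  exact this ▸ hrx

end Rank

/-! ### Counting crossings of an edge of a Cayley graph -/

namespace FreeGroup

section Crossing

variable {Y Q : Type*} [Group Q] (π : FreeGroup Y →* Q) (x₀ : Y) (q₀ : Q)

open Classical in
/-- The action of the free group on the infinite cyclic cover of the Cayley graph of `Q`
which unwinds the edge labelled `x₀` starting at `q₀`. -/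
noncomputable def crossingAction : FreeGroup Y →* Equiv.Perm (Q × ℤ) :=
  lift fun y =>
    { toFun := fun a => (π (of y) * a.1, a.2 + if y = x₀ ∧ a.1 = q₀ then 1 else 0)
      invFun := fun a =>
        ((π (of y))⁻¹ * a.1, a.2 - if y = x₀ ∧ (π (of y))⁻¹ * a.1 = q₀ then 1 else 0)
      left_inv := fun a => by simp
      right_inv := fun a => by simp }

/-- The number of times, with signs, that the path labelled `w` starting at `q` crosses the edge
labelled `x₀` starting at `q₀`. -/
noncomputable def crossing (w : FreeGroup Y) (q : Q) : ℤ := (crossingAction π x₀ q₀ w (q, 0)).2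

open Classical in
theorem crossingAction_of (y : Y) (q : Q) (n : ℤ) :
    crossingAction π x₀ q₀ (of y) (q, n) =
      (π (of y) * q, n + if y = x₀ ∧ q = q₀ then 1 else 0) := by
  simp [crossingAction]

theorem crossingAction_apply (w : FreeGroup Y) (q : Q) (n : ℤ) :
    crossingAction π x₀ q₀ w (q, n) = (π w * q, n + crossing π x₀ q₀ w q) := by
  suffices h : ∃ c : Q → ℤ, ∀ q n, crossingAction π x₀ q₀ w (q, n) = (π w * q, n + c q) by
    obtain ⟨c, hc⟩ := h
    simp [crossing, hc]
  classical
  induction w using FreeGroup.induction_on with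
  | C1 => exact ⟨0, by simp⟩
  | of y => exact ⟨_, crossingAction_of π x₀ q₀ y⟩
  | inv_of y ih =>
    obtain ⟨c, hc⟩ := ih
    refine ⟨fun q => - c ((π (of y))⁻¹ * q), fun q n => ?_⟩
    rw [_root_.map_inv, Equiv.Perm.inv_eq_iff_eq, hc]
    simp
  | mul v w hv hw =>
    obtain ⟨c, hc⟩ := hv
    obtain ⟨d, hd⟩ := hw
    refine ⟨fun q => d q + c (π w * q), fun q n => ?_⟩
    simp [hc, hd, mul_assoc, add_assoc]

theorem crossing_mul (v w : FreeGroup Y) (q : Q) :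
    crossing π x₀ q₀ (v * w) q = crossing π x₀ q₀ w q + crossing π x₀ q₀ v (π w * q) := by
  rw [crossing, _root_.map_mul, Equiv.Perm.mul_apply, crossingAction_apply, crossingAction_apply]
  simp

@[simp]
theorem crossing_one (q : Q) : crossing π x₀ q₀ 1 q = 0 := by
  simp [crossing]

open Classical in
theorem crossing_of (y : Y) (q : Q) :
    crossing π x₀ q₀ (of y) q = if y = x₀ ∧ q = q₀ then 1 else 0 := by
  simp [crossing, crossingAction_of]

theorem crossing_inv (w : FreeGroup Y) (q : Q) :
    crossing π x₀ q₀ w⁻¹ q = - crossing π x₀ q₀ w ((π w)⁻¹ * q) := by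
  have := crossing_mul π x₀ q₀ w w⁻¹ q
  simp at this
  lia

theorem finite_crossing_ne_zero (w : FreeGroup Y) : {q | crossing π x₀ q₀ w q ≠ 0}.Finite := by
  classical
  induction w using FreeGroup.induction_on with
  | C1 => simp
  | of y =>
    refine (Set.finite_singleton q₀).subset fun q hq => ?_
    by_contra h
    simp_all [crossing_of]
  | inv_of y ih =>
    refine (ih.image (π (of y) * ·)).subset fun q hq => ?_
    refine ⟨(π (of y))⁻¹ * q, ?_, by simp⟩
    simpa [crossing_inv] using hq
  | mul v w hv hw =>
    refine (hw.union (hv.image ((π w)⁻¹ * ·))).subset fun q hq => ?_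
    by_cases h : crossing π x₀ q₀ w q = 0
    · right
      refine ⟨π w * q, ?_, by simp⟩
      simpa [crossing_mul, h] using hq
    · exact Or.inl h

/-- A word whose path starting at `1` avoids an edge does not cross it. -/
theorem crossing_mk_eq_zero (L : List (Y × Bool))
    (hpos : ∀ A B, L = A ++ (x₀, true) :: B → π (mk B) ≠ q₀)
    (hneg : ∀ A B, L = A ++ (x₀, false) :: B → π (mk ((x₀, false) :: B)) ≠ q₀) :
    crossing π x₀ q₀ (mk L) 1 = 0 := by
  induction L with
  | nil => simp [← one_eq_mk]
  | cons z L ih =>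
    have ih := ih (fun A B h => hpos (z :: A) B (by simp [h]))
      (fun A B h => hneg (z :: A) B (by simp [h]))
    obtain ⟨x, b⟩ := z
    have hmul : mk ((x, b) :: L) = mk [(x, b)] * mk L := by simp [mul_mk]
    rw [hmul, crossing_mul, ih, zero_add, mul_one]
    cases b
    · have h1 : mk [(x, false)] = (of x)⁻¹ := by simp [of, inv_mk, invRev]
      rw [h1, crossing_inv, crossing_of, if_neg, neg_zero]
      rintro ⟨rfl, h⟩
      refine hneg [] L rfl ?_
      rw [hmul, h1, ← h]
      simp
    · have h1 : mk [(x, true)] = of x := rfl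
      rw [h1, crossing_of, if_neg]
      rintro ⟨rfl, h⟩
      exact hpos [] L rfl h

end Crossing

/-- A nontrivial kernel contains a path crossing some edge of the Cayley graph a nonzero number
of times: a shortest nontrivial element traces out a simple closed path. -/
theorem exists_crossing_ne_zero {Y Q : Type*} [Group Q] (π : FreeGroup Y →* Q)
    (hπ : ¬ Function.Injective π) :
    ∃ x₀ q₀ m, π m = 1 ∧ crossing π x₀ q₀ m 1 ≠ 0 := by
  classical
  rw [injective_iff_map_eq_one] at hπ
  push Not at hπ
  obtain ⟨m, ⟨hm, hm1⟩, hmin⟩ := (measure (norm (α := Y))).wf.has_min {m | π m = 1 ∧ m ≠ 1} hπ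
  have hshort (A L B : List (Y × Bool)) (h : m.toWord = A ++ L ++ B) (hlt : L.length < m.norm)
      (hL : π (mk L) = 1) : L = [] := by
    by_contra hne
    have hred : IsReduced L := isReduced_toWord.infix ⟨A, B, h.symm⟩
    refine hmin (mk L) ⟨hL, fun h1 => hne ?_⟩ (norm_mk_le.trans_lt hlt)
    rw [← hred.reduce_eq, ← toWord_mk, h1, toWord_one]
  have hred : IsReduced m.toWord := isReduced_toWord
  have hnorm : m.norm = m.toWord.length := rfl
  obtain hw | ⟨⟨x, b⟩, L, hw⟩ : m.toWord = [] ∨ ∃ z L, m.toWord = z :: L := by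
    cases m.toWord <;> simp
  · exact absurd (toWord_eq_nil_iff.1 hw) hm1
  have hmL : m = mk [(x, b)] * mk L := by rw [mul_mk, ← mk_toWord (x := m), hw]; rfl
  have happ (A B : List (Y × Bool)) : π (mk (A ++ B)) = π (mk A) * π (mk B) := by
    rw [← mul_mk, _root_.map_mul]
  cases b
  · have h1 : mk [(x, false)] = (of x)⁻¹ := by simp [of, inv_mk, invRev]
    have hL : π (mk L) = π (of x) := by
      rw [hmL, h1, _root_.map_mul, _root_.map_inv, inv_mul_eq_one] at hm
      exact hm.symm
    refine ⟨x, 1, m, hm, ?_⟩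
    rw [hmL, crossing_mul, crossing_mk_eq_zero, h1, crossing_inv, mul_one, hL, inv_mul_cancel,
      crossing_of]
    · simp
    · intro A B h hB
      have hB' : B = [] := hshort ((x, false) :: A ++ [(x, true)]) B [] (by simp [hw, h])
        (by simp [hnorm, hw, h]; lia) hB
      subst hB'
      rw [h, happ, show mk [(x, true)] = of x from rfl, mul_eq_right] at hL
      have hA : A = [] := hshort [(x, false)] A [(x, true)] (by simp [hw, h])
        (by simp [hnorm, hw, h]) hL
      subst hA
      simp [hw, h] at hred
    · intro A B h hB
      have := hshort ((x, false) :: A) ((x, false) :: B) [] (by simp [hw, h])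
        (by simp [hnorm, hw, h]) hB
      simp at this
  · have h1 : mk [(x, true)] = of x := rfl
    refine ⟨x, π (mk L), m, hm, ?_⟩
    rw [hmL, crossing_mul, crossing_mk_eq_zero, h1, mul_one, crossing_of]
    · simp
    · intro A B h hB
      rw [h, ← List.singleton_append, ← List.append_assoc, happ, right_eq_mul] at hB
      have := hshort [(x, true)] (A ++ [(x, true)]) B (by simp [hw, h])
        (by simp [hnorm, hw, h]) hB
      simp at this
    · intro A B h hB
      rw [h, happ, right_eq_mul] at hB
      have hA : A = [] := hshort [(x, true)] A ((x, false) :: B) (by simp [hw, h])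
        (by simp [hnorm, hw, h]) hB
      subst hA
      simp [hw, h] at hred

/-- Two different homomorphisms to a free group that agree after composition with some `e`, and
become injective, are distinguished by a function on their source which is nonconstant, almost
invariant under left translation, and invariant under left translation by their equalizer. -/
theorem exists_almost_invariant {H Y Q : Type*} [Group H] [Group Q] {α β : H →* FreeGroup Y}
    (e : FreeGroup Y →* Q) (he : e.comp α = e.comp β) (hinj : Function.Injective (e.comp α))
    (hne : α ≠ β) :
    ∃ f : H → ℤ, (∃ h, f h ≠ f 1) ∧ (∀ g, {h | f (g * h) ≠ f h}.Finite) ∧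
      ∀ g h, α g = β g → f (g * h) = f h := by
  let M : Subgroup (FreeGroup Y) := Subgroup.normalClosure (Set.range fun h => α h * (β h)⁻¹)
  let π := QuotientGroup.mk' M
  have hαβM (h : H) : α h * (β h)⁻¹ ∈ M := Subgroup.subset_normalClosure ⟨h, rfl⟩
  have hMe : M ≤ e.ker := by
    refine Subgroup.normalClosure_le_normal ?_
    rintro _ ⟨h, rfl⟩
    have := DFunLike.congr_fun he h
    simp only [MonoidHom.comp_apply] at this
    simp [MonoidHom.mem_ker, this]
  have hπ (h : H) : π (α h) = π (β h) := by
    rw [← mul_inv_eq_one, ← _root_.map_inv, ← _root_.map_mul]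
    exact (QuotientGroup.eq_one_iff _).2 (hαβM h)
  have hπinj : Function.Injective (π.comp α) := by
    rw [injective_iff_map_eq_one] at hinj ⊢
    exact fun h hh => hinj h (hMe ((QuotientGroup.eq_one_iff _).1 hh))
  have hker : ¬ Function.Injective π := by
    refine fun h => hne (MonoidHom.ext fun g => h (hπ g))
  obtain ⟨x₀, q₀, m, hm, hcm⟩ := exists_crossing_ne_zero π hker
  obtain ⟨h, q, hhq⟩ : ∃ h q, crossing π x₀ q₀ (α h) q ≠ crossing π x₀ q₀ (β h) q := by
    by_contra! hall
    have hM : M ≤ (crossingAction π x₀ q₀).ker := by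
      refine Subgroup.normalClosure_le_normal ?_
      rintro _ ⟨h, rfl⟩
      simp only [SetLike.mem_coe, MonoidHom.mem_ker, _root_.map_mul, _root_.map_inv,
        mul_inv_eq_one]
      ext1 ⟨q, n⟩
      rw [crossingAction_apply, crossingAction_apply, hπ, hall]
    have := hM ((QuotientGroup.eq_one_iff _).1 hm)
    rw [MonoidHom.mem_ker] at this
    exact hcm (by simp [crossing, this])
  have hadd (g h : H) : (crossing π x₀ q₀ (α (g * h)) q - crossing π x₀ q₀ (β (g * h)) q) =
      (crossing π x₀ q₀ (α h) q - crossing π x₀ q₀ (β h) q) +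
      (crossing π x₀ q₀ (α g) (π (α h) * q) - crossing π x₀ q₀ (β g) (π (α h) * q)) := by
    simp only [_root_.map_mul α, _root_.map_mul β, crossing_mul, hπ]
    ring
  refine ⟨fun h => crossing π x₀ q₀ (α h) q - crossing π x₀ q₀ (β h) q, ⟨h, ?_⟩, ?_, ?_⟩
  · simpa [sub_eq_zero] using hhq
  · intro g
    have hfin := (finite_crossing_ne_zero π x₀ q₀ (α g)).union
      (finite_crossing_ne_zero π x₀ q₀ (β g))
    have hinj' : Function.Injective fun h => π (α h) * q :=
      fun a b hab => hπinj (mul_right_cancel hab)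
    refine (hfin.preimage hinj'.injOn).subset fun h hh => ?_
    by_contra hcon
    simp only [Set.preimage_union, Set.mem_union, Set.mem_preimage, Set.mem_ofPred_eq, not_or,
      not_not] at hcon
    refine hh ?_
    simp only [hadd, hcon.1, hcon.2]
    ring
  · intro g h hg
    simp only [hadd, hg]
    ring

end FreeGroup

/-! ### Whitehead automorphisms -/

namespace FreeGroup

section Letters

variable {X : Type*}

/-- The inverse of a letter. -/
def letterInv (z : X × Bool) : X × Bool := (z.1, !z.2)

@[simp]
theorem letterInv_letterInv (z : X × Bool) : letterInv (letterInv z) = z := by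
  simp [letterInv]

theorem letterInv_ne (z : X × Bool) : letterInv z ≠ z := by
  simp [letterInv, Prod.ext_iff]

theorem mk_letterInv (z : X × Bool) : mk [letterInv z] = (mk [z])⁻¹ := by
  simp [letterInv, inv_mk, invRev]

theorem mk_cons (z : X × Bool) (L : List (X × Bool)) : mk (z :: L) = mk [z] * mk L := by
  simp [mul_mk]

theorem mk_singleton_ne_one (z : X × Bool) : mk [z] ≠ 1 := by
  obtain ⟨x, b⟩ := z
  cases b
  · rw [show (x, false) = letterInv (x, true) from rfl, mk_letterInv, inv_ne_one]
    exact of_ne_one x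
  · exact of_ne_one x

theorem isReduced_append_iff {A B : List (X × Bool)} :
    IsReduced (A ++ B) ↔ IsReduced A ∧ IsReduced B ∧
      (A.getLast? = none ∨ A.getLast? ≠ B.head?.map letterInv) := by
  rw [IsReduced, List.isChain_append]
  refine and_congr_right fun _ => and_congr_right fun _ => ?_
  rcases A.getLast? with _ | ⟨x, b⟩
  · simp
  rcases B.head? with _ | ⟨y, c⟩
  · simp
  cases b <;> cases c <;> simp [letterInv]

theorem isReduced_cons_iff {z : X × Bool} {B : List (X × Bool)} :
    IsReduced (z :: B) ↔ IsReduced B ∧ B.head?.map letterInv ≠ some z := by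
  rw [← List.singleton_append, isReduced_append_iff]
  simp [eq_comm]

theorem getLast?_invRev (L : List (X × Bool)) :
    (invRev L).getLast? = L.head?.map letterInv := by
  simp only [invRev, List.getLast?_reverse, List.head?_map]
  rfl

theorem isReduced_invRev {L : List (X × Bool)} (hL : IsReduced L) : IsReduced (invRev L) := by
  classical
  rw [isReduced_iff_reduce_eq] at hL ⊢
  rw [reduce_invRev, hL]

/-- The relation `T` holds at every turn of the word `L`, where `o` is the letter preceding it.
A turn consists of the letter before it and the inverse of the letter after it. -/
def Turns (T : Option (X × Bool) → Option (X × Bool) → Prop) :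
    Option (X × Bool) → List (X × Bool) → Prop
  | o, [] => T o none
  | o, z :: L => T o (some (letterInv z)) ∧ Turns T (some z) L

theorem turns_of_splits {T : Option (X × Bool) → Option (X × Bool) → Prop}
    {o : Option (X × Bool)} {L : List (X × Bool)}
    (h : ∀ A B, L = A ++ B → T (A.getLast?.or o) (B.head?.map letterInv)) : Turns T o L := by
  induction L generalizing o with
  | nil => exact h [] [] rfl
  | cons z L ih =>
    refine ⟨h [] _ rfl, ih fun A B hAB => ?_⟩
    have := h (z :: A) B (by simp [hAB])
    rw [List.getLast?_cons] at this
    cases hA : A.getLast? <;> simpa [hA] using this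

theorem Turns.mono {T T' : Option (X × Bool) → Option (X × Bool) → Prop}
    (hT : ∀ o o', T o o' → T' o o') {o : Option (X × Bool)} {L : List (X × Bool)}
    (h : Turns T o L) : Turns T' o L := by
  induction L generalizing o with
  | nil => exact hT _ _ h
  | cons z L ih => exact ⟨hT _ _ h.1, ih h.2⟩

/-- For a `0`-`1`-valued `χ`, the endomorphism multiplying a letter `z` by `g` on the right if
`χ z = 1`, and by `g⁻¹` on the left if `χ z⁻¹ = 1`. -/
noncomputable def twist (χ : Option (X × Bool) → ℤ) (g : FreeGroup X) :
    FreeGroup X →* FreeGroup X :=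
  lift fun x => g ^ (-χ (some (x, false))) * of x * g ^ χ (some (x, true))

theorem twist_letter (χ : Option (X × Bool) → ℤ) (g : FreeGroup X) (z : X × Bool) :
    twist χ g (mk [z]) = g ^ (-χ (some (letterInv z))) * mk [z] * g ^ χ (some z) := by
  obtain ⟨x, b⟩ := z
  have h : twist χ g (of x) = g ^ (-χ (some (x, false))) * of x * g ^ χ (some (x, true)) := by
    simp [twist]
  cases b
  · rw [show (x, false) = letterInv (x, true) from rfl, mk_letterInv, _root_.map_inv,
      show mk [(x, true)] = of x from rfl, h]
    simp [letterInv, mul_assoc]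
  · exact h

theorem zpow_mul_twist_mk_cons (χ : Option (X × Bool) → ℤ) (g : FreeGroup X)
    (o : Option (X × Bool)) (z : X × Bool) (L : List (X × Bool)) :
    g ^ χ o * twist χ g (mk (z :: L)) =
      g ^ (χ o - χ (some (letterInv z))) * (mk [z] * (g ^ χ (some z) * twist χ g (mk L))) := by
  rw [mk_cons, _root_.map_mul, twist_letter, zpow_sub, zpow_neg]
  simp only [mul_assoc]

theorem twist_inv_twist {χ : Option (X × Bool) → ℤ} {g : FreeGroup X}
    (hg : twist χ g⁻¹ g = g) (w : FreeGroup X) : twist χ g⁻¹ (twist χ g w) = w := by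
  suffices h : (twist χ g⁻¹).comp (twist χ g) = MonoidHom.id _ from DFunLike.congr_fun h w
  ext x
  have h1 := twist_letter χ g (x, true)
  have h2 := twist_letter χ g⁻¹ (x, true)
  simp only [← of.eq_1] at h1 h2
  rw [MonoidHom.comp_apply, h1, _root_.map_mul, _root_.map_mul, map_zpow, map_zpow, hg, h2]
  simp [mul_assoc]

theorem twist_mk_of_turns {χ : Option (X × Bool) → ℤ} {g : FreeGroup X} (hχ : χ none = 0)
    {o : Option (X × Bool)} {L : List (X × Bool)} (h : Turns (fun o o' => χ o = χ o') o L) :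
    g ^ χ o * twist χ g (mk L) = mk L := by
  induction L generalizing o with
  | nil =>
    have h : χ o = χ none := h
    simp [h, hχ, ← one_eq_mk]
  | cons z L ih => rw [zpow_mul_twist_mk_cons, ih h.2, h.1, sub_self, zpow_zero, one_mul,
    ← mk_cons]

/-- The condition on turns under which a Whitehead automorphism with multiplier `a` does not
increase lengths. -/
def IsGoodTurn (χ : Option (X × Bool) → ℤ) (g : FreeGroup X) (a : X × Bool)
    (o o' : Option (X × Bool)) : Prop :=
  (o = none ∨ o ≠ o') ∧ (χ o = χ o' ∨ (o = some a ∧ g ^ (χ o - χ o') = (mk [a])⁻¹) ∨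
    (o' = some a ∧ g ^ (χ o - χ o') = mk [a]))

theorem norm_letter_mul_le [DecidableEq X] (z : X × Bool) (w : FreeGroup X) :
    (mk [z] * w).norm ≤ w.norm + 1 := by
  have := norm_mul_le (mk [z]) w
  have h1 : (mk [z]).norm ≤ 1 := norm_mk_le
  lia

theorem norm_twist_le_aux [DecidableEq X] {χ : Option (X × Bool) → ℤ} {g : FreeGroup X}
    {a : X × Bool} (hχ : χ none = 0) {o : Option (X × Bool)} {L : List (X × Bool)}
    (h : Turns (IsGoodTurn χ g a) o L) :
    (o ≠ some a → (g ^ χ o * twist χ g (mk L)).norm ≤ L.length ∧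
      ((g ^ χ o * twist χ g (mk L)).norm < L.length ∨ Turns (fun o o' => χ o = χ o') o L)) ∧
    (o = some a → (mk [a] * (g ^ χ o * twist χ g (mk L))).norm ≤ L.length + 1 ∧
      ((mk [a] * (g ^ χ o * twist χ g (mk L))).norm < L.length + 1 ∨
        Turns (fun o o' => χ o = χ o') o L)) := by
  induction L generalizing o with
  | nil =>
    obtain ⟨hne, h | ⟨rfl, h⟩ | ⟨h, -⟩⟩ := h
    · have h1 : (mk [a]).norm ≤ 1 := norm_mk_le
      have ht : Turns (fun o o' => χ o = χ o') o [] := h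
      rw [hχ] at h
      simp [h, ← one_eq_mk, h1, ht]
    · rw [hχ, sub_zero] at h
      simp [h, ← one_eq_mk, -inv_mk, -mul_mk]
    · simp at h
  | cons z L ih =>
    obtain ⟨⟨hne, h⟩, ht⟩ := h
    rw [zpow_mul_twist_mk_cons]
    set W := g ^ χ (some z) * twist χ g (mk L) with hW
    have hzW : (mk [z] * W).norm ≤ L.length + 1 ∧
        ((mk [z] * W).norm < L.length + 1 ∨ Turns (fun o o' => χ o = χ o') (some z) L) := by
      by_cases hza : z = a
      · subst hza
        exact (ih ht).2 rfl
      · have := (ih ht).1 (by simpa using hza)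
        have h2 := norm_letter_mul_le z W
        exact ⟨by lia, this.2.imp_left fun h => by lia⟩
    have hazW := norm_letter_mul_le a (mk [z] * W)
    simp only [List.length_cons]
    obtain h | ⟨rfl, h⟩ | ⟨h, h'⟩ := h
    · rw [h, sub_self, zpow_zero, one_mul]
      exact ⟨fun _ => ⟨hzW.1, hzW.2.imp_right fun ht => ⟨h, ht⟩⟩,
        fun _ => ⟨by lia, hzW.2.imp (fun _ => by lia) fun ht => ⟨h, ht⟩⟩⟩
    · refine ⟨fun h => absurd rfl h, fun _ => ?_⟩
      rw [h, mul_inv_cancel_left]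
      exact ⟨by lia, Or.inl (by lia)⟩
    · have hza : z = letterInv a := by
        rw [← Option.some_injective _ h, letterInv_letterInv]
      have := (ih ht).1 (by simpa [hza] using letterInv_ne a)
      rw [h', hza, mk_letterInv, mul_inv_cancel_left]
      refine ⟨fun _ => ⟨by lia, Or.inl (by lia)⟩, fun ho => ?_⟩
      rw [h, ho] at hne
      simp at hne

theorem norm_twist_le [DecidableEq X] {χ : Option (X × Bool) → ℤ} {g : FreeGroup X}
    {a : X × Bool} (hχ : χ none = 0) {p : FreeGroup X}
    (h : Turns (IsGoodTurn χ g a) none p.toWord) :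
    (twist χ g p).norm ≤ p.norm ∧
      ((twist χ g p).norm < p.norm ∨ Turns (fun o o' => χ o = χ o') none p.toWord) := by
  simpa [hχ, mk_toWord, norm] using (norm_twist_le_aux hχ h).1 (by simp)

/-- If every turn is compatible with `χ`, then there is a proper retraction fixing the words. -/
theorem exists_retraction_of_turns [DecidableEq X] {χ : Option (X × Bool) → ℤ}
    (hχ : χ none = 0) (hχ01 : ∀ o, χ o = 0 ∨ χ o = 1) (hχ1 : ∃ z, χ (some z) = 1) :
    ∃ ρ : FreeGroup X →* FreeGroup X, (∀ x, ρ (ρ x) = ρ x) ∧ ρ ≠ MonoidHom.id _ ∧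
      ∀ p : FreeGroup X, Turns (fun o o' => χ o = χ o') none p.toWord → ρ p = p := by
  by_cases hsymm : ∀ z, χ (some (letterInv z)) = χ (some z)
  · obtain ⟨z, hz⟩ := hχ1
    let ρ : FreeGroup X →* FreeGroup X :=
      lift fun x => if χ (some (x, true)) = 0 then of x else 1
    have hρx (x : X) : ρ (of x) = if χ (some (x, true)) = 0 then of x else 1 := by simp [ρ]
    have hρ0 (z : X × Bool) (hz : χ (some z) = 0) : ρ (mk [z]) = mk [z] := by
      obtain ⟨x, b⟩ := z
      have h : χ (some (x, true)) = 0 := by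
        cases b
        · rw [← hz]; exact hsymm (x, false)
        · exact hz
      have h1 := hρx x
      rw [if_pos h] at h1
      cases b
      · rw [show (x, false) = letterInv (x, true) from rfl, mk_letterInv, _root_.map_inv]
        exact congrArg _ h1
      · exact h1
    refine ⟨ρ, fun w => ?_, fun hid => ?_, fun p hp => ?_⟩
    · suffices h : ρ.comp ρ = ρ from DFunLike.congr_fun h w
      ext x
      rw [MonoidHom.comp_apply, hρx]
      split_ifs with h
      · rw [hρx, if_pos h]
      · simp
    · have h : χ (some (z.1, true)) ≠ 0 := by
        obtain ⟨x, b⟩ := z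
        have := hsymm (x, false)
        simp only [letterInv, Bool.not_false] at this
        cases b
        · rw [this, hz]; exact one_ne_zero
        · rw [hz]; exact one_ne_zero
      have h1 := hρx z.1
      rw [if_neg h, hid] at h1
      exact of_ne_one _ h1
    · have key : ∀ (L : List (X × Bool)) (o : Option (X × Bool)), χ o = 0 →
          Turns (fun o o' => χ o = χ o') o L → ρ (mk L) = mk L := by
        intro L
        induction L with
        | nil => simp [← one_eq_mk]
        | cons z L ih =>
          intro o ho h
          have hz : χ (some z) = 0 := by rw [← hsymm, ← h.1, ho]
          rw [mk_cons, _root_.map_mul, hρ0 z hz, ih _ hz h.2]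
      simpa [mk_toWord] using key p.toWord none hχ hp
  · obtain ⟨a, ha1, ha0⟩ : ∃ a, χ (some a) = 1 ∧ χ (some (letterInv a)) = 0 := by
      push Not at hsymm
      obtain ⟨z, hz⟩ := hsymm
      rcases hχ01 (some z) with h | h
      · refine ⟨letterInv z, ?_, by simpa using h⟩
        have := hχ01 (some (letterInv z))
        lia
      · refine ⟨z, h, ?_⟩
        have := hχ01 (some (letterInv z))
        lia
    have hkill : twist χ (mk [a])⁻¹ (mk [a]) = 1 := by
      simp [twist_letter, ha1, ha0, -inv_mk, -mul_mk]
    refine ⟨twist χ (mk [a])⁻¹, fun w => ?_, fun hid => ?_, fun p hp => ?_⟩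
    · suffices h : (twist χ (mk [a])⁻¹).comp (twist χ (mk [a])⁻¹) = twist χ (mk [a])⁻¹ from
        DFunLike.congr_fun h w
      ext x
      have h1 := twist_letter χ (mk [a])⁻¹ (x, true)
      simp only [← of.eq_1] at h1
      rw [MonoidHom.comp_apply]
      conv_lhs => rw [h1]
      simp [hkill, -inv_mk, -mul_mk]
    · rw [hid] at hkill
      exact mk_singleton_ne_one a hkill
    · simpa [hχ, mk_toWord] using twist_mk_of_turns (g := (mk [a])⁻¹) hχ hp

/-- Either a proper retraction fixes all words in `P`, or a Whitehead automorphism shortens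
them, if the turns of all words in `P` not involving `z₀` are compatible with the set `Y`. -/
theorem exists_retraction_or_shorten [DecidableEq X] (z₀ : Option (X × Bool))
    (Y : Set (Option (X × Bool))) (hnone : none ∉ Y) (hz₀ : z₀ ∉ Y) (hY : ∃ z, some z ∈ Y)
    (P : List (FreeGroup X))
    (hP : ∀ p ∈ P, Turns (fun o o' => (o = none ∨ o ≠ o') ∧
      ((∀ a, z₀ = some a → o ≠ some a ∧ o' ≠ some a) → (o ∈ Y ↔ o' ∈ Y))) none p.toWord) :
    (∃ ρ : FreeGroup X →* FreeGroup X, (∀ x, ρ (ρ x) = ρ x) ∧ ρ ≠ MonoidHom.id _ ∧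
      ∀ p ∈ P, ρ p = p) ∨
    ∃ φ : FreeGroup X ≃* FreeGroup X, (∀ p ∈ P, (φ p).norm ≤ p.norm) ∧
      ∃ p ∈ P, (φ p).norm < p.norm := by
  classical
  rcases z₀ with _ | a
  · left
    let χ : Option (X × Bool) → ℤ := fun o => if o ∈ Y then 1 else 0
    obtain ⟨ρ, h1, h2, h3⟩ := exists_retraction_of_turns (χ := χ) (by simp [χ, hnone])
      (fun o => by by_cases h : o ∈ Y <;> simp [χ, h]) (hY.imp fun z hz => by simp [χ, hz])
    refine ⟨ρ, h1, h2, fun p hp => h3 p ((hP p hp).mono fun o o' h => ?_)⟩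
    simp [χ, h.2 (by simp)]
  obtain ⟨χ, g, hχ0, hχ01, hχ1, hga, hχa, hgood⟩ : ∃ (χ : Option (X × Bool) → ℤ)
      (g : FreeGroup X), χ none = 0 ∧ (∀ o, χ o = 0 ∨ χ o = 1) ∧ (∃ z, χ (some z) = 1) ∧
      (g = mk [a] ∨ g = (mk [a])⁻¹) ∧ χ (some (letterInv a)) = χ (some a) ∧
      ∀ o o', ((o = none ∨ o ≠ o') ∧
      ((∀ b, some a = some b → o ≠ some b ∧ o' ≠ some b) → (o ∈ Y ↔ o' ∈ Y))) →
      IsGoodTurn χ g a o o' := by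
    by_cases ha : some (letterInv a) ∈ Y
    · refine ⟨fun o => if o ∈ Y ∨ o = some a then 1 else 0, (mk [a])⁻¹, by simp [hnone],
        fun o => by by_cases h : o ∈ Y ∨ o = some a <;> simp [h], hY.imp fun z hz => by simp [hz],
        Or.inr rfl, by simp [ha], ?_⟩
      rintro o o' ⟨hne, h⟩
      refine ⟨hne, ?_⟩
      by_cases ho : o = some a
      · have : o' ≠ some a := by rintro rfl; simp [ho] at hne
        by_cases hoY : o' ∈ Y <;> simp [ho, this, hoY]
      · by_cases ho' : o' = some a
        · by_cases hoY : o ∈ Y <;> simp [ho, ho', hoY]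
        · have h := h (by rintro b ⟨⟩; exact ⟨ho, ho'⟩)
          simp [ho, ho', h]
    · refine ⟨fun o => if o ∈ Y then 1 else 0, mk [a], by simp [hnone],
        fun o => by by_cases h : o ∈ Y <;> simp [h], hY.imp fun z hz => by simp [hz],
        Or.inl rfl, by simp [ha, hz₀], ?_⟩
      rintro o o' ⟨hne, h⟩
      refine ⟨hne, ?_⟩
      by_cases ho : o = some a
      · by_cases hoY : o' ∈ Y <;> simp [ho, hz₀, hoY]
      · by_cases ho' : o' = some a
        · by_cases hoY : o ∈ Y <;> simp [ho, ho', hz₀, hoY]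
        · have h := h (by rintro b ⟨⟩; exact ⟨ho, ho'⟩)
          simp [h]
  have hfix (k : FreeGroup X) (hk : k = mk [a] ∨ k = (mk [a])⁻¹) : twist χ k (mk [a]) = mk [a] := by
    rw [twist_letter, hχa]
    rcases hk with rfl | rfl
    · rw [← zpow_add_one, ← zpow_add]
      simp
    · rw [inv_zpow', inv_zpow', ← zpow_add_one, ← zpow_add]
      simp
  have hg1 : twist χ g⁻¹ g = g := by
    rcases hga with rfl | rfl
    · exact hfix _ (Or.inr rfl)
    · rw [_root_.map_inv, hfix _ (by simp)]
  have hg2 : twist χ g⁻¹⁻¹ g⁻¹ = g⁻¹ := by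
    rw [inv_inv, _root_.map_inv]
    rcases hga with rfl | rfl
    · rw [hfix _ (by simp)]
    · rw [_root_.map_inv, hfix _ (by simp)]
  by_cases hall : ∀ p ∈ P, Turns (fun o o' => χ o = χ o') none p.toWord
  · obtain ⟨ρ, h1, h2, h3⟩ := exists_retraction_of_turns hχ0 hχ01 hχ1
    exact Or.inl ⟨ρ, h1, h2, fun p hp => h3 p (hall p hp)⟩
  · right
    push Not at hall
    obtain ⟨p, hp, hpT⟩ := hall
    refine ⟨{ twist χ g with
      invFun := twist χ g⁻¹
      left_inv := twist_inv_twist hg1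
      right_inv := fun w => by simpa using twist_inv_twist hg2 w }, fun q hq => ?_, p, hp, ?_⟩
    · exact (norm_twist_le hχ0 ((hP q hq).mono hgood)).1
    · exact (norm_twist_le hχ0 ((hP p hp).mono hgood)).2.resolve_right hpT

end Letters

/-- A nonconstant almost invariant function yields a set of letters that is compatible with all
turns of words leaving the function invariant. -/
theorem exists_turns_of_almost_invariant {X : Type*} [Finite X] [DecidableEq X]
    {f : FreeGroup X → ℤ} (hne : ∃ h, f h ≠ f 1) (hfin : ∀ g, {h | f (g * h) ≠ f h}.Finite) :
    ∃ (z₀ : Option (X × Bool)) (Y : Set (Option (X × Bool))), none ∉ Y ∧ z₀ ∉ Y ∧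
      (∃ z, some z ∈ Y) ∧ ∀ p : FreeGroup X, (∀ h, f (p * h) = f h) →
      Turns (fun o o' => (o = none ∨ o ≠ o') ∧
        ((∀ a, z₀ = some a → o ≠ some a ∧ o' ≠ some a) → (o ∈ Y ↔ o' ∈ Y))) none p.toWord := by
  let S : Set ((X × Bool) × FreeGroup X) :=
    {s | IsReduced (s.1 :: s.2.toWord) ∧ f (mk [s.1] * s.2) ≠ f s.2}
  have hSfin : S.Finite := by
    refine (Set.finite_iUnion fun z : X × Bool => (hfin (mk [z])).image (Prod.mk z)).subset ?_
    rintro ⟨z, h⟩ hs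
    exact Set.mem_iUnion.2 ⟨z, h, hs.2, rfl⟩
  have hSne : S.Nonempty := by
    by_contra hS
    rw [Set.not_nonempty_iff_eq_empty, Set.eq_empty_iff_forall_notMem] at hS
    obtain ⟨h, hh⟩ := hne
    have key : ∀ L : List (X × Bool), IsReduced L → f (mk L) = f 1 := by
      intro L
      induction L with
      | nil => simp [← one_eq_mk]
      | cons z L ih =>
        intro hL
        have hL' := (isReduced_cons_iff.1 hL).1
        rw [← ih hL', mk_cons]
        by_contra hcon
        refine hS (z, mk L) ⟨?_, hcon⟩
        rwa [toWord_mk, hL'.reduce_eq]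
    exact hh (by simpa [mk_toWord] using key h.toWord isReduced_toWord)
  obtain ⟨⟨z, u⟩, ⟨hzu, hfz⟩, hmax⟩ := Set.exists_max_image S (fun s => s.2.norm) hSfin hSne
  simp only at hzu hfz hmax
  have hext (z' : X × Bool) (L : List (X × Bool)) (hL : IsReduced (L ++ z' :: u.toWord)) :
      f (mk (L ++ z' :: u.toWord)) = f (mk (z' :: u.toWord)) := by
    induction L with
    | nil => rfl
    | cons y L ih =>
      have hL' : IsReduced (L ++ z' :: u.toWord) := (isReduced_cons_iff.1 hL).1
      rw [← ih hL', List.cons_append, mk_cons]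
      by_contra hcon
      have := hmax (y, mk (L ++ z' :: u.toWord)) ⟨by
        rwa [toWord_mk, hL'.reduce_eq], hcon⟩
      simp [norm, toWord_mk, hL'.reduce_eq] at this
      lia
  have hval (L : List (X × Bool)) (hL : IsReduced L)
      (hLu : ∀ a, u.toWord.head?.map letterInv = some a → L.getLast? ≠ some a) :
      f (mk L * u) = f (mk L.getLast?.toList * u) := by
    rcases List.eq_nil_or_concat L with rfl | ⟨A, y, rfl⟩
    · rfl
    · have hy : u.toWord.head?.map letterInv ≠ some y := fun h => hLu y h (by simp)
      have hyu : IsReduced (y :: u.toWord) := isReduced_cons_iff.2 ⟨isReduced_toWord, hy⟩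
      have hAu : IsReduced (A ++ y :: u.toWord) := by
        rw [List.concat_eq_append, isReduced_append_iff] at hL
        exact isReduced_append_iff.2 ⟨hL.1, hyu, by simpa using hL.2.2⟩
      have := hext y A hAu
      conv_lhs => rw [← mk_toWord (x := u), mul_mk]
      conv_rhs => rw [← mk_toWord (x := u), mul_mk]
      simpa using this
  let z₀ := u.toWord.head?.map letterInv
  refine ⟨z₀, {o | o ≠ z₀ ∧ f (mk o.toList * u) = f (mk [z] * u)}, ?_, by simp, ⟨z, ?_⟩, ?_⟩
  · rintro ⟨-, h⟩
    simp [← one_eq_mk] at h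
    exact hfz h.symm
  · exact ⟨(isReduced_cons_iff.1 hzu).2.symm, rfl⟩
  · intro p hp
    refine turns_of_splits fun A B hAB => ?_
    rw [Option.or_none]
    have hred : IsReduced (A ++ B) := hAB ▸ isReduced_toWord
    rw [isReduced_append_iff] at hred
    refine ⟨hred.2.2, fun hz => ?_⟩
    have h1 := hval A hred.1 fun a ha => (hz a ha).1
    have h2 := hval (invRev B) (isReduced_invRev hred.2.1) fun a ha => by
      rw [getLast?_invRev]; exact (hz a ha).2
    have h3 := hp ((mk B)⁻¹ * u)
    rw [← mk_toWord (x := p), hAB, ← mul_mk, mul_assoc, mul_inv_cancel_left, inv_mk, h1, h2,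
      getLast?_invRev] at h3
    have hz' (o : Option (X × Bool)) (ho : ∀ a, z₀ = some a → o ≠ some a) :
        (o ≠ z₀ ∧ f (mk o.toList * u) = f (mk [z] * u)) ↔ f (mk o.toList * u) = f (mk [z] * u) := by
      refine ⟨fun h => h.2, fun h => ⟨?_, h⟩⟩
      rintro rfl
      cases hzz : z₀ with
      | none =>
        rw [hzz] at h
        simp [← one_eq_mk] at h
        exact hfz h.symm
      | some a => exact ho a hzz hzz
    exact (hz' _ fun a ha => (hz a ha).1).trans
      (by rw [h3]; exact (hz' _ fun a ha => (hz a ha).2).symm)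

/-- Elements leaving a nonconstant almost invariant function invariant are fixed by a proper
retraction. -/
theorem exists_retraction_of_almost_invariant {X : Type*} [Finite X]
    (P : List (FreeGroup X)) (f : FreeGroup X → ℤ) (hne : ∃ h, f h ≠ f 1)
    (hfin : ∀ g, {h | f (g * h) ≠ f h}.Finite) (hP : ∀ p ∈ P, ∀ h, f (p * h) = f h) :
    ∃ ρ : FreeGroup X →* FreeGroup X, (∀ x, ρ (ρ x) = ρ x) ∧ ρ ≠ MonoidHom.id _ ∧
      ∀ p ∈ P, ρ p = p := by
  classical
  induction hN : (P.map norm).sum using Nat.strong_induction_on generalizing P f with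
  | _ N ih =>
    obtain ⟨z₀, Y, h1, h2, h3, h4⟩ := exists_turns_of_almost_invariant hne hfin
    obtain h | ⟨φ, hle, p, hp, hlt⟩ := exists_retraction_or_shorten z₀ Y h1 h2 h3 P
      fun p hp => h4 p (hP p hp)
    · exact h
    obtain ⟨ρ, hρ1, hρ2, hρ3⟩ := ih ((P.map φ).map norm).sum (by
        rw [← hN, List.map_map]
        exact List.sum_lt_sum _ _ hle ⟨p, hp, hlt⟩) (P.map φ) (f ∘ φ.symm)
      (by
        obtain ⟨h, hh⟩ := hne
        exact ⟨φ h, by simpa using hh⟩)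
      (fun g => by
        refine ((hfin (φ.symm g)).image φ).subset fun h hh => ⟨φ.symm h, ?_, by simp⟩
        simpa using hh)
      (by
        intro q hq h
        obtain ⟨p, hp, rfl⟩ := List.mem_map.1 hq
        simp [hP p hp])
      rfl
    refine ⟨φ.symm.toMonoidHom.comp (ρ.comp φ.toMonoidHom), fun x => ?_, fun hid => hρ2 ?_,
      fun p hp => ?_⟩
    · simp [hρ1]
    · ext1 x
      have := DFunLike.congr_fun hid (φ.symm (of x))
      simpa using this
    · simp [hρ3 (φ p) (List.mem_map.2 ⟨p, hp, rfl⟩)]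

end FreeGroup

/-! ### Retracts of free groups of finite rank -/

section Retract

/-- A homomorphism into the image of an injective homomorphism factors through it. -/
theorem MonoidHom.exists_comp_eq_of_range_le {G H K : Type*} [Group G] [Group H] [Group K]
    {j : H →* K} (hj : Function.Injective j) {ρ : G →* K} (h : ρ.range ≤ j.range) :
    ∃ κ : G →* H, ∀ x, j (κ x) = ρ x := by
  refine ⟨(MonoidHom.ofInjective hj).symm.toMonoidHom.comp
    (ρ.codRestrict j.range fun x => h ⟨x, rfl⟩), fun x => ?_⟩
  exact congrArg Subtype.val ((MonoidHom.ofInjective hj).apply_symm_apply ⟨ρ x, h ⟨x, rfl⟩⟩)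

theorem IsRetract.rank_lt {X : Type*} {H L : Subgroup (FreeGroup X)} {k m : ℕ}
    (hL : IsRetract L) (hLH : L < H) (hk : HasFreeRank L k) (hm : HasFreeRank H m) : k < m := by
  obtain ⟨r, hr, hfix⟩ := hL
  refine hm.lt_of_map hk r (le_antisymm ?_ fun x hx => ⟨x, hLH.le hx, hfix x hx⟩) hLH hfix
  rintro _ ⟨x, -, rfl⟩
  exact hr ▸ ⟨x, rfl⟩

theorem IsRetract.exists_hasFreeRank {n : ℕ} {L : Subgroup (FreeGroup (Fin n))}
    (hL : IsRetract L) : ∃ k ≤ n, HasFreeRank L k := by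
  obtain ⟨r, rfl, -⟩ := hL
  obtain ⟨k, hk, h, -⟩ := exists_hasFreeRank_range r
  exact ⟨k, hk, h⟩

/-- Finitely many elements of the equalizer of two homomorphisms which agree and are injective
after composition with some `e` are fixed by a retraction into the equalizer. -/
theorem exists_retraction_into_eqLocus {n : ℕ} {Y Q : Type*} [Group Q]
    (α β : FreeGroup (Fin n) →* FreeGroup Y) (e : FreeGroup Y →* Q)
    (he : e.comp α = e.comp β) (hinj : Function.Injective (e.comp α))
    (P : List (FreeGroup (Fin n))) (hP : ∀ p ∈ P, α p = β p) :
    ∃ ρ : FreeGroup (Fin n) →* FreeGroup (Fin n), (∀ x, ρ (ρ x) = ρ x) ∧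
      (∀ x, α (ρ x) = β (ρ x)) ∧ ∀ p ∈ P, ρ p = p := by
  induction n using Nat.strong_induction_on with
  | _ n ih =>
    by_cases hαβ : α = β
    · exact ⟨MonoidHom.id _, by simp, by simp [hαβ], by simp⟩
    obtain ⟨f, hf1, hf2, hf3⟩ := FreeGroup.exists_almost_invariant e he hinj hαβ
    obtain ⟨σ, hσ1, hσ2, hσ3⟩ := FreeGroup.exists_retraction_of_almost_invariant P f hf1 hf2
      fun p hp h => hf3 p h (hP p hp)
    obtain ⟨m, hm, ⟨j, hj, hjσ⟩, hmn⟩ := exists_hasFreeRank_range σ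
    have hlt : m < n :=
      lt_of_le_of_ne hm fun h => hσ2 (MonoidHom.ext fun x => hmn h (hσ1 x))
    obtain ⟨κ, hκ⟩ := MonoidHom.exists_comp_eq_of_range_le hj hjσ.ge
    have hκj (y : FreeGroup (Fin m)) : κ (j y) = y := by
      obtain ⟨x, hx⟩ : j y ∈ σ.range := hjσ ▸ ⟨y, rfl⟩
      refine hj ?_
      rw [hκ, ← hx, hσ1]
    obtain ⟨ρ, hρ1, hρ2, hρ3⟩ := ih m hlt (α.comp j) (β.comp j)
      (by rw [← MonoidHom.comp_assoc, he, MonoidHom.comp_assoc]) (hinj.comp hj) (P.map κ) (by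
        intro q hq
        obtain ⟨p, hp, rfl⟩ := List.mem_map.1 hq
        simpa [hκ, hσ3 p hp] using hP p hp)
    refine ⟨j.comp (ρ.comp κ), fun x => ?_, fun x => hρ2 _, fun p hp => ?_⟩
    · simp [hκj, hρ1]
    · simp [hρ3 (κ p) (List.mem_map.2 ⟨p, hp, rfl⟩), hκ, hσ3 p hp]

theorem isRetract_eqLocus {n : ℕ} {Y Q : Type*} [Group Q]
    (α β : FreeGroup (Fin n) →* FreeGroup Y) (e : FreeGroup Y →* Q)
    (he : e.comp α = e.comp β) (hinj : Function.Injective (e.comp α)) :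
    IsRetract (α.eqLocus β) := by
  let K : Set ℕ := {k | ∃ L, IsRetract L ∧ L ≤ α.eqLocus β ∧ HasFreeRank L k}
  have hbdd : BddAbove K := by
    refine ⟨n, ?_⟩
    rintro k ⟨L, hL, -, hk⟩
    obtain ⟨k', hk', h⟩ := hL.exists_hasFreeRank
    exact hk.unique h ▸ hk'
  have hbot : IsRetract (⊥ : Subgroup (FreeGroup (Fin n))) := ⟨1, by ext; simp, by simp⟩
  have hne : K.Nonempty := by
    obtain ⟨k, -, hk⟩ := hbot.exists_hasFreeRank
    exact ⟨k, ⊥, hbot, bot_le, hk⟩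
  obtain ⟨L, hL, hLE, hk⟩ := Nat.sSup_mem hne hbdd
  suffices h : α.eqLocus β ≤ L from le_antisymm hLE h ▸ hL
  intro p hp
  by_contra hpL
  obtain ⟨r, hr, hfix⟩ := id hL
  obtain ⟨ρ, hρ1, hρ2, hρ3⟩ := exists_retraction_into_eqLocus α β e he hinj
    (p :: (List.finRange n).map fun i => r (FreeGroup.of i)) (by
      intro q hq
      rcases List.mem_cons.1 hq with rfl | hq
      · exact hp
      · obtain ⟨i, -, rfl⟩ := List.mem_map.1 hq
        exact hLE (hr ▸ ⟨_, rfl⟩))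
  have hρr : ρ.comp r = r := by
    ext1 i
    exact hρ3 _ (List.mem_cons_of_mem _ (List.mem_map.2 ⟨i, List.mem_finRange i, rfl⟩))
  have hρ : IsRetract ρ.range := ⟨ρ, rfl, by rintro _ ⟨x, rfl⟩; exact hρ1 x⟩
  have hlt : L < ρ.range := by
    refine lt_of_le_of_ne ?_ fun h => hpL (h ▸ ⟨p, hρ3 p (by simp)⟩)
    rw [← hr]
    rintro _ ⟨x, rfl⟩
    exact ⟨r x, DFunLike.congr_fun hρr x⟩
  obtain ⟨m, -, hm⟩ := hρ.exists_hasFreeRank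
  refine (hL.rank_lt hlt hk hm).not_ge (le_csSup hbdd ⟨ρ.range, hρ, ?_, hm⟩)
  rintro _ ⟨x, rfl⟩
  exact hρ2 x

/-- Some power of an endomorphism of a free group of finite rank has an image on which the
endomorphism is injective. -/
theorem exists_pow_injOn_range {n : ℕ} (φ : FreeGroup (Fin n) →* FreeGroup (Fin n)) :
    ∃ ψ : FreeGroup (Fin n) →* FreeGroup (Fin n), ψ.range ≤ φ.range ∧ Set.InjOn φ ψ.range ∧
      ∀ x, φ x = x → ψ x = x := by
  let p : ℕ → FreeGroup (Fin n) →* FreeGroup (Fin n) := fun N => N.rec φ fun _ ψ => φ.comp ψ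
  have hp (N : ℕ) : p (N + 1) = φ.comp (p N) := rfl
  choose k hkn hk _ using fun N => exists_hasFreeRank_range (p N)
  obtain ⟨N, hN⟩ : ∃ N, ∀ M, k N ≤ k M :=
    ⟨Function.argmin k, fun M => Function.argmin_le k M⟩
  refine ⟨p N, ?_, ?_, fun x hx => ?_⟩
  · cases N with
    | zero => exact le_rfl
    | succ N => rintro _ ⟨x, rfl⟩; exact ⟨_, rfl⟩
  · obtain ⟨k', hk', h1, h2⟩ := (hk N).map φ
    rw [← MonoidHom.range_comp, ← hp] at h1
    exact h2 (le_antisymm hk' ((hN (N + 1)).trans_eq ((hk (N + 1)).unique h1)))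
  · clear hN
    induction N with
    | zero => exact hx
    | succ N ih => rw [hp, MonoidHom.comp_apply, ih, hx]

theorem IsRetract.inf {n : ℕ} {R S : Subgroup (FreeGroup (Fin n))} (hR : IsRetract R)
    (hS : IsRetract S) : IsRetract (R ⊓ S) := by
  obtain ⟨r, rfl, hr⟩ := hR
  obtain ⟨s, rfl, hs⟩ := hS
  obtain ⟨ψ, hψ1, hψ2, hψ3⟩ := exists_pow_injOn_range (r.comp s)
  obtain ⟨k, -, ⟨j, hj, hjψ⟩, -⟩ := exists_hasFreeRank_range ψ
  obtain ⟨κ, hκ⟩ := MonoidHom.exists_comp_eq_of_range_le hj hjψ.ge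
  have hj_mem (y : FreeGroup (Fin k)) : j y ∈ ψ.range := hjψ ▸ ⟨y, rfl⟩
  obtain ⟨ρ, hρ, hρfix⟩ := isRetract_eqLocus j (s.comp j) (r.comp s)
    (by ext1 i; simp [hs (s (j (FreeGroup.of i))) ⟨_, rfl⟩])
    fun x y hxy => hj (hψ2 (hj_mem x) (hj_mem y) hxy)
  have hfix (x : FreeGroup (Fin n)) (hx : x ∈ r.range ⊓ s.range) : j (ρ (κ x)) = x := by
    have h1 : j (κ x) = x := by
      rw [hκ]
      exact hψ3 x (by rw [MonoidHom.comp_apply, hs x hx.2, hr x hx.1])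
    have h2 : j (κ x) = s (j (κ x)) := by rw [h1, hs x hx.2]
    rw [hρfix _ h2, h1]
  refine ⟨j.comp (ρ.comp κ), le_antisymm ?_ fun x hx => ⟨x, hfix x hx⟩, hfix⟩
  rintro _ ⟨x, rfl⟩
  have hmem : ρ (κ x) ∈ j.eqLocus (s.comp j) := hρ ▸ ⟨_, rfl⟩
  have heq : j (ρ (κ x)) = s (j (ρ (κ x))) := hmem
  refine ⟨?_, ?_⟩
  · obtain ⟨y, hy⟩ := hψ1 (hj_mem (ρ (κ x)))
    exact ⟨s y, hy⟩
  · exact ⟨_, heq.symm⟩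

end Retract

theorem retract_iInf {n : ℕ} (hn : 2 ≤ n) {ι : Type*}
    (R : ι → Subgroup (FreeGroup (Fin n))) (hR : ∀ i, IsRetract (R i)) :
    IsRetract (⨅ i, R i) := by
  let K : Set ℕ := {k | ∃ L, IsRetract L ∧ ⨅ i, R i ≤ L ∧ HasFreeRank L k}
  have htop : IsRetract (⊤ : Subgroup (FreeGroup (Fin n))) :=
    ⟨MonoidHom.id _, MonoidHom.range_eq_top.2 Function.surjective_id, by simp⟩
  have hne : K.Nonempty := by
    obtain ⟨k, -, hk⟩ := htop.exists_hasFreeRank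
    exact ⟨k, ⊤, htop, le_top, hk⟩
  obtain ⟨L, hL, hRL, hk⟩ := Nat.sInf_mem hne
  suffices h : L ≤ ⨅ i, R i from le_antisymm hRL h ▸ hL
  refine le_iInf fun i => ?_
  by_contra hLi
  have hinf := hL.inf (hR i)
  obtain ⟨m, -, hm⟩ := hinf.exists_hasFreeRank
  exact (hinf.rank_lt (inf_lt_left.2 hLi) hm hk).not_ge
    (Nat.sInf_le ⟨_, hinf, le_inf hRL (iInf_le _ i), hm⟩)
end

section
/- If H is a rank-two subgroup of a free group F_n of finite rank n ≥ 2 and R is a retract of F_n, then H ∩ R is a retract of H. -/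
open commutatorElement

universe u

/-- A normal subgroup of finite index whose quotient is a `p`-group. -/
structure IsPOpen (p : ℕ) {G : Type*} [Group G] (M : Subgroup G) : Prop where
  normal : M.Normal
  finiteIndex : M.FiniteIndex
  pow_mem : ∀ x : G, ∃ k : ℕ, x ^ p ^ k ∈ M

namespace IsPOpen

variable {p : ℕ} {G G' : Type*} [Group G] [Group G'] {M N : Subgroup G}

theorem top : IsPOpen p (⊤ : Subgroup G) :=
  ⟨inferInstance, inferInstance, fun _ => ⟨0, trivial⟩⟩

theorem inf (hM : IsPOpen p M) (hN : IsPOpen p N) : IsPOpen p (M ⊓ N) := by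
  have := hM.normal
  have := hN.normal
  have := hM.finiteIndex
  have := hN.finiteIndex
  refine ⟨inferInstance, inferInstance, fun x => ?_⟩
  obtain ⟨k, hk⟩ := hM.pow_mem x
  obtain ⟨l, hl⟩ := hN.pow_mem x
  refine ⟨k + l, ?_, ?_⟩
  · rw [pow_add, pow_mul]
    exact M.pow_mem hk _
  · rw [add_comm, pow_add, pow_mul]
    exact N.pow_mem hl _

theorem ker {Q : Type*} [Group Q] [Finite Q] (hQ : IsPGroup p Q) (f : G →* Q) :
    IsPOpen p f.ker := by
  refine ⟨inferInstance, inferInstance, fun x => ?_⟩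
  obtain ⟨k, hk⟩ := isPGroup_iff_pow_pow_eq_one.1 hQ (f x)
  exact ⟨k, by rw [MonoidHom.mem_ker, map_pow, hk]⟩

theorem finite_quotient (hM : IsPOpen p M) : Finite (G ⧸ M) :=
  have := hM.finiteIndex
  inferInstance

theorem isPGroup_quotient (hM : IsPOpen p M) [M.Normal] : IsPGroup p (G ⧸ M) := by
  rw [isPGroup_iff_pow_pow_eq_one]
  intro g
  obtain ⟨x, rfl⟩ := QuotientGroup.mk_surjective g
  obtain ⟨k, hk⟩ := hM.pow_mem x
  exact ⟨k, by rwa [← QuotientGroup.mk_pow, QuotientGroup.eq_one_iff]⟩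

theorem comap {M : Subgroup G'} (hM : IsPOpen p M) (f : G →* G') : IsPOpen p (M.comap f) := by
  have := hM.normal
  have := hM.finite_quotient
  have h := ker hM.isPGroup_quotient ((QuotientGroup.mk' M).comp f)
  rwa [← MonoidHom.comap_ker, QuotientGroup.ker_mk'] at h

/-- A homomorphism to a finite `p`-group from a subgroup containing a `p`-open normal subgroup
kills some smaller `p`-open normal subgroup. -/
theorem exists_le_forall_eq_one (hM : IsPOpen p M) {U : Subgroup G} (hMU : M ≤ U)
    {Q : Type*} [Group Q] [Finite Q] (hQ : IsPGroup p Q) (g : U →* Q) :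
    ∃ N : Subgroup G, IsPOpen p N ∧ N ≤ M ∧ ∀ u : U, (u : G) ∈ N → g u = 1 := by
  have := hM.normal
  have := hM.finiteIndex
  have : U.FiniteIndex := Subgroup.finiteIndex_of_le hMU
  have : (g.ker.map U.subtype).FiniteIndex := by
    refine ⟨?_⟩
    rw [Subgroup.index_map_subtype]
    exact mul_ne_zero Subgroup.FiniteIndex.index_ne_zero Subgroup.FiniteIndex.index_ne_zero
  set K : Subgroup G := g.ker.map U.subtype ⊓ M with hK
  have : K.FiniteIndex := inferInstance
  refine ⟨K.normalCore, ⟨inferInstance, inferInstance, fun x => ?_⟩,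
    K.normalCore_le.trans inf_le_right, ?_⟩
  · obtain ⟨b, hb⟩ := (isPGroup_iff_exists_pow_pow_eq_one).1 hQ
    obtain ⟨a, ha⟩ := hM.pow_mem x
    refine ⟨a + b, fun t => ?_⟩
    have h1 : t * x ^ p ^ a * t⁻¹ ∈ M := hM.normal.conj_mem _ ha t
    have h2 : t * x ^ p ^ (a + b) * t⁻¹ = (t * x ^ p ^ a * t⁻¹) ^ p ^ b := by
      rw [conj_pow, pow_add, pow_mul]
    rw [h2]
    refine ⟨⟨⟨_, hMU h1⟩ ^ p ^ b, ?_, rfl⟩, M.pow_mem h1 _⟩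
    change g _ = 1
    rw [map_pow, hb]
  · intro u hu
    obtain ⟨⟨v, hv, hvu⟩, -⟩ := K.normalCore_le hu
    obtain rfl : v = u := Subtype.ext hvu
    exact hv

theorem exists_forall_notMem {K : Subgroup G}
    (hK : ∀ x ∉ K, ∃ M : Subgroup G, IsPOpen p M ∧ x ∉ M) (S : Finset G) (hS : ∀ s ∈ S, s ∉ K) :
    ∃ M : Subgroup G, IsPOpen p M ∧ ∀ s ∈ S, s ∉ M := by
  classical
  induction S using Finset.induction_on with
  | empty => exact ⟨⊤, top, by simp⟩
  | insert a S _ ih =>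
    obtain ⟨M, hM, hMS⟩ := ih fun s hs => hS s (Finset.mem_insert_of_mem hs)
    obtain ⟨N, hN, haN⟩ := hK a (hS a (Finset.mem_insert_self _ _))
    refine ⟨M ⊓ N, hM.inf hN, fun s hs h => ?_⟩
    rcases Finset.mem_insert.1 hs with rfl | hs
    · exact haN h.2
    · exact hMS s hs h.1

end IsPOpen

section PGroup

variable {p : ℕ} [Fact p.Prime]

theorem isPGroup_multiplicative_zmod : IsPGroup p (Multiplicative (ZMod p)) :=
  IsPGroup.of_card (n := 1) (by simp)

/-- A proper subgroup of a finite `p`-group is killed by a nontrivial character of order `p`. -/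
theorem IsPGroup.exists_hom_ne_one {W : Type*} [Group W] [Finite W] (hW : IsPGroup p W)
    {B : Subgroup W} (hB : B ≠ ⊤) :
    ∃ μ : W →* Multiplicative (ZMod p), μ ≠ 1 ∧ ∀ b ∈ B, μ b = 1 := by
  obtain ⟨L, hL, hBL⟩ := (eq_top_or_exists_le_coatom B).resolve_left hB
  have : Group.IsNilpotent W := hW.isNilpotent
  have hLn : L.Normal := Subgroup.NormalizerCondition.normal_of_coatom L
    Group.normalizerCondition_of_isNilpotent hL
  have hQ : IsPGroup p (W ⧸ L) := hW.to_quotient L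
  have hnt : Nontrivial (W ⧸ L) := by
    rw [← not_subsingleton_iff_nontrivial, QuotientGroup.subsingleton_iff]
    exact hL.1
  have hdvd : p ∣ Nat.card (W ⧸ L) := hQ.card_eq_or_dvd.resolve_left Finite.one_lt_card.ne'
  obtain ⟨z, hz⟩ := exists_prime_orderOf_dvd_card' p hdvd
  have hcomap : (Subgroup.zpowers z).comap (QuotientGroup.mk' L) = ⊤ := by
    refine hL.2 _ (lt_of_le_of_ne ?_ ?_)
    · intro x hx
      rw [Subgroup.mem_comap, QuotientGroup.mk'_apply, (QuotientGroup.eq_one_iff x).2 hx]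
      exact one_mem _
    · intro h
      obtain ⟨y, rfl⟩ := QuotientGroup.mk_surjective z
      have : y ∈ L := by
        rw [h, Subgroup.mem_comap]
        exact Subgroup.mem_zpowers _
      rw [(QuotientGroup.eq_one_iff y).2 this, orderOf_one] at hz
      exact (Fact.out : p.Prime).one_lt.ne hz
  have htop : Subgroup.zpowers z = ⊤ := by
    rw [eq_top_iff]
    intro y _
    obtain ⟨x, rfl⟩ := QuotientGroup.mk_surjective y
    have : x ∈ (Subgroup.zpowers z).comap (QuotientGroup.mk' L) := hcomap ▸ trivial
    exact this
  have hcard : Nat.card (W ⧸ L) = p := by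
    rw [← hz, ← Nat.card_zpowers, htop, Subgroup.card_top]
  let e : W ⧸ L ≃* Multiplicative (ZMod p) :=
    mulEquivOfPrimeCardEq (p := p) hcard (by simp)
  refine ⟨e.toMonoidHom.comp (QuotientGroup.mk' L), fun h => ?_, fun b hb => ?_⟩
  · obtain ⟨y, rfl⟩ := QuotientGroup.mk_surjective z
    have h1 : e (y : W ⧸ L) = 1 := DFunLike.congr_fun h y
    rw [map_eq_one_iff e e.injective] at h1
    rw [h1, orderOf_one] at hz
    exact (Fact.out : p.Prime).one_lt.ne hz
  · have : (b : W ⧸ L) = 1 := (QuotientGroup.eq_one_iff b).2 (hBL hb)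
    simp [this]

/-- A noncyclic finite `p`-group has two independent characters of order `p`. -/
theorem IsPGroup.exists_independent_homs {W : Type*} [Group W] [Finite W] (hW : IsPGroup p W)
    (key : ∀ w : W, Subgroup.zpowers w ≠ ⊤) :
    ∃ (μ₁ μ₂ : W →* Multiplicative (ZMod p)) (w₁ w₂ : W),
      μ₁ w₁ ≠ 1 ∧ μ₂ w₁ = 1 ∧ μ₂ w₂ ≠ 1 := by
  obtain ⟨μ₁, h₁, -⟩ := hW.exists_hom_ne_one (key 1)
  obtain ⟨w₁, hw₁⟩ := DFunLike.exists_ne h₁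
  obtain ⟨μ₂, h₂, h₂'⟩ := hW.exists_hom_ne_one (key w₁)
  obtain ⟨w₂, hw₂⟩ := DFunLike.exists_ne h₂
  exact ⟨μ₁, μ₂, w₁, w₂, hw₁, h₂' _ (Subgroup.mem_zpowers w₁), hw₂⟩

/-- Two independent characters of order `p` of a free group of rank two span all of them. -/
theorem FreeGroup.exists_eq_zpow_mul_zpow (χ₁ χ₂ : FreeGroup (Fin 2) →* Multiplicative (ZMod p))
    {y₁ y₂ : FreeGroup (Fin 2)} (h₁ : χ₁ y₁ ≠ 1) (h₂ : χ₂ y₁ = 1) (h₃ : χ₂ y₂ ≠ 1)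
    (l : FreeGroup (Fin 2) →* Multiplicative (ZMod p)) :
    ∃ s t : ℕ, l = χ₁ ^ s * χ₂ ^ t := by
  have cast_pow : ∀ (z : ZMod p) (u : Multiplicative (ZMod p)),
      (u ^ z.val).toAdd = z * u.toAdd := by
    intro z u
    rw [toAdd_pow, nsmul_eq_mul, ZMod.natCast_zmod_val]
  have vanish : ∀ s t : ZMod p,
      (∀ i, s * (χ₁ (FreeGroup.of i)).toAdd + t * (χ₂ (FreeGroup.of i)).toAdd = 0) →
      s = 0 ∧ t = 0 := by
    intro s t h
    have h0 : χ₁ ^ s.val * χ₂ ^ t.val = 1 := by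
      refine FreeGroup.ext_hom _ _ fun i => Multiplicative.toAdd.injective ?_
      simpa [cast_pow] using h i
    have hs : s = 0 := by
      have := congrArg Multiplicative.toAdd (DFunLike.congr_fun h0 y₁)
      simp only [MonoidHom.mul_apply, MonoidHom.pow_apply, toAdd_mul, cast_pow, h₂,
        MonoidHom.one_apply, toAdd_one, mul_zero, add_zero, mul_eq_zero] at this
      exact this.resolve_right h₁
    have := congrArg Multiplicative.toAdd (DFunLike.congr_fun h0 y₂)
    simp only [MonoidHom.mul_apply, MonoidHom.pow_apply, toAdd_mul, cast_pow, hs, zero_mul,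
        MonoidHom.one_apply, toAdd_one, zero_add, mul_eq_zero] at this
    exact ⟨hs, this.resolve_right h₃⟩
  set a₁ := (χ₁ (FreeGroup.of 0)).toAdd with ha₁
  set b₁ := (χ₁ (FreeGroup.of 1)).toAdd with hb₁
  set a₂ := (χ₂ (FreeGroup.of 0)).toAdd with ha₂
  set b₂ := (χ₂ (FreeGroup.of 1)).toAdd with hb₂
  have hdet : a₁ * b₂ - b₁ * a₂ ≠ 0 := by
    intro hdet
    have hb := vanish b₂ (-b₁) (by
      rw [Fin.forall_fin_two, ← ha₁, ← hb₁, ← ha₂, ← hb₂]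
      exact ⟨by linear_combination hdet, by ring⟩)
    have ha := vanish a₂ (-a₁) (by
      rw [Fin.forall_fin_two, ← ha₁, ← hb₁, ← ha₂, ← hb₂]
      exact ⟨by ring, by linear_combination -hdet⟩)
    have := vanish 1 0 (by
      rw [Fin.forall_fin_two, ← ha₁, ← hb₁, ← ha₂, ← hb₂]
      exact ⟨by linear_combination -ha.2, by linear_combination -hb.2⟩)
    exact one_ne_zero this.1
  set u := (l (FreeGroup.of 0)).toAdd with hu
  set v := (l (FreeGroup.of 1)).toAdd with hv
  refine ⟨((u * b₂ - v * a₂) / (a₁ * b₂ - b₁ * a₂)).val,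
    ((v * a₁ - u * b₁) / (a₁ * b₂ - b₁ * a₂)).val, ?_⟩
  refine FreeGroup.ext_hom _ _ fun i => Multiplicative.toAdd.injective ?_
  simp only [MonoidHom.mul_apply, MonoidHom.pow_apply, toAdd_mul, cast_pow]
  revert i
  rw [Fin.forall_fin_two, ← ha₁, ← hb₁, ← ha₂, ← hb₂, ← hu, ← hv]
  have hd := mul_inv_cancel₀ hdet
  simp only [div_eq_mul_inv]
  exact ⟨by linear_combination (-u) * hd, by linear_combination (-v) * hd⟩

end PGroup

open MonoidAlgebra in
/-- The pairing of an element of a group algebra with a function on the group. -/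
noncomputable def MonoidAlgebra.pairing {k G : Type*} [CommRing k] (h : G → k) :
    MonoidAlgebra k G →+ k :=
  (Finsupp.liftAddHom fun y => AddMonoidHom.mulRight (h y)).comp
    coeffAddEquiv.toAddMonoidHom

namespace MonoidAlgebra

variable {k G G' : Type*} [CommRing k]

theorem pairing_single (h : G → k) (g : G) (a : k) : pairing h (single g a) = a * h g := by
  simp [pairing]

theorem pairing_eq_sum (h : G → k) (f : MonoidAlgebra k G) :
    pairing h f = ∑ y ∈ f.coeff.support, f.coeff y * h y := by
  simp [pairing, Finsupp.sum]

theorem pairing_congr {h h' : G → k} {f : MonoidAlgebra k G}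
    (H : ∀ y ∈ f.coeff.support, h y = h' y) : pairing h f = pairing h' f := by
  rw [pairing_eq_sum, pairing_eq_sum]
  exact Finset.sum_congr rfl fun y hy => by rw [H y hy]

theorem pairing_sum {ι : Type*} (I : Finset ι) (h : ι → G → k) (f : MonoidAlgebra k G) :
    pairing (fun y => ∑ i ∈ I, h i y) f = ∑ i ∈ I, pairing (h i) f := by
  simp only [pairing_eq_sum, Finset.mul_sum]
  exact Finset.sum_comm

theorem pairing_sub (h h' : G → k) (f : MonoidAlgebra k G) :
    pairing (h - h') f = pairing h f - pairing h' f := by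
  simp [pairing_eq_sum, mul_sub, Finset.sum_sub_distrib]

theorem pairing_mapDomain (h : G' → k) (q : G → G') (f : MonoidAlgebra k G) :
    pairing h (mapDomain q f) = pairing (h ∘ q) f := by
  induction f using MonoidAlgebra.induction_linear with
  | zero => simp
  | add f g hf hg => rw [mapDomain_add, map_add, map_add, hf, hg]
  | single g a => rw [mapDomain_single, pairing_single, pairing_single, Function.comp_apply]

variable [Group G] [Group G']

theorem pairing_mul_single (h : G → k) (f : MonoidAlgebra k G) (g : G) :
    pairing h (f * single g 1) = pairing (fun y => h (y * g)) f := by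
  induction f using MonoidAlgebra.induction_linear with
  | zero => simp
  | add f g hf hg => rw [add_mul, map_add, map_add, hf, hg]
  | single g a => rw [single_mul_single, pairing_single, pairing_single, mul_one]

theorem pairing_single_mul (h : G → k) (f : MonoidAlgebra k G) (g : G) :
    pairing h (single g 1 * f) = pairing (fun y => h (g * y)) f := by
  induction f using MonoidAlgebra.induction_linear with
  | zero => simp
  | add f g hf hg => rw [mul_add, map_add, map_add, hf, hg]
  | single g a => rw [single_mul_single, pairing_single, pairing_single, one_mul]

end MonoidAlgebra

/-- A choice of representatives for the right cosets of a subgroup. -/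
theorem Subgroup.exists_rightCoset_representative {G : Type*} [Group G] (C : Subgroup G) :
    ∃ rep : G → G, (∀ c ∈ C, ∀ y, rep (c * y) = rep y) ∧ ∀ y, y * (rep y)⁻¹ ∈ C := by
  refine ⟨fun y => (Quotient.mk (QuotientGroup.rightRel C) y).out, fun c hc y => ?_, fun y => ?_⟩
  · refine congrArg Quotient.out (Quotient.sound (QuotientGroup.rightRel_apply.2 ?_))
    simpa using C.inv_mem hc
  · exact QuotientGroup.rightRel_apply.1
      (Quotient.exact (Quotient.out_eq (Quotient.mk (QuotientGroup.rightRel C) y)))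

open MonoidAlgebra in
/-- If `c - 1` lies in the left ideal generated by elements `g - 1`, with coefficients all of whose
sums over right cosets of `C` vanish, then every character of `C` kills `c`. -/
theorem MonoidAlgebra.toAdd_hom_eq_zero {k G X : Type*} [CommRing k] [Group G] [Fintype X]
    {C : Subgroup G} (χ : C →* Multiplicative k) (c : C) (D : X → MonoidAlgebra k G) (g : X → G)
    (hD : ∑ x, D x * (single (g x) 1 - 1) = single (c : G) 1 - 1)
    (h0 : ∀ x, ∀ h : G → k, (∀ γ ∈ C, ∀ y, h (γ * y) = h y) → pairing h (D x) = 0) :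
    χ c = 1 := by
  obtain ⟨rep, hrep, hmem⟩ := C.exists_rightCoset_representative
  let τ : G → k := fun y => (χ ⟨y * (rep y)⁻¹, hmem y⟩).toAdd
  have hτ : ∀ (γ : C) (y : G), τ (γ * y) = (χ γ).toAdd + τ y := by
    intro γ y
    simp only [τ]
    rw [← toAdd_mul, ← map_mul]
    congr 2
    ext
    simp [hrep _ γ.2, mul_assoc]
  have h1 := congrArg (pairing τ) hD
  rw [map_sum, Finset.sum_eq_zero] at h1
  · have h2 := hτ c 1
    rw [map_sub, one_def, pairing_single, pairing_single, one_mul, one_mul] at h1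
    rw [mul_one] at h2
    rw [h2, add_sub_cancel_right] at h1
    exact Multiplicative.toAdd.injective h1.symm
  · intro x _
    rw [mul_sub, mul_one, map_sub, pairing_mul_single, ← pairing_sub]
    refine h0 x _ fun γ hγ y => ?_
    have h3 := hτ ⟨γ, hγ⟩ (y * g x)
    have h4 := hτ ⟨γ, hγ⟩ y
    simp only [Pi.sub_apply, mul_assoc] at h3 h4 ⊢
    rw [h3, h4]
    abel

/-- The action by left multiplication of a group on a ring to which it maps. -/
def MonoidHom.leftMulAut {G S : Type*} [Group G] [Ring S] (u : G →* S) :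
    G →* MulAut (Multiplicative S) where
  toFun g :=
    { toFun := fun m => .ofAdd (u g * m.toAdd)
      invFun := fun m => .ofAdd (u g⁻¹ * m.toAdd)
      left_inv := fun m => by simp [← mul_assoc, ← map_mul]
      right_inv := fun m => by simp [← mul_assoc, ← map_mul]
      map_mul' := fun m n => by simp [mul_add] }
  map_one' := by ext; simp
  map_mul' g h := by ext; simp [mul_assoc]

namespace FreeGroup

variable {X : Type*}

open MonoidAlgebra

theorem exists_derivation {S : Type*} [Ring S] (u : FreeGroup X →* S) (v : X → S) :
    ∃ D : FreeGroup X → S, (∀ g h, D (g * h) = D g + u g * D h) ∧ ∀ x, D (of x) = v x := by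
  let Φ : FreeGroup X →* Multiplicative S ⋊[u.leftMulAut] FreeGroup X :=
    lift fun x => ⟨.ofAdd (v x), of x⟩
  have hr : SemidirectProduct.rightHom.comp Φ = MonoidHom.id _ := by
    ext x
    simp [Φ]
  have hr' : ∀ g, (Φ g).right = g := fun g => DFunLike.congr_fun hr g
  refine ⟨fun g => (Φ g).left.toAdd, fun g h => ?_, fun x => ?_⟩
  · simp only [_root_.map_mul, SemidirectProduct.mul_left, toAdd_mul, hr']
    rfl
  · simp [Φ]

theorem derivation_ext {S : Type*} [Ring S] {u : FreeGroup X →* S} {D D' : FreeGroup X → S}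
    (hD : ∀ g h, D (g * h) = D g + u g * D h) (hD' : ∀ g h, D' (g * h) = D' g + u g * D' h)
    (h : ∀ x, D (of x) = D' (of x)) (g : FreeGroup X) : D g = D' g := by
  have one : ∀ {D : FreeGroup X → S}, (∀ g h, D (g * h) = D g + u g * D h) → D 1 = 0 := by
    intro D hD
    simpa using hD 1 1
  have inv : ∀ {D : FreeGroup X → S}, (∀ g h, D (g * h) = D g + u g * D h) →
      ∀ g, D g⁻¹ = - (u g⁻¹ * D g) := by
    intro D hD g
    have := hD g⁻¹ g
    rw [inv_mul_cancel, one hD] at this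
    exact eq_neg_of_add_eq_zero_left this.symm
  induction g using FreeGroup.induction_on with
  | C1 => rw [one hD, one hD']
  | of x => exact h x
  | inv_of x ih => rw [inv hD, inv hD', h]
  | mul a b ha hb => rw [hD, hD', ha, hb]

/-- The Fox derivatives. -/
theorem exists_fox_derivative (k X : Type*) [CommRing k] [Fintype X] :
    ∃ D : X → FreeGroup X → MonoidAlgebra k (FreeGroup X),
      (∀ x g h, D x (g * h) = D x g + single g 1 * D x h) ∧
      ∀ g, ∑ x, D x g * (single (of x) 1 - 1) = single g 1 - 1 := by
  classical
  choose D hD hD' using fun x : X => exists_derivation (MonoidAlgebra.of k (FreeGroup X))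
    (fun y => if y = x then 1 else 0)
  refine ⟨D, hD, ?_⟩
  refine derivation_ext (u := MonoidAlgebra.of k (FreeGroup X)) (fun g h => ?_) (fun g h => ?_)
    fun x => ?_
  · simp only [hD, add_mul, Finset.sum_add_distrib, Finset.mul_sum, mul_assoc]
  · rw [MonoidAlgebra.of_apply, mul_sub, single_mul_single, one_mul, mul_one]
    abel
  · simp [hD']

/-- The homomorphism to an affine group obtained by pushing a Fox derivative to a quotient. -/
noncomputable def foxHom {k G : Type*} [CommRing k] [Group G]
    {D : FreeGroup X → MonoidAlgebra k (FreeGroup X)}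
    (hD : ∀ g h, D (g * h) = D g + single g 1 * D h) (q : FreeGroup X →* G) :
    FreeGroup X →* Multiplicative (MonoidAlgebra k G) ⋊[(MonoidAlgebra.of k G).leftMulAut] G :=
  MonoidHom.mk' (fun g => ⟨.ofAdd (mapDomain q (D g)), q g⟩) fun g h => by
    ext
    · rw [SemidirectProduct.mul_left, hD, mapDomain_add, mapDomain_mul, mapDomain_single]
      rfl
    · rw [SemidirectProduct.mul_right, _root_.map_mul]

end FreeGroup

theorem SemidirectProduct.isPGroup {p : ℕ} {N G : Type*} [Group N] [Group G] {φ : G →* MulAut N}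
    (hN : IsPGroup p N) (hG : IsPGroup p G) : IsPGroup p (N ⋊[φ] G) := by
  rw [isPGroup_iff_pow_pow_eq_one] at hN hG ⊢
  intro x
  obtain ⟨a, ha⟩ := hG x.right
  have h1 : (x ^ p ^ a) ∈ (SemidirectProduct.inl (φ := φ)).range := by
    rw [SemidirectProduct.range_inl_eq_ker_rightHom, MonoidHom.mem_ker, map_pow]
    exact ha
  obtain ⟨n, hn⟩ := h1
  obtain ⟨b, hb⟩ := hN n
  exact ⟨a + b, by rw [pow_add, pow_mul, ← hn, ← map_pow, hb, map_one]⟩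

instance SemidirectProduct.finite {N G : Type*} [Group N] [Group G] {φ : G →* MulAut N}
    [Finite N] [Finite G] : Finite (N ⋊[φ] G) :=
  Finite.of_equiv _ SemidirectProduct.equivProd.symm

theorem MonoidAlgebra.finite (k G : Type*) [CommRing k] [Finite k] [Finite G] :
    Finite (MonoidAlgebra k G) :=
  Finite.of_equiv _ (coeffEquiv.trans Finsupp.equivFunOnFinite).symm

theorem MonoidAlgebra.isPGroup_multiplicative (p : ℕ) (G : Type*) [Group G] :
    IsPGroup p (Multiplicative (MonoidAlgebra (ZMod p) G)) := by
  rw [isPGroup_iff_pow_pow_eq_one]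
  refine fun g => ⟨1, Multiplicative.toAdd.injective ?_⟩
  have : (p : ZMod p) • g.toAdd = 0 := by simp
  rw [toAdd_pow, pow_one, toAdd_one, ← this, Nat.cast_smul_eq_nsmul]

section

open MonoidAlgebra

variable {p : ℕ} [Fact p.Prime]

theorem IsFreeGroup.exists_hom_ne_one (p : ℕ) [Fact p.Prime] (K : Type*) [Group K] [IsFreeGroup K]
    [Nontrivial K] : ∃ (χ : K →* Multiplicative (ZMod p)) (c : K), χ c ≠ 1 := by
  have : Nonempty (IsFreeGroup.Generators K) := by
    by_contra hE
    rw [not_nonempty_iff] at hE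
    obtain ⟨w, hw⟩ := exists_ne (1 : K)
    have h : MonoidHom.id K = 1 := IsFreeGroup.ext_hom fun a => hE.elim a
    exact hw (DFunLike.congr_fun h w)
  obtain ⟨b⟩ := this
  refine ⟨IsFreeGroup.lift fun _ => .ofAdd 1, IsFreeGroup.of b, ?_⟩
  rw [IsFreeGroup.lift_of]
  exact fun h => one_ne_zero (Multiplicative.ofAdd.injective h)

theorem isPGroup_fox {G : Type*} [Group G] (hG : IsPGroup p G) :
    IsPGroup p (Multiplicative (MonoidAlgebra (ZMod p) G)
      ⋊[(MonoidAlgebra.of (ZMod p) G).leftMulAut] G) :=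
  SemidirectProduct.isPGroup (MonoidAlgebra.isPGroup_multiplicative p G) hG

/-- Free groups are residually finite-`p`. -/
theorem FreeGroup.exists_isPOpen_notMem (p : ℕ) [Fact p.Prime] {X : Type*} [Fintype X]
    {w : FreeGroup X} (hw : w ≠ 1) : ∃ M : Subgroup (FreeGroup X), IsPOpen p M ∧ w ∉ M := by
  classical
  by_contra! hcon
  let K : Subgroup (FreeGroup X) := sInf {M | IsPOpen p M}
  have hK : ∀ x ∉ K, ∃ M : Subgroup (FreeGroup X), IsPOpen p M ∧ x ∉ M := by
    intro x hx
    simpa [K, Subgroup.mem_sInf] using hx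
  have hwK : w ∈ K := Subgroup.mem_sInf.2 hcon
  have : Nontrivial K := ⟨⟨w, hwK⟩, 1, fun h => hw (congrArg Subtype.val h)⟩
  have : IsFreeGroup K := subgroupIsFreeOfIsFree K
  obtain ⟨χ, c, hc⟩ := IsFreeGroup.exists_hom_ne_one p K
  obtain ⟨D, hD, hD'⟩ := FreeGroup.exists_fox_derivative (ZMod p) X
  refine hc (MonoidAlgebra.toAdd_hom_eq_zero χ c (fun x => D x c) FreeGroup.of (hD' c) ?_)
  intro x h hh
  set S := (D x c).coeff.support with hS
  obtain ⟨M, hM, hMS⟩ := IsPOpen.exists_forall_notMem hK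
    (((S ×ˢ S).image fun s => s.1 * s.2⁻¹).filter (· ∉ K)) (by simp)
  have := hM.normal
  have := hM.finite_quotient
  have := MonoidAlgebra.finite (ZMod p) (FreeGroup X ⧸ M)
  have hker : FreeGroup.foxHom (hD x) (QuotientGroup.mk' M) c = 1 :=
    Subgroup.mem_sInf.1 c.2 _ (IsPOpen.ker (isPGroup_fox hM.isPGroup_quotient) _)
  have hmap : mapDomain (QuotientGroup.mk' M) (D x c) = 0 :=
    congrArg (fun t => t.left.toAdd) hker
  let h' : FreeGroup X ⧸ M → ZMod p := fun m =>
    if ex : ∃ y ∈ S, QuotientGroup.mk' M y = m then h ex.choose else 0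
  have hpair : pairing h (D x c) = pairing (h' ∘ QuotientGroup.mk' M) (D x c) := by
    refine pairing_congr fun y hy => ?_
    have ex : ∃ z ∈ S, QuotientGroup.mk' M z = QuotientGroup.mk' M y := ⟨y, hy, rfl⟩
    obtain ⟨hz, hzy⟩ := ex.choose_spec
    rw [Function.comp_apply]
    simp only [h', dif_pos ex]
    have hmem : y * ex.choose⁻¹ ∈ K := by
      by_contra hnot
      refine hMS (y * ex.choose⁻¹) ?_ ?_
      · exact Finset.mem_filter.2 ⟨Finset.mem_image.2
          ⟨(y, ex.choose), Finset.mk_mem_product hy hz, rfl⟩, hnot⟩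
      · rw [← QuotientGroup.eq_one_iff, ← QuotientGroup.mk'_apply, _root_.map_mul,
          _root_.map_inv, hzy, mul_inv_cancel]
    have := hh _ hmem ex.choose
    rwa [inv_mul_cancel_right] at this
  rw [hpair, ← pairing_mapDomain, hmap, map_zero]

theorem FreeGroup.exists_isPOpen_forall_notMem (p : ℕ) [Fact p.Prime] {X : Type*} [Fintype X]
    (S : Finset (FreeGroup X)) :
    ∃ M : Subgroup (FreeGroup X), IsPOpen p M ∧ ∀ s ∈ S, s ≠ 1 → s ∉ M := by
  classical
  obtain ⟨M, hM, h⟩ := IsPOpen.exists_forall_notMem (p := p) (K := (⊥ : Subgroup (FreeGroup X)))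
    (fun x hx => FreeGroup.exists_isPOpen_notMem p hx) (S.filter (· ≠ 1)) (by simp)
  exact ⟨M, hM, fun s hs h1 => h s (Finset.mem_filter.2 ⟨hs, h1⟩)⟩

end

section

open MonoidAlgebra

theorem MonoidHom.left_pow_leftMulAut {G S : Type*} [Group G] [Ring S] (u : G →* S)
    (x : Multiplicative S ⋊[u.leftMulAut] G) (n : ℕ) :
    (x ^ n).right = x.right ^ n ∧
      (x ^ n).left.toAdd = ∑ i ∈ Finset.range n, u (x.right ^ i) * x.left.toAdd := by
  induction n with
  | zero => simp
  | succ n ih =>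
    rw [pow_succ, SemidirectProduct.mul_right, SemidirectProduct.mul_left, toAdd_mul, ih.1, ih.2,
      pow_succ, Finset.sum_range_succ]
    exact ⟨rfl, rfl⟩

/-- If all sums of coefficients over the cosets of a cyclic group vanish, then so does the pairing
with any invariant function. -/
theorem MonoidAlgebra.pairing_eq_zero_of_sum_orderOf_eq_zero {k G : Type*} [CommRing k] [Group G]
    [Finite G] (g : G) (f : MonoidAlgebra k G)
    (hf : ∑ i ∈ Finset.range (orderOf g), single (g ^ i) 1 * f = 0)
    (h : G → k) (hh : ∀ y, h (g * y) = h y) : pairing h f = 0 := by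
  classical
  obtain ⟨rep, hrep, hmem⟩ := (Subgroup.zpowers g).exists_rightCoset_representative
  let e : G → k := fun y => if y = rep y then 1 else 0
  have he : ∀ y, ∑ i ∈ Finset.range (orderOf g), e (g ^ i * y) = 1 := by
    intro y
    have h1 := (Subgroup.zpowers g).inv_mem (hmem y)
    rw [← mem_powers_iff_mem_zpowers, mul_inv_rev, inv_inv, mem_powers_iff_mem_range_orderOf] at h1
    obtain ⟨i, hi, hiy⟩ := Finset.mem_image.1 h1
    have hrep' : ∀ j : ℕ, rep (g ^ j * y) = rep y := fun j =>
      hrep _ (Subgroup.npow_mem_zpowers g j) y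
    rw [Finset.sum_eq_single_of_mem i hi]
    · simp only [e, hrep']
      rw [if_pos (by rw [hiy, inv_mul_cancel_right])]
    · intro j hj hji
      simp only [e, hrep', ite_eq_right_iff]
      intro hj'
      refine absurd (pow_injOn_Iio_orderOf (x := g) (Finset.mem_range.1 hj)
        (Finset.mem_range.1 hi) ?_) hji
      change g ^ j = g ^ i
      rw [hiy, ← hj', mul_inv_cancel_right]
  have hh' : ∀ (i : ℕ) (y : G), h (g ^ i * y) = h y := by
    intro i
    induction i with
    | zero => simp
    | succ i ih =>
      intro y
      rw [pow_succ, mul_assoc, ih, hh]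
  have h1 : h = fun y => ∑ i ∈ Finset.range (orderOf g), (h * e) (g ^ i * y) := by
    funext y
    simp only [Pi.mul_apply, hh']
    rw [← Finset.mul_sum, he, mul_one]
  rw [h1, pairing_sum]
  simp_rw [← pairing_single_mul]
  rw [← map_sum, hf, map_zero]

/-- An element of a free group which generates its own centralizer is not a `p`-th power in some
finite `p`-quotient. -/
theorem FreeGroup.exists_hom_forall_pow_ne (p : ℕ) [Fact p.Prime] {X : Type u} [Fintype X]
    {c : FreeGroup X} (hc : c ≠ 1) (hcent : ∀ g, Commute g c → g ∈ Subgroup.zpowers c) :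
    ∃ (Q : Type u) (_ : Group Q) (_ : Finite Q) (Ψ : FreeGroup X →* Q),
      IsPGroup p Q ∧ ∀ y : Q, y ^ p ≠ Ψ c := by
  classical
  obtain ⟨D, hD, hD'⟩ := FreeGroup.exists_fox_derivative (ZMod p) X
  let S : Finset (FreeGroup X) := Finset.univ.biUnion fun x => (D x c).coeff.support
  obtain ⟨M, hM, hMS⟩ := FreeGroup.exists_isPOpen_forall_notMem p
    (insert c ((S ×ˢ S).image fun s => ⁅s.1 * s.2⁻¹, c⁆))
  have := hM.normal
  have := hM.finite_quotient
  have hG := hM.isPGroup_quotient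
  have := MonoidAlgebra.finite (ZMod p) (FreeGroup X ⧸ M)
  set q := QuotientGroup.mk' M with hq
  have hqc : q c ≠ 1 := fun h =>
    hMS c (Finset.mem_insert_self _ _) hc ((QuotientGroup.eq_one_iff c).1 h)
  obtain ⟨x, hx⟩ : ∃ x, ∑ i ∈ Finset.range (orderOf (q c)),
      single (q c ^ i) 1 * mapDomain q (D x c) ≠ 0 := by
    by_contra! hcon
    obtain ⟨μ, hμ, -⟩ := (hG.to_subgroup (Subgroup.zpowers (q c))).exists_hom_ne_one
      (B := ⊥) (fun h => hqc (by
        have : (⟨q c, Subgroup.mem_zpowers _⟩ : Subgroup.zpowers (q c)) ∈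
          (⊥ : Subgroup (Subgroup.zpowers (q c))) := h ▸ trivial
        exact congrArg Subtype.val this))
    refine hμ ?_
    have h1 : μ ⟨q c, Subgroup.mem_zpowers _⟩ = 1 := by
      refine MonoidAlgebra.toAdd_hom_eq_zero μ _ (fun x => mapDomain q (D x c))
        (fun x => q (of x)) ?_ ?_
      · have := congrArg (mapDomainRingHom (ZMod p) q) (hD' c)
        simpa only [map_sum, _root_.map_mul, map_sub, _root_.map_one, mapDomainRingHom_apply,
          mapDomain_single] using this
      · exact fun x h hh => pairing_eq_zero_of_sum_orderOf_eq_zero (q c) _ (hcon x) h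
          (hh _ (Subgroup.mem_zpowers _))
    ext ⟨_, i, rfl⟩
    have h2 : (⟨q c ^ i, Subgroup.zpow_mem_zpowers _ _⟩ : Subgroup.zpowers (q c)) =
      ⟨q c, Subgroup.mem_zpowers _⟩ ^ i := rfl
    change (μ ⟨q c ^ i, Subgroup.zpow_mem_zpowers _ _⟩).toAdd = _
    rw [h2, map_zpow, h1, one_zpow]
    rfl
  set θ := ∑ i ∈ Finset.range (orderOf (q c)), single (q c ^ i) 1 * mapDomain q (D x c) with hθ
  have hsupp : ∀ t, θ.coeff t ≠ 0 → ∃ i : ℕ, ∃ s ∈ S, t = q c ^ i * q s := by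
    intro t ht
    rw [hθ, coeff_sum, Finsupp.finsetSum_apply] at ht
    obtain ⟨i, -, hi⟩ := Finset.exists_ne_zero_of_sum_ne_zero ht
    rw [coeff_single_mul_apply, one_mul] at hi
    obtain ⟨s, hs, hst⟩ := Finset.mem_image.1
      (Finsupp.mapDomain_support (Finsupp.mem_support_iff.2 hi))
    refine ⟨i, s, Finset.mem_biUnion.2 ⟨x, Finset.mem_univ _, hs⟩, ?_⟩
    rw [hst, mul_inv_cancel_left]
  let Ψ := FreeGroup.foxHom (hD x) q
  refine ⟨_, _, inferInstance, Ψ, isPGroup_fox hG, fun y hy => ?_⟩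
  have hyc : Commute y (Ψ c) := hy ▸ Commute.self_pow y p
  have hr : (Ψ c).right = q c := rfl
  have hPo : (Ψ c ^ orderOf (q c)).right = 1 ∧
      (Ψ c ^ orderOf (q c)).left.toAdd = θ := by
    obtain ⟨h1, h2⟩ := MonoidHom.left_pow_leftMulAut _ (Ψ c) (orderOf (q c))
    rw [h1, h2, hr]
    exact ⟨pow_orderOf_eq_one _, rfl⟩
  set e := y.right with he
  have heθ : single e 1 * θ = θ := by
    have h1 := congrArg (fun t => t.left.toAdd) (hyc.pow_right (orderOf (q c))).eq
    simp only [SemidirectProduct.mul_left, toAdd_mul, hPo.1, hPo.2, _root_.map_one,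
      MulAut.one_apply] at h1
    have h2 : y.left.toAdd + single e 1 * θ = θ + y.left.toAdd := by
      rw [← hPo.2] at h1 ⊢
      exact h1
    rw [add_comm] at h2
    exact add_right_cancel h2
  have hec : Commute e (q c) := congrArg SemidirectProduct.right hyc.eq
  obtain ⟨t, ht⟩ : ∃ t, θ.coeff t ≠ 0 := by
    by_contra! h0
    exact hx (coeff_eq_zero.1 (Finsupp.ext h0))
  obtain ⟨i, s, hs, hts⟩ := hsupp t ht
  have ht' : θ.coeff (e * t) ≠ 0 := by
    rw [← heθ, coeff_single_mul_apply, one_mul, inv_mul_cancel_left]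
    exact ht
  obtain ⟨l, s', hs', hts'⟩ := hsupp _ ht'
  have hes : e = q c ^ l * q (s' * s⁻¹) * (q c ^ i)⁻¹ := by
    rw [hts] at hts'
    rw [_root_.map_mul, _root_.map_inv, ← mul_assoc, ← hts']
    group
  have hss : Commute (q (s' * s⁻¹)) (q c) := by
    have : q (s' * s⁻¹) = (q c ^ l)⁻¹ * e * q c ^ i := by
      rw [hes]
      group
    rw [this]
    exact ((((Commute.refl (q c)).pow_left l).inv_left).mul_left hec).mul_left
      ((Commute.refl (q c)).pow_left i)
  obtain ⟨m, hm⟩ : s' * s⁻¹ ∈ Subgroup.zpowers c := by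
    refine hcent _ (commutatorElement_eq_one_iff_commute.1 ?_)
    by_contra hne
    refine hMS _ (Finset.mem_insert_of_mem (Finset.mem_image.2
      ⟨(s', s), Finset.mk_mem_product hs' hs, rfl⟩)) hne ?_
    rw [← QuotientGroup.eq_one_iff, ← QuotientGroup.mk'_apply, ← hq, map_commutatorElement]
    exact commutatorElement_eq_one_iff_commute.2 hss
  set m' : ℤ := l + m - i
  have hem : e = q c ^ m' := by
    rw [hes, ← hm, map_zpow, zpow_sub, zpow_add, zpow_natCast, zpow_natCast]
  have hz : (Ψ c ^ (-m') * y).right = 1 := by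
    have : (Ψ c ^ (-m')).right = q c ^ (-m') := map_zpow SemidirectProduct.rightHom (Ψ c) _
    rw [SemidirectProduct.mul_right, this, ← he, hem, ← zpow_add, neg_add_cancel, zpow_zero]
  have hz' : (Ψ c ^ (-m') * y) ^ p = 1 := by
    obtain ⟨N, hN⟩ : Ψ c ^ (-m') * y ∈ (SemidirectProduct.inl (φ :=
        (MonoidAlgebra.of (ZMod p) (FreeGroup X ⧸ M)).leftMulAut)).range := by
      rw [SemidirectProduct.range_inl_eq_ker_rightHom]
      exact hz
    have hNp : N ^ p = 1 := Multiplicative.toAdd.injective (by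
      have : (p : ZMod p) • N.toAdd = 0 := by simp
      rw [toAdd_pow, toAdd_one, ← this, Nat.cast_smul_eq_nsmul])
    rw [← hN, ← map_pow, hNp, _root_.map_one]
  rw [(hyc.symm.zpow_left (-m')).mul_pow, hy, ← zpow_natCast, ← zpow_mul, ← zpow_add_one] at hz'
  have hne : Ψ c ≠ 1 := fun h => hqc (by rw [← hr, h]; rfl)
  have hdvd : (p : ℤ) ∣ -m' * p + 1 :=
    (Int.natCast_dvd_natCast.2 ((isPGroup_fox hG).dvd_orderOf hne)).trans
      (orderOf_dvd_iff_zpow_eq_one.2 hz')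
  have h1 : (p : ℤ) ∣ 1 := (Int.dvd_add_right (Dvd.intro_left _ rfl)).1 hdvd
  exact (Fact.out : p.Prime).one_lt.ne' (by exact_mod_cast Int.eq_one_of_dvd_one (by positivity) h1)

end

/-- A homomorphism to a nilpotent group defined on a retract of a free group extends to the whole
group, lifting a prescribed homomorphism to a quotient. -/
theorem FreeGroup.exists_extension_of_retract {X : Type*} {r : FreeGroup X →* FreeGroup X}
    (hr : ∀ x, r (r x) = r x) {Q Q' : Type*} [Group Q] [Group Q'] [Group.IsNilpotent Q]
    {π : Q →* Q'} (hπ : Function.Surjective π) (χ : FreeGroup X →* Q') (f : FreeGroup X →* Q)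
    (hf : ∀ x, f (r x) = f x) (hfχ : ∀ x, π (f x) = χ (r x)) :
    ∃ g : FreeGroup X →* Q, (∀ x, g (r x) = f x) ∧ ∀ x, π (g x) = χ x := by
  have key : ∀ n, ∃ g : FreeGroup X →* Q,
      (∀ x, f x * (g (r x))⁻¹ ∈ (⊤ : Subgroup Q).lowerCentralSeries n) ∧ π.comp g = χ := by
    intro n
    induction n with
    | zero =>
      choose l hl using fun x => hπ (χ (of x))
      refine ⟨lift l, fun x => by simp, FreeGroup.ext_hom _ _ fun x => ?_⟩
      simp [hl]
    | succ n ih =>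
      obtain ⟨g, hg, hgχ⟩ := ih
      set N := (⊤ : Subgroup Q).lowerCentralSeries (n + 1)
      have hcomm : ∀ x b, QuotientGroup.mk' N (f x * (g (r x))⁻¹) * b =
          b * QuotientGroup.mk' N (f x * (g (r x))⁻¹) := by
        intro x b
        obtain ⟨b, rfl⟩ := QuotientGroup.mk'_surjective N b
        refine commutatorElement_eq_one_iff_mul_comm.1 ?_
        rw [← map_commutatorElement, QuotientGroup.mk'_apply, QuotientGroup.eq_one_iff]
        exact Subgroup.commutator_mem_commutator (hg x) (Subgroup.mem_top b)
      let g' : FreeGroup X →* Q := lift fun x => f (of x) * (g (r (of x)))⁻¹ * g (of x)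
      have hg' : (QuotientGroup.mk' N).comp g' = MonoidHom.mk'
          (fun x => QuotientGroup.mk' N (f x * (g (r x))⁻¹) * QuotientGroup.mk' N (g x)) (by
            intro x y
            have h1 : f (x * y) * (g (r (x * y)))⁻¹ =
                f x * (g (r x))⁻¹ * (g (r x) * (f y * (g (r y))⁻¹) * (g (r x))⁻¹) := by
              simp only [_root_.map_mul]
              group
            rw [h1, _root_.map_mul, _root_.map_mul (QuotientGroup.mk' N) (_ * _) (g (r x))⁻¹,
              _root_.map_mul _ (g (r x)), ← hcomm, _root_.map_inv, mul_inv_cancel_right,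
              _root_.map_mul g, _root_.map_mul _ (g x)]
            simp only [mul_assoc]
            rw [← mul_assoc (QuotientGroup.mk' N (g x)), ← hcomm y]
            simp only [mul_assoc]) := by
        refine FreeGroup.ext_hom _ _ fun x => ?_
        simp [g']
      refine ⟨g', fun x => ?_, FreeGroup.ext_hom _ _ fun x => ?_⟩
      · have h1 := DFunLike.congr_fun hg' (r x)
        simp only [MonoidHom.comp_apply, MonoidHom.mk'_apply, hr, hf] at h1
        rw [← _root_.map_mul, inv_mul_cancel_right] at h1
        rw [← QuotientGroup.eq_one_iff, ← QuotientGroup.mk'_apply, _root_.map_mul, _root_.map_inv,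
          h1, mul_inv_cancel]
      · have h1 : ∀ y, π (g y) = χ y := DFunLike.congr_fun hgχ
        simp [g', h1, hfχ]
  obtain ⟨n, hn⟩ := Subgroup.nilpotent_iff_lowerCentralSeries.1 ‹Group.IsNilpotent Q›
  obtain ⟨g, hg, hgχ⟩ := key n
  refine ⟨g, fun x => ?_, DFunLike.congr_fun hgχ⟩
  have := hg x
  rw [hn, Subgroup.mem_bot] at this
  exact (mul_inv_eq_one.1 this).symm

theorem Pi.isPGroup {p : ℕ} {Y : Type*} [Finite Y] {N : Type*} [Group N] [Finite N]
    (hN : IsPGroup p N) : IsPGroup p (Y → N) := by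
  obtain ⟨k, hk⟩ := isPGroup_iff_exists_pow_pow_eq_one.1 hN
  exact isPGroup_iff_pow_pow_eq_one.2 fun g => ⟨k, funext fun y => hk (g y)⟩

/-- A character of order `p` of the preimage of `W` in a retract of a free group extends to the
preimage of `W` in the whole group. -/
theorem FreeGroup.exists_hom_comap_extension {p : ℕ} [Fact p.Prime] {X : Type*}
    {r : FreeGroup X →* FreeGroup X} (hr : ∀ x, r (r x) = r x) {G : Type*} [Group G] [Finite G]
    (hG : IsPGroup p G) (q : FreeGroup X →* G) (W : Subgroup G) {V : Subgroup (FreeGroup X)}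
    (hV : ∀ x, x ∈ V ↔ r x = x ∧ q x ∈ W) (φ : V →* Multiplicative (ZMod p)) :
    ∃ ψ : W.comap q →* Multiplicative (ZMod p),
      ∀ v : V, ψ ⟨v, ((hV v).1 v.2).2⟩ = φ v := by
  classical
  let b : G ⧸ W := ((1 : G) : G ⧸ W)
  have hb : ∀ g : G, g • b = b ↔ g ∈ W := by
    intro g
    rw [eq_comm]
    change ((1 : G) : G ⧸ W) = ((g * 1 : G) : G ⧸ W) ↔ _
    rw [QuotientGroup.eq]
    simp
  let O : Set (G ⧸ W) := {y | ∃ x, q (r x) • b = y}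
  have hbO : b ∈ O := ⟨1, by simp⟩
  have hO : ∀ x y, (q (r x))⁻¹ • y ∈ O ↔ y ∈ O := by
    intro x y
    constructor
    · rintro ⟨z, hz⟩
      exact ⟨x * z, by rw [_root_.map_mul, _root_.map_mul, mul_smul, hz, smul_inv_smul]⟩
    · rintro ⟨z, rfl⟩
      exact ⟨x⁻¹ * z, by rw [_root_.map_mul, _root_.map_mul, mul_smul, _root_.map_inv,
        _root_.map_inv]⟩
  obtain ⟨s, hsr, hsb, hs⟩ : ∃ s : G ⧸ W → FreeGroup X, (∀ y, r (s y) = s y) ∧ s b = 1 ∧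
      ∀ y ∈ O, q (s y) • b = y := by
    refine ⟨fun y => if h : y ≠ b ∧ y ∈ O then r h.2.choose else 1, fun y => ?_, ?_, ?_⟩
    · dsimp only
      split_ifs
      · rw [hr]
      · rw [_root_.map_one]
    · simp
    · intro y hy
      by_cases hyb : y = b
      · simp [hyb]
      · have h : y ≠ b ∧ y ∈ O := ⟨hyb, hy⟩
        dsimp only
        rw [dif_pos h]
        exact h.2.choose_spec
  obtain ⟨φ', hφ'V, hφ'⟩ : ∃ φ' : FreeGroup X → Multiplicative (ZMod p),
      (∀ v : V, φ' v = φ v) ∧ ∀ x ∈ V, ∀ y ∈ V, φ' (x * y) = φ' x * φ' y := by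
    refine ⟨fun x => if h : x ∈ V then φ ⟨x, h⟩ else 1, fun v => dif_pos v.2, ?_⟩
    intro x hx y hy
    simp only [dif_pos hx, dif_pos hy, dif_pos (V.mul_mem hx hy), ← _root_.map_mul]
    rfl
  have hmem : ∀ x, ∀ y ∈ O, (s y)⁻¹ * r x * s ((q (r x))⁻¹ • y) ∈ V := by
    intro x y hy
    refine (hV _).2 ⟨by simp only [_root_.map_mul, _root_.map_inv, hsr, hr], (hb _).1 ?_⟩
    rw [_root_.map_mul, _root_.map_mul, mul_smul, hs _ ((hO x y).2 hy), mul_smul, smul_inv_smul,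
      _root_.map_inv, inv_smul_eq_iff, hs y hy]
  let f : FreeGroup X →* ((G ⧸ W) → Multiplicative (ZMod p)) ⋊[mulAutArrow] G :=
    MonoidHom.mk' (fun x => ⟨fun y => if y ∈ O then
      φ' ((s y)⁻¹ * r x * s ((q (r x))⁻¹ • y)) else 1, q (r x)⟩) (by
      intro x x'
      ext1
      · funext y
        rw [SemidirectProduct.mul_left, Pi.mul_apply, mulAutArrow_apply_apply]
        change _ = (if y ∈ O then _ else _) * (if (q (r x))⁻¹ • y ∈ O then _ else _)
        simp only [hO]
        split_ifs with hy
        · rw [← hφ' _ (hmem x y hy) _ (hmem x' _ ((hO x y).2 hy))]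
          simp only [_root_.map_mul, mul_inv_rev, mul_smul]
          congr 1
          group
        · rw [mul_one]
      · simp)
  have hQ : IsPGroup p (((G ⧸ W) → Multiplicative (ZMod p)) ⋊[mulAutArrow] G) :=
    SemidirectProduct.isPGroup (Pi.isPGroup isPGroup_multiplicative_zmod) hG
  have := hQ.isNilpotent
  obtain ⟨g, hg, hgq⟩ := FreeGroup.exists_extension_of_retract hr
    (π := SemidirectProduct.rightHom) SemidirectProduct.rightHom_surjective q f
    (fun x => by simp only [f, MonoidHom.mk'_apply, hr]) (fun x => rfl)
  refine ⟨MonoidHom.mk' (fun u => (g u).left b) fun u v => ?_, fun v => ?_⟩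
  · rw [Subgroup.coe_mul, _root_.map_mul, SemidirectProduct.mul_left, Pi.mul_apply]
    congr 1
    change (g v).left ((g u).right⁻¹ • b) = _
    have : (g u).right = q u := hgq u
    rw [this, (hb _).2 (W.inv_mem u.2)]
  · obtain ⟨h1, h2⟩ := (hV v).1 v.2
    have h3 : g v = f v := by
      rw [← hg, h1]
    change (g v).left b = _
    rw [h3]
    change (if b ∈ O then _ else _) = _
    rw [if_pos hbO, hsb, h1, (hb _).2 (W.inv_mem h2), hsb, inv_one, one_mul, mul_one]
    exact hφ'V v

theorem FreeGroup.not_commute_of_zero_one :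
    ¬ Commute (of 0 : FreeGroup (Fin 2)) (of 1) := by
  intro h
  have h1 := h.map (lift ![Equiv.swap (0 : Fin 3) 1, Equiv.swap (1 : Fin 3) 2])
  rw [lift_apply_of, lift_apply_of] at h1
  exact absurd h1.eq (by decide)

section Continuity

variable {p : ℕ} [Fact p.Prime] {X : Type*} [Fintype X] {j : FreeGroup (Fin 2) →* FreeGroup X}

/-- Every character of order `p` of a subgroup of rank two of a free group is continuous for the
pro-`p` topology of the ambient group. -/
theorem FreeGroup.exists_isPOpen_character_eq_one (hj : Function.Injective j)
    (χ : FreeGroup (Fin 2) →* Multiplicative (ZMod p)) :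
    ∃ M : Subgroup (FreeGroup X), IsPOpen p M ∧ ∀ a, j a ∈ M → χ a = 1 := by
  have hne : ⁅j (of 0), j (of 1)⁆ ≠ 1 := by
    rw [← map_commutatorElement, Ne, map_eq_one_iff j hj, commutatorElement_eq_one_iff_commute]
    exact FreeGroup.not_commute_of_zero_one
  obtain ⟨M, hM, hMc⟩ := FreeGroup.exists_isPOpen_notMem p hne
  have := hM.normal
  have := hM.finite_quotient
  set f := (QuotientGroup.mk' M).comp j with hf
  obtain ⟨μ₁, μ₂, ⟨_, a₁, rfl⟩, ⟨_, a₂, rfl⟩, h₁, h₂, h₃⟩ :=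
    (hM.isPGroup_quotient.to_subgroup f.range).exists_independent_homs (by
      intro w hw
      refine hMc ((QuotientGroup.eq_one_iff _).1 ?_)
      rw [← QuotientGroup.mk'_apply, map_commutatorElement, commutatorElement_eq_one_iff_commute]
      obtain ⟨i, hi⟩ : f.rangeRestrict (of 0) ∈ Subgroup.zpowers w := hw ▸ trivial
      obtain ⟨l, hl⟩ : f.rangeRestrict (of 1) ∈ Subgroup.zpowers w := hw ▸ trivial
      have h : Commute (f.rangeRestrict (of 0)) (f.rangeRestrict (of 1)) :=
        hi ▸ hl ▸ (Commute.refl w).zpow_zpow i l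
      exact h.map f.range.subtype)
  obtain ⟨s, t, rfl⟩ := FreeGroup.exists_eq_zpow_mul_zpow (μ₁.comp f.rangeRestrict)
    (μ₂.comp f.rangeRestrict) h₁ h₂ h₃ χ
  refine ⟨M, hM, fun a ha => ?_⟩
  have : f.rangeRestrict a = 1 := Subtype.ext ((QuotientGroup.eq_one_iff _).2 ha)
  simp [this]

theorem Subgroup.normal_zpowers_of_mem_center {Q : Type*} [Group Q] {z : Q}
    (hz : z ∈ Subgroup.center Q) : (Subgroup.zpowers z).Normal := by
  refine ⟨?_⟩
  rintro _ ⟨i, rfl⟩ g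
  have h : g * z ^ i = z ^ i * g := Subgroup.mem_center_iff.1 ((center Q).zpow_mem hz i) g
  change g * z ^ i * g⁻¹ ∈ _
  rw [h, mul_inv_cancel_right]
  exact Subgroup.zpow_mem_zpowers z i

/-- Every homomorphism from a subgroup of rank two of a free group to a finite `p`-group is
continuous for the pro-`p` topology of the ambient group. -/
theorem FreeGroup.exists_isPOpen_hom_eq_one (hj : Function.Injective j) {Q : Type u} [Group Q]
    [Finite Q] (hQ : IsPGroup p Q) (f : FreeGroup (Fin 2) →* Q) :
    ∃ M : Subgroup (FreeGroup X), IsPOpen p M ∧ ∀ a, j a ∈ M → f a = 1 := by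
  induction hn : Nat.card Q using Nat.strong_induction_on generalizing Q with
  | _ n ih =>
  subst hn
  rcases subsingleton_or_nontrivial Q with hs | hnt
  · exact ⟨⊤, IsPOpen.top, fun a _ => Subsingleton.elim _ _⟩
  have := hQ.center_nontrivial
  obtain ⟨⟨z, hzc⟩, hz⟩ := exists_prime_orderOf_dvd_card' (G := Subgroup.center Q) p
    ((hQ.to_subgroup _).card_eq_or_dvd.resolve_left Finite.one_lt_card.ne')
  rw [Subgroup.orderOf_mk] at hz
  set Z := Subgroup.zpowers z with hZ
  have hZn : Z.Normal := Subgroup.normal_zpowers_of_mem_center hzc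
  have hZcard : Nat.card Z = p := by rw [hZ, Nat.card_zpowers, hz]
  have hZc : ∀ c ∈ Z, ∀ y, y * c = c * y := by
    rintro _ ⟨i, rfl⟩
    exact Subgroup.mem_center_iff.1 ((Subgroup.center Q).zpow_mem hzc i)
  have hlt : Nat.card (Q ⧸ Z) < Nat.card Q := by
    rw [Subgroup.card_eq_card_quotient_mul_card_subgroup Z, hZcard]
    exact lt_mul_of_one_lt_right Nat.card_pos (Fact.out : p.Prime).one_lt
  obtain ⟨M, hM, hMf⟩ := ih _ hlt (hQ.to_quotient Z) ((QuotientGroup.mk' Z).comp f) rfl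
  have := hM.normal
  set q := QuotientGroup.mk' M
  let U := (q.comp j).range.comap q
  have hMU : M ≤ U := fun m hm => ⟨1, by
    rw [_root_.map_one]
    exact ((QuotientGroup.eq_one_iff m).2 hm).symm⟩
  have hjU : ∀ a, j a ∈ U := fun a => ⟨a, rfl⟩
  let f' : (q.comp j).range →* Q ⧸ Z := (q.comp j).rangeRestrict.liftOfSurjective
    (q.comp j).rangeRestrict_surjective ⟨(QuotientGroup.mk' Z).comp f, fun a ha => by
      refine hMf a ((QuotientGroup.eq_one_iff _).1 ?_)
      exact congrArg Subtype.val ha⟩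
  have hf' : ∀ a, f' ((q.comp j).rangeRestrict a) = QuotientGroup.mk' Z (f a) := fun a =>
    (q.comp j).rangeRestrict.liftOfRightInverse_comp_apply _ _ _ a
  have : IsFreeGroup U := subgroupIsFreeOfIsFree U
  let g' : U →* Q ⧸ Z := f'.comp ((q.comp U.subtype).codRestrict _ fun u => u.2)
  choose l hl using fun i => QuotientGroup.mk'_surjective Z (g' (IsFreeGroup.of i))
  let g : U →* Q := IsFreeGroup.lift l
  have hg : (QuotientGroup.mk' Z).comp g = g' := IsFreeGroup.ext_hom fun i => by
    rw [MonoidHom.comp_apply, IsFreeGroup.lift_of, hl]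
  let ι : FreeGroup (Fin 2) →* U := j.codRestrict U hjU
  have hd : ∀ a, f a * (g (ι a))⁻¹ ∈ Z := by
    intro a
    have h1 : QuotientGroup.mk' Z (g (ι a)) = QuotientGroup.mk' Z (f a) :=
      (DFunLike.congr_fun hg (ι a)).trans (hf' a)
    rw [← QuotientGroup.eq_one_iff, ← QuotientGroup.mk'_apply, _root_.map_mul, _root_.map_inv, h1,
      mul_inv_cancel]
  let d : FreeGroup (Fin 2) →* Z := MonoidHom.mk' (fun a => ⟨f a * (g (ι a))⁻¹, hd a⟩) (by
    intro a b
    ext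
    change f (a * b) * (g (ι (a * b)))⁻¹ = f a * (g (ι a))⁻¹ * (f b * (g (ι b))⁻¹)
    rw [← hZc _ (hd a), _root_.map_mul, _root_.map_mul, _root_.map_mul, mul_inv_rev]
    rw [show f a * f b * ((g (ι b))⁻¹ * (g (ι a))⁻¹) = f a * (f b * (g (ι b))⁻¹) * (g (ι a))⁻¹ by
      group, hZc _ (hd b), mul_assoc])
  let e : Z ≃* Multiplicative (ZMod p) := mulEquivOfPrimeCardEq (p := p) hZcard (by simp)
  obtain ⟨M', hM', hMd⟩ := FreeGroup.exists_isPOpen_character_eq_one hj (e.toMonoidHom.comp d)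
  obtain ⟨N, hN, -, hNg⟩ := hM.exists_le_forall_eq_one hMU hQ g
  refine ⟨M' ⊓ N, hM'.inf hN, fun a ha => ?_⟩
  have h1 : d a = 1 := e.injective ((hMd a ha.1).trans (_root_.map_one e).symm)
  have h2 : f a * (g (ι a))⁻¹ = 1 := congrArg Subtype.val h1
  rwa [hNg (ι a) ha.2, inv_one, mul_one] at h2

end Continuity

section Retract

variable {p : ℕ} {X : Type*} {A : Type*} [Group A]
  {j : A →* FreeGroup X} {r : FreeGroup X →* FreeGroup X}

/-- The elements whose images are fixed by `r` up to a normal subgroup contained in `M`. -/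
def fixedModulo (j : A →* FreeGroup X) (r : FreeGroup X →* FreeGroup X)
    (M : Subgroup (FreeGroup X)) : Subgroup A :=
  ((QuotientGroup.mk' M.normalCore).comp j).eqLocus
    ((QuotientGroup.mk' M.normalCore).comp (r.comp j))

theorem mem_fixedModulo {M : Subgroup (FreeGroup X)} (hM : M.Normal) {a : A} :
    a ∈ fixedModulo j r M ↔ (j a)⁻¹ * r (j a) ∈ M := by
  conv_rhs => rw [← M.normalCore_eq_self, ← QuotientGroup.eq]
  rfl

theorem fixedModulo_mono {M N : Subgroup (FreeGroup X)} (h : M ≤ N) :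
    fixedModulo j r M ≤ fixedModulo j r N := by
  intro a ha
  have h1 : (j a)⁻¹ * r (j a) ∈ M.normalCore := QuotientGroup.eq.1 ha
  exact QuotientGroup.eq.2 (Subgroup.normalCore_mono h h1)

theorem mem_fixedModulo_of_eq {M : Subgroup (FreeGroup X)} {a : A} (h : r (j a) = j a) :
    a ∈ fixedModulo j r M := by
  refine QuotientGroup.eq.2 ?_
  change (j a)⁻¹ * r (j a) ∈ _
  rw [h, inv_mul_cancel]
  exact one_mem _

/-- The image of `fixedModulo` in a finite group stabilizes. -/
theorem exists_isPOpen_map_fixedModulo_eq (hr : ∀ x, r (r x) = r x) {Q : Type*} [Group Q] [Finite Q]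
    (Ψ : A →* Q) (hΨ : ∃ M : Subgroup (FreeGroup X), IsPOpen p M ∧ ∀ a, j a ∈ M → Ψ a = 1) :
    ∃ M : Subgroup (FreeGroup X), IsPOpen p M ∧ (∀ x ∈ M, r x ∈ M) ∧ (∀ a, j a ∈ M → Ψ a = 1) ∧
      ∀ N : Subgroup (FreeGroup X), IsPOpen p N → N ≤ M →
        (fixedModulo j r N).map Ψ = (fixedModulo j r M).map Ψ := by
  obtain ⟨_, ⟨M₀, hM₀, hΨ₀, rfl⟩, hmin⟩ := (wellFounded_lt (α := Subgroup Q)).has_min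
    {B | ∃ M : Subgroup (FreeGroup X), IsPOpen p M ∧ (∀ a, j a ∈ M → Ψ a = 1) ∧
      (fixedModulo j r M).map Ψ = B} (by
        obtain ⟨M, hM, h⟩ := hΨ
        exact ⟨_, M, hM, h, rfl⟩)
  have key : ∀ N : Subgroup (FreeGroup X), IsPOpen p N → N ≤ M₀ →
      (fixedModulo j r N).map Ψ = (fixedModulo j r M₀).map Ψ := by
    intro N hN hle
    exact eq_of_le_of_not_lt (Subgroup.map_mono (fixedModulo_mono hle))
      (hmin _ ⟨N, hN, fun a ha => hΨ₀ a (hle ha), rfl⟩)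
  have hp := hM₀.inf (hM₀.comap r)
  refine ⟨M₀ ⊓ M₀.comap r, hp, fun x hx => ⟨hx.2, ?_⟩, fun a ha => hΨ₀ a ha.1, fun N hN hle => ?_⟩
  · change r (r x) ∈ M₀
    rw [hr]
    exact hx.2
  · rw [key N hN (hle.trans inf_le_left), key _ hp inf_le_left]

/-- Characters of the stable image of `fixedModulo` come from characters of the whole group. -/
theorem exists_hom_eq_of_mem_fixedModulo [Fact p.Prime] (hr : ∀ x, r (r x) = r x)
    {Q : Type*} [Group Q] (Ψ : A →* Q) {M : Subgroup (FreeGroup X)} (hM : IsPOpen p M)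
    (hMr : ∀ x ∈ M, r x ∈ M) (hΨ : ∀ a, j a ∈ M → Ψ a = 1)
    (χ : (fixedModulo j r M).map Ψ →* Multiplicative (ZMod p)) :
    ∃ (χ' : A →* Multiplicative (ZMod p)) (N : Subgroup (FreeGroup X)), IsPOpen p N ∧ N ≤ M ∧
      ∀ a ∈ fixedModulo j r N, ∀ h : Ψ a ∈ (fixedModulo j r M).map Ψ, χ' a = χ ⟨Ψ a, h⟩ := by
  have hMn := hM.normal
  have := hM.finite_quotient
  set q := QuotientGroup.mk' M with hq
  have hqM : ∀ {x y}, q x = q y ↔ x⁻¹ * y ∈ M := fun {x y} => QuotientGroup.eq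
  let V : Subgroup (FreeGroup X) := r.eqLocus (MonoidHom.id _) ⊓ (q.comp j).range.comap q
  have hV : ∀ x, x ∈ V ↔ r x = x ∧ q x ∈ (q.comp j).range := fun x => Iff.rfl
  choose t ht using fun v : V => ((hV v).1 v.2).2
  have htq : ∀ v : V, q (j (t v)) = q v := ht
  have htD : ∀ v, t v ∈ fixedModulo j r M := by
    intro v
    rw [mem_fixedModulo hMn]
    have h1 : (j (t v))⁻¹ * v ∈ M := hqM.1 (htq v)
    have h2 : (r (j (t v)))⁻¹ * v ∈ M := by
      have := hMr _ h1
      rwa [map_mul, map_inv, ((hV v).1 v.2).1] at this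
    have := M.mul_mem h1 (M.inv_mem h2)
    rwa [mul_inv_rev, inv_inv, ← mul_assoc, mul_inv_cancel_right] at this
  have hΨq : ∀ a b, q (j a) = q (j b) → Ψ a = Ψ b := by
    intro a b h
    have h1 := hΨ (a⁻¹ * b) (by
      rw [map_mul, map_inv]
      exact hqM.1 h)
    rwa [map_mul, map_inv, inv_mul_eq_one] at h1
  let φ : V →* (fixedModulo j r M).map Ψ := MonoidHom.mk'
    (fun v => ⟨Ψ (t v), Subgroup.mem_map_of_mem _ (htD v)⟩) (by
      intro v w
      ext
      change Ψ (t (v * w)) = Ψ (t v) * Ψ (t w)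
      rw [← map_mul]
      refine hΨq _ _ ?_
      rw [htq, map_mul, map_mul, htq, htq, Subgroup.coe_mul, map_mul])
  obtain ⟨ψ, hψ⟩ := FreeGroup.exists_hom_comap_extension hr hM.isPGroup_quotient q
    (q.comp j).range hV (χ.comp φ)
  obtain ⟨N, hN, hNM, hNψ⟩ := hM.exists_le_forall_eq_one (U := (q.comp j).range.comap q)
    (fun m hm => ⟨1, by
      rw [map_one]
      exact ((QuotientGroup.eq_one_iff m).2 hm).symm⟩) isPGroup_multiplicative_zmod ψ
  refine ⟨ψ.comp (j.codRestrict _ fun a => ⟨a, rfl⟩), N, hN, hNM, fun a ha h => ?_⟩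
  rw [mem_fixedModulo hN.normal] at ha
  have hqa : q (j a) = q (r (j a)) := hqM.2 (hNM ha)
  have hmV : r (j a) ∈ V := (hV _).2 ⟨hr _, a, hqa⟩
  have h1 := hNψ (⟨j a, a, rfl⟩⁻¹ * ⟨r (j a), ((hV _).1 hmV).2⟩) ha
  rw [map_mul, map_inv, inv_mul_eq_one, hψ ⟨_, hmV⟩] at h1
  refine h1.trans ?_
  change χ _ = _
  congr 1
  ext
  exact hΨq _ _ ((htq _).trans hqa.symm)

end Retract

section RankTwo

variable {p : ℕ} [Fact p.Prime] {X : Type*} [Fintype X] {j : FreeGroup (Fin 2) →* FreeGroup X}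
  {r : FreeGroup X →* FreeGroup X}

theorem pow_eq_one_of_pow_eq_one_zmod {u : Multiplicative (ZMod p)} (hu : u ≠ 1) {s : ℕ}
    (h : u ^ s = 1) (v : Multiplicative (ZMod p)) : v ^ s = 1 := by
  have h1 : p ∣ s :=
    (isPGroup_multiplicative_zmod.dvd_orderOf hu).trans (orderOf_dvd_of_pow_eq_one h)
  have h2 : (s : ZMod p) = 0 := (ZMod.natCast_eq_zero_iff s p).2 h1
  refine Multiplicative.toAdd.injective ?_
  rw [toAdd_pow, toAdd_one, nsmul_eq_mul, h2, zero_mul]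

/-- If `r` does not fix the image of `j`, the image of `fixedModulo` in a finite `p`-group is
eventually cyclic. -/
theorem exists_cyclic_subgroup_of_ne (hj : Function.Injective j) (hr : ∀ x, r (r x) = r x)
    {h₀ : FreeGroup (Fin 2)} (hh₀ : r (j h₀) ≠ j h₀) {Q : Type u} [Group Q] [Finite Q]
    (hQ : IsPGroup p Q) (Ψ : FreeGroup (Fin 2) →* Q) :
    ∃ Δ : Subgroup Q, (∀ a, r (j a) = j a → Ψ a ∈ Δ) ∧ (∃ d : Δ, Subgroup.zpowers d = ⊤) ∧
      ∀ χ : Δ →* Multiplicative (ZMod p), ∃ χ' : FreeGroup (Fin 2) →* Multiplicative (ZMod p),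
        ∀ a, r (j a) = j a → ∀ h : Ψ a ∈ Δ, χ' a = χ ⟨Ψ a, h⟩ := by
  obtain ⟨M₁, hM₁, hM₁r, hM₁Ψ, hst⟩ := exists_isPOpen_map_fixedModulo_eq (p := p) (j := j) hr Ψ
    (FreeGroup.exists_isPOpen_hom_eq_one hj hQ Ψ)
  have hext := exists_hom_eq_of_mem_fixedModulo hr Ψ hM₁ hM₁r hM₁Ψ
  refine ⟨(fixedModulo j r M₁).map Ψ,
    fun a ha => Subgroup.mem_map_of_mem _ (mem_fixedModulo_of_eq ha), ?_, fun χ => ?_⟩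
  · by_contra! hcon
    obtain ⟨μ₁, μ₂, ⟨w₁, hw₁⟩, ⟨w₂, hw₂⟩, h₁, h₂, h₃⟩ :=
      (hQ.to_subgroup ((fixedModulo j r M₁).map Ψ)).exists_independent_homs hcon
    obtain ⟨χ₁, N₁, hN₁, hN₁M, hχ₁⟩ := hext μ₁
    obtain ⟨χ₂, N₂, hN₂, hN₂M, hχ₂⟩ := hext μ₂
    obtain ⟨M, hM, hMh⟩ := FreeGroup.exists_isPOpen_notMem p
      (w := (j h₀)⁻¹ * r (j h₀)) (fun h => hh₀ (inv_mul_eq_one.1 h).symm)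
    have hMn := hM.normal
    have := hM.finite_quotient
    set M₃ := (N₁ ⊓ N₂) ⊓ M with hM₃
    have hM₃p : IsPOpen p M₃ := (hN₁.inf hN₂).inf hM
    have hM₃₁ : M₃ ≤ N₁ := inf_le_left.trans inf_le_left
    have hM₃₂ : M₃ ≤ N₂ := inf_le_left.trans inf_le_right
    have hst₃ := hst M₃ hM₃p (hM₃₁.trans hN₁M)
    obtain ⟨a₁, ha₁, rfl⟩ : w₁ ∈ (fixedModulo j r M₃).map Ψ := hst₃ ▸ hw₁
    obtain ⟨a₂, ha₂, rfl⟩ : w₂ ∈ (fixedModulo j r M₃).map Ψ := hst₃ ▸ hw₂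
    rw [← hχ₁ a₁ (fixedModulo_mono hM₃₁ ha₁) hw₁] at h₁
    rw [← hχ₂ a₁ (fixedModulo_mono hM₃₂ ha₁) hw₁] at h₂
    rw [← hχ₂ a₂ (fixedModulo_mono hM₃₂ ha₂) hw₂] at h₃
    have hkill : ∀ l : FreeGroup (Fin 2) →* Multiplicative (ZMod p),
        (∀ a ∈ fixedModulo j r M₃, l a = 1) → l = 1 := by
      intro l hl
      obtain ⟨s, t, rfl⟩ := FreeGroup.exists_eq_zpow_mul_zpow χ₁ χ₂ h₁ h₂ h₃ l
      have hs := hl a₁ ha₁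
      rw [MonoidHom.mul_apply, MonoidHom.pow_apply, MonoidHom.pow_apply, h₂, one_pow,
        mul_one] at hs
      have hs' := pow_eq_one_of_pow_eq_one_zmod h₁ hs
      have ht := hl a₂ ha₂
      rw [MonoidHom.mul_apply, MonoidHom.pow_apply, MonoidHom.pow_apply, hs', one_mul] at ht
      have ht' := pow_eq_one_of_pow_eq_one_zmod h₃ ht
      refine DFunLike.ext _ _ fun a => ?_
      rw [MonoidHom.mul_apply, MonoidHom.pow_apply, MonoidHom.pow_apply, hs', ht', mul_one,
        MonoidHom.one_apply]
    set q := QuotientGroup.mk' M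
    let f := (q.comp j).prod (q.comp (r.comp j))
    have hG : IsPGroup p ((FreeGroup X ⧸ M) × (FreeGroup X ⧸ M)) := by
      obtain ⟨k, hk⟩ := isPGroup_iff_exists_pow_pow_eq_one.1 hM.isPGroup_quotient
      exact isPGroup_iff_pow_pow_eq_one.2 fun g => ⟨k, Prod.ext (hk g.1) (hk g.2)⟩
    obtain ⟨μ, hμ, hμB⟩ := (hG.to_subgroup f.range).exists_hom_ne_one
      (B := (fixedModulo j r M₃).map f.rangeRestrict) (by
        intro htop
        obtain ⟨a, ha, haw⟩ : f.rangeRestrict h₀ ∈ (fixedModulo j r M₃).map f.rangeRestrict :=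
          htop ▸ trivial
        have h1 : q (j a) = q (r (j a)) := QuotientGroup.eq.2
          ((mem_fixedModulo hMn).1 (fixedModulo_mono inf_le_right ha))
        have h2 : (q (j a), q (r (j a))) = (q (j h₀), q (r (j h₀))) := congrArg Subtype.val haw
        rw [Prod.mk.injEq] at h2
        exact hMh (QuotientGroup.eq.1 (h2.1.symm.trans (h1.trans h2.2))))
    refine hμ ?_
    have h1 := hkill (μ.comp f.rangeRestrict) fun a ha => hμB _ (Subgroup.mem_map_of_mem _ ha)
    refine DFunLike.ext _ _ ?_
    rintro ⟨_, a, rfl⟩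
    exact DFunLike.congr_fun h1 a
  · obtain ⟨χ', N, -, -, h⟩ := hext χ
    exact ⟨χ', fun a ha => h a (mem_fixedModulo_of_eq ha)⟩

end RankTwo

theorem IsFreeGroup.exists_zpowers_eq_top {G : Type*} [Group G] [IsFreeGroup G]
    (h : ∀ x y : G, Commute x y) : ∃ c : G, Subgroup.zpowers c = ⊤ := by
  classical
  have hsub : Subsingleton (Generators G) := by
    refine ⟨fun a b => by_contra fun hab => FreeGroup.not_commute_of_zero_one ?_⟩
    have h1 := (h (of a) (of b)).map
      (lift fun x : Generators G => if x = a then FreeGroup.of (0 : Fin 2) else FreeGroup.of 1)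
    rwa [lift_of, lift_of, if_pos rfl, if_neg (Ne.symm hab)] at h1
  obtain ⟨c, hc⟩ : ∃ c : G, ∀ a : Generators G, of a = c := by
    rcases isEmpty_or_nonempty (Generators G) with h | ⟨⟨a⟩⟩
    · exact ⟨1, fun a => h.elim a⟩
    · exact ⟨of a, fun b => by rw [Subsingleton.elim a b]⟩
  refine ⟨c, (Subgroup.eq_top_iff' _).2 fun x => ?_⟩
  let f : G →* Subgroup.zpowers c := lift fun _ => ⟨c, Subgroup.mem_zpowers c⟩
  have hf : (Subgroup.zpowers c).subtype.comp f = MonoidHom.id G :=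
    ext_hom fun a => by
      rw [MonoidHom.comp_apply, lift_of]
      exact (hc a).symm
  have hx : (f x : G) = x := DFunLike.congr_fun hf x
  exact hx ▸ (f x).2

theorem FreeGroup.exists_eq_zpowers {X : Type*} (K : Subgroup (FreeGroup X))
    (h : ∀ x ∈ K, ∀ y ∈ K, Commute x y) : ∃ c, K = Subgroup.zpowers c := by
  obtain ⟨⟨c, hc⟩, htop⟩ := IsFreeGroup.exists_zpowers_eq_top (G := K)
    fun x y => Subtype.ext (h x x.2 y y.2)
  refine ⟨c, le_antisymm (fun x hx => ?_) ((Subgroup.zpowers_le).2 hc)⟩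
  obtain ⟨k, hk⟩ : (⟨x, hx⟩ : K) ∈ Subgroup.zpowers ⟨c, hc⟩ := htop ▸ trivial
  exact ⟨k, congrArg Subtype.val hk⟩

theorem FreeGroup.exists_zpow_eq_of_commute {X : Type*} {g c : FreeGroup X} (h : Commute g c) :
    ∃ (e : FreeGroup X) (k m : ℤ), e ^ k = g ∧ e ^ m = c := by
  have hcomm : ∀ x ∈ ({g, c} : Set (FreeGroup X)), ∀ y ∈ ({g, c} : Set (FreeGroup X)),
      x * y = y * x := by
    rintro x (rfl | rfl) y (rfl | rfl)
    exacts [rfl, h, h.symm, rfl]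
  have := Subgroup.isMulCommutative_closure hcomm
  obtain ⟨e, he⟩ := FreeGroup.exists_eq_zpowers (Subgroup.closure {g, c})
    fun x hx y hy => congrArg Subtype.val (mul_comm' (⟨x, hx⟩ : Subgroup.closure {g, c}) ⟨y, hy⟩)
  obtain ⟨k, hk⟩ : g ∈ Subgroup.zpowers e := he ▸ Subgroup.subset_closure (Or.inl rfl)
  obtain ⟨m, hm⟩ : c ∈ Subgroup.zpowers e := he ▸ Subgroup.subset_closure (Or.inr rfl)
  exact ⟨e, k, m, hk, hm⟩

/-- The exponent sum of a generator. -/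
def FreeGroup.exponentSum (i : Fin 2) : FreeGroup (Fin 2) →* Multiplicative ℤ :=
  lift fun k => if k = i then Multiplicative.ofAdd 1 else 1

theorem FreeGroup.hom_eq_zpow_exponentSum {B : Type*} [CommGroup B] (f : FreeGroup (Fin 2) →* B)
    (a : FreeGroup (Fin 2)) :
    f a = f (of 0) ^ (exponentSum 0 a).toAdd * f (of 1) ^ (exponentSum 1 a).toAdd := by
  have h : f = ((zpowersHom B (f (of 0))).comp (exponentSum 0)) *
      ((zpowersHom B (f (of 1))).comp (exponentSum 1)) := by
    ext i
    fin_cases i <;> simp [exponentSum]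
  exact DFunLike.congr_fun h a

theorem FreeGroup.exists_hom_eq_ofAdd_one {c : FreeGroup (Fin 2)}
    (h : ∀ p : ℕ, p.Prime → ∃ χ : FreeGroup (Fin 2) →* Multiplicative (ZMod p), χ c ≠ 1) :
    ∃ τ : FreeGroup (Fin 2) →* Multiplicative ℤ, τ c = Multiplicative.ofAdd 1 := by
  have hcop : IsCoprime (exponentSum 0 c).toAdd (exponentSum 1 c).toAdd := by
    rw [Int.isCoprime_iff_gcd_eq_one]
    by_contra hne
    obtain ⟨p, hp, hdvd⟩ := Nat.exists_prime_and_dvd hne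
    obtain ⟨χ, hχ⟩ := h p hp
    refine hχ ?_
    have key : ∀ (u : Multiplicative (ZMod p)) {m : ℤ}, (p : ℤ) ∣ m → u ^ m = 1 := by
      intro u m hm
      refine Multiplicative.toAdd.injective ?_
      rw [toAdd_zpow, toAdd_one, zsmul_eq_mul, (ZMod.intCast_zmod_eq_zero_iff_dvd m p).2 hm,
        zero_mul]
    have hd := Int.natCast_dvd_natCast.2 hdvd
    rw [hom_eq_zpow_exponentSum χ c, key _ (hd.trans (Int.gcd_dvd_left _ _)),
      key _ (hd.trans (Int.gcd_dvd_right _ _)), one_mul]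
  obtain ⟨s, t, hst⟩ := hcop
  refine ⟨exponentSum 0 ^ s * exponentSum 1 ^ t, Multiplicative.toAdd.injective ?_⟩
  rw [MonoidHom.mul_apply, toAdd_mul, toAdd_ofAdd, ← hst]
  simp [MonoidHom.zpow_apply]

theorem IsPGroup.zpowers_eq_top_of_forall_pow_ne {p : ℕ} [Fact p.Prime] {G : Type*} [Group G]
    (hG : IsPGroup p G) {d x : G} (hd : Subgroup.zpowers d = ⊤) (hx : ∀ y : G, y ^ p ≠ x) :
    Subgroup.zpowers x = ⊤ := by
  obtain ⟨i, rfl⟩ : x ∈ Subgroup.zpowers d := hd ▸ trivial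
  have hi : ¬ (p : ℤ) ∣ i := by
    rintro ⟨k, rfl⟩
    exact hx (d ^ k) (by rw [← zpow_natCast, ← zpow_mul, mul_comm])
  obtain ⟨k, hk⟩ := isPGroup_iff_pow_pow_eq_one.1 hG d
  obtain ⟨s, t, hst⟩ : IsCoprime i ((p : ℤ) ^ k) :=
    (((Nat.prime_iff_prime_int.1 Fact.out).coprime_iff_not_dvd.2 hi).symm).pow_right
  rw [eq_top_iff, ← hd, Subgroup.zpowers_le]
  refine ⟨s, ?_⟩
  change (d ^ i) ^ s = d
  calc (d ^ i) ^ s = d ^ (s * i + t * (p : ℤ) ^ k) := by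
        rw [zpow_add, mul_comm s, zpow_mul, mul_comm t, zpow_mul d, ← Nat.cast_pow, zpow_natCast,
          hk, one_zpow, mul_one]
    _ = d := by rw [hst, zpow_one]

theorem exists_hom_zmod_ne_one {X : Type*} [Fintype X] {j : FreeGroup (Fin 2) →* FreeGroup X}
    {r : FreeGroup X →* FreeGroup X} (hj : Function.Injective j) (hr : ∀ x, r (r x) = r x)
    {h₀ : FreeGroup (Fin 2)} (hh₀ : r (j h₀) ≠ j h₀) {c : FreeGroup (Fin 2)} (hc : c ≠ 1)
    (hcr : r (j c) = j c) (hcent : ∀ g, Commute g c → g ∈ Subgroup.zpowers c)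
    {p : ℕ} (hp : p.Prime) : ∃ χ : FreeGroup (Fin 2) →* Multiplicative (ZMod p), χ c ≠ 1 := by
  have : Fact p.Prime := ⟨hp⟩
  obtain ⟨Q, _, _, Ψ, hQ, hΨ⟩ := FreeGroup.exists_hom_forall_pow_ne p hc hcent
  obtain ⟨Δ, hΔ, ⟨d, hd⟩, hχ⟩ := exists_cyclic_subgroup_of_ne hj hr hh₀ hQ Ψ
  have htop : Subgroup.zpowers (⟨Ψ c, hΔ c hcr⟩ : Δ) = ⊤ :=
    (hQ.to_subgroup Δ).zpowers_eq_top_of_forall_pow_ne hd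
      fun y hy => hΨ y (congrArg Subtype.val hy)
  obtain ⟨μ, hμ, -⟩ := (hQ.to_subgroup Δ).exists_hom_ne_one (B := ⊥) (by
    intro hbot
    have h1 : (⟨Ψ c, hΔ c hcr⟩ : Δ) ∈ (⊥ : Subgroup Δ) := hbot ▸ trivial
    exact hΨ 1 ((one_pow p).trans (congrArg Subtype.val (Subgroup.mem_bot.1 h1)).symm))
  obtain ⟨χ, hχc⟩ := hχ μ
  refine ⟨χ, fun h => hμ (DFunLike.ext _ _ fun x => ?_)⟩
  obtain ⟨k, rfl⟩ : x ∈ Subgroup.zpowers (⟨Ψ c, hΔ c hcr⟩ : Δ) := htop ▸ trivial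
  change μ (_ ^ k) = 1
  rw [map_zpow, ← hχc c hcr, h, one_zpow]

theorem commute_of_fixed {X : Type*} [Fintype X] {j : FreeGroup (Fin 2) →* FreeGroup X}
    {r : FreeGroup X →* FreeGroup X} (hj : Function.Injective j) (hr : ∀ x, r (r x) = r x)
    {h₀ : FreeGroup (Fin 2)} (hh₀ : r (j h₀) ≠ j h₀) {u v : FreeGroup (Fin 2)}
    (hu : r (j u) = j u) (hv : r (j v) = j v) : Commute u v := by
  by_contra hne
  have : Fact (Nat.Prime 2) := ⟨Nat.prime_two⟩
  obtain ⟨M, hM, hMw⟩ := FreeGroup.exists_isPOpen_notMem 2 (w := j ⁅u, v⁆) (by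
    rw [Ne, map_eq_one_iff j hj, commutatorElement_eq_one_iff_commute]
    exact hne)
  have := hM.normal
  have := hM.finite_quotient
  obtain ⟨Δ, hΔ, ⟨d, hd⟩, -⟩ := exists_cyclic_subgroup_of_ne hj hr hh₀ hM.isPGroup_quotient
    ((QuotientGroup.mk' M).comp j)
  obtain ⟨k, hk⟩ : (⟨_, hΔ u hu⟩ : Δ) ∈ Subgroup.zpowers d := hd ▸ trivial
  obtain ⟨l, hl⟩ : (⟨_, hΔ v hv⟩ : Δ) ∈ Subgroup.zpowers d := hd ▸ trivial
  refine hMw ((QuotientGroup.eq_one_iff _).1 ?_)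
  change (QuotientGroup.mk' M).comp j ⁅u, v⁆ = 1
  rw [map_commutatorElement, commutatorElement_eq_one_iff_commute]
  have h1 := (Commute.refl d).zpow_zpow k l
  have h2 : d ^ k = _ := hk
  have h3 : d ^ l = _ := hl
  rw [h2, h3] at h1
  exact h1.map Δ.subtype

/-- The elements of a free group of rank two fixed by a retraction form a retract. -/
theorem exists_retraction_fixed {X : Type*} [Fintype X] {j : FreeGroup (Fin 2) →* FreeGroup X}
    {r : FreeGroup X →* FreeGroup X} (hj : Function.Injective j) (hr : ∀ x, r (r x) = r x) :
    ∃ ρ : FreeGroup (Fin 2) →* FreeGroup (Fin 2),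
      (∀ a, r (j (ρ a)) = j (ρ a)) ∧ ∀ a, r (j a) = j a → ρ a = a := by
  by_cases hall : ∀ a, r (j a) = j a
  · exact ⟨MonoidHom.id _, hall, fun _ _ => rfl⟩
  push Not at hall
  obtain ⟨h₀, hh₀⟩ := hall
  obtain ⟨c, hc⟩ := FreeGroup.exists_eq_zpowers ((r.comp j).eqLocus j)
    fun u hu v hv => commute_of_fixed hj hr hh₀ hu hv
  have hmem : ∀ a, r (j a) = j a ↔ a ∈ Subgroup.zpowers c := fun a => by
    rw [← hc]
    rfl
  have hcr := (hmem c).2 (Subgroup.mem_zpowers c)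
  by_cases hc1 : c = 1
  · refine ⟨1, fun a => by simp, fun a ha => ?_⟩
    rw [hmem, hc1, Subgroup.zpowers_one_eq_bot, Subgroup.mem_bot] at ha
    exact ha.symm
  have hcent : ∀ g, Commute g c → g ∈ Subgroup.zpowers c := by
    intro g hg
    obtain ⟨e, k, m, rfl, rfl⟩ := FreeGroup.exists_zpow_eq_of_commute hg
    have hm : m ≠ 0 := by
      rintro rfl
      exact hc1 (zpow_zero e)
    rw [map_zpow, map_zpow, zpow_left_inj hm] at hcr
    exact Subgroup.zpow_mem _ ((hmem e).1 hcr) k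
  obtain ⟨τ, hτ⟩ := FreeGroup.exists_hom_eq_ofAdd_one
    fun p hp => exists_hom_zmod_ne_one hj hr hh₀ hc1 hcr hcent hp
  refine ⟨(zpowersHom _ c).comp τ, fun a => (hmem _).2 ⟨_, rfl⟩, fun a ha => ?_⟩
  obtain ⟨k, rfl⟩ := (hmem a).1 ha
  change zpowersHom _ c (τ (c ^ k)) = c ^ k
  rw [map_zpow, map_zpow, hτ, zpowersHom_apply, toAdd_ofAdd, zpow_one]

theorem retract_inter_rank_two {n : ℕ} (hn : 2 ≤ n)
    (H R : Subgroup (FreeGroup (Fin n))) (hH : HasFreeRank H 2) (hR : IsRetract R) :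
    IsRetract ((H ⊓ R).subgroupOf H) := by
  obtain ⟨j, hj, rfl⟩ := hH
  obtain ⟨r, rfl, hrR⟩ := hR
  have hr : ∀ x, r (r x) = r x := fun x => hrR _ ⟨x, rfl⟩
  obtain ⟨ρ, hρ, hρid⟩ := exists_retraction_fixed hj hr
  let e := MonoidHom.ofInjective hj
  refine ⟨(e.toMonoidHom.comp ρ).comp e.symm.toMonoidHom, ?_, ?_⟩
  · ext x
    rw [Subgroup.mem_subgroupOf]
    constructor
    · rintro ⟨y, rfl⟩
      exact ⟨⟨_, rfl⟩, j (ρ (e.symm y)), hρ _⟩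
    · rintro ⟨-, y, hy⟩
      obtain ⟨a, rfl⟩ := e.surjective x
      have ha : r (j a) = j a := by
        rw [show j a = r y from hy.symm, hr]
      exact ⟨e a, by simp [hρid a ha]⟩
  · intro x hx
    obtain ⟨a, rfl⟩ := e.surjective x
    obtain ⟨-, y, hy⟩ := Subgroup.mem_subgroupOf.1 hx
    have ha : r (j a) = j a := by
      rw [show j a = r y from hy.symm, hr]
    simp [hρid a ha]
end

section
/- If a subgroup H of F_n is contained in the union of a family of retracts of F_n, then H is contained in one of those retracts. -/
section PingPong

open Finset

variable {ι : Type*} [Fintype ι] [DecidableEq ι]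

/-- The square-zero endomorphism of `ℤ^ι` sending `v` to `(∑ j ≠ i, v j) • e i`. -/
def sumOthers (i : ι) : Module.End ℤ (ι → ℤ) :=
  (LinearMap.single ℤ (fun _ : ι => ℤ) i).comp (∑ j ∈ univ.erase i, LinearMap.proj j)

theorem sumOthers_apply (i : ι) (v : ι → ℤ) :
    sumOthers i v = Pi.single i (∑ j ∈ univ.erase i, v j) := by
  simp [sumOthers]

theorem sumOthers_mul_self (i : ι) : sumOthers i * sumOthers i = 0 := by
  ext v k
  rw [LinearMap.comp_apply, LinearMap.comp_apply, Module.End.mul_apply,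
    sumOthers_apply i (sumOthers i _)]
  have : ∑ j ∈ univ.erase i, sumOthers i ((LinearMap.single ℤ (fun _ : ι => ℤ) v) 1) j = 0 := by
    refine sum_eq_zero fun j hj => ?_
    rw [sumOthers_apply, Pi.single_eq_of_ne (ne_of_mem_erase hj)]
  rw [this, Pi.single_zero]
  rfl

/-- The one-parameter group `k ↦ 1 + 8 k N` of transvections attached to `N = sumOthers i`. -/
def transvectionHom (i : ι) : Multiplicative ℤ →* (Module.End ℤ (ι → ℤ))ˣ :=
  MonoidHom.toHomUnits
    { toFun := fun k => 1 + (8 * k.toAdd) • sumOthers i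
      map_one' := by simp
      map_mul' := fun k l => by
        simp only [toAdd_mul, mul_add, add_mul, one_mul, mul_one, smul_mul_smul_comm,
          sumOthers_mul_self, smul_zero, add_smul]
        abel }

theorem transvectionHom_zpow_smul (i : ι) (k : ℤ) (v : ι → ℤ) :
    transvectionHom i (Multiplicative.ofAdd 1) ^ k • v =
      v + Pi.single i (8 * k * ∑ j ∈ univ.erase i, v j) := by
  rw [← map_zpow, ← ofAdd_zsmul, smul_eq_mul, mul_one, Units.smul_def, Module.End.smul_def]
  ext l
  simp [transvectionHom, sumOthers_apply, Pi.single_apply, mul_assoc]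

/-- The vectors whose `i`-th coordinate is at least twice the sum of the others in absolute value. -/
def dominated (i : ι) : Set (ι → ℤ) :=
  {v | v i ≠ 0 ∧ 2 * ∑ j ∈ univ.erase i, |v j| ≤ |v i|}

theorem abs_le_sum_erase (v : ι → ℤ) {i j : ι} (h : j ≠ i) :
    |v j| ≤ ∑ l ∈ univ.erase i, |v l| :=
  single_le_sum (f := fun l => |v l|) (fun _ _ => abs_nonneg _) (by simp [h])

theorem disjoint_dominated {i j : ι} (h : i ≠ j) : Disjoint (dominated i) (dominated j) := by
  refine Set.disjoint_left.2 fun v hi hj => ?_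
  have h₁ := abs_le_sum_erase v h
  have h₂ := abs_le_sum_erase v h.symm
  have h₃ := abs_pos.2 hi.1
  have := hi.2
  have := hj.2
  omega

theorem add_single_mem_dominated {i j : ι} (h : i ≠ j) {k : ℤ} (hk : k ≠ 0) {v : ι → ℤ}
    (hv : v ∈ dominated j) :
    v + Pi.single i (8 * k * ∑ l ∈ univ.erase i, v l) ∈ dominated i := by
  obtain ⟨h₀, h₁⟩ := hv
  have hvi := abs_le_sum_erase v h
  set s := ∑ l ∈ univ.erase i, v l with hs
  set t := ∑ l ∈ univ.erase j, |v l| with ht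
  have hj : j ∈ univ.erase i := by simp [h.symm]
  have hi : i ∈ univ.erase j := by simp [h]
  have hsub : ∑ l ∈ (univ.erase i).erase j, |v l| ≤ t := by
    refine sum_le_sum_of_subset_of_nonneg ?_ fun _ _ _ => abs_nonneg _
    rw [erase_right_comm]
    exact erase_subset _ _
  have hs' : |s - v j| ≤ t := by
    rw [hs, ← add_sum_erase _ _ hj, add_sub_cancel_left]
    exact (abs_sum_le_sum_abs _ _).trans hsub
  have hother : ∑ l ∈ univ.erase i, |v l| ≤ |v j| + t := by
    rw [← add_sum_erase _ _ hj]
    gcongr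
  have hsum : ∑ l ∈ univ.erase i, |(v + Pi.single i (8 * k * s) : ι → ℤ) l| =
      ∑ l ∈ univ.erase i, |v l| := by
    refine sum_congr rfl fun l hl => ?_
    simp [Pi.single_eq_of_ne (ne_of_mem_erase hl)]
  have hpos := abs_pos.2 h₀
  have hsabs : |v j| ≤ |s| + |s - v j| := by
    have := abs_sub_abs_le_abs_sub (v j) s
    rw [abs_sub_comm] at this
    omega
  have hks : |s| ≤ |k * s| := by
    rw [abs_mul]
    exact le_mul_of_one_le_left (abs_nonneg _) (Int.one_le_abs hk)
  have hbig : 8 * |k * s| ≤ |v i + 8 * k * s| + |v i| := by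
    have := abs_sub (v i + 8 * k * s) (v i)
    rw [add_sub_cancel_left, mul_assoc, abs_mul] at this
    simpa [mul_assoc] using this
  have key : 2 * (|v j| + t) ≤ |v i + 8 * k * s| := by omega
  refine ⟨?_, ?_⟩
  · rw [Pi.add_apply, Pi.single_eq_same, ← abs_pos]
    omega
  · rw [hsum, Pi.add_apply, Pi.single_eq_same]
    omega

theorem lift_transvection_injective [Nontrivial ι] :
    Function.Injective
      (FreeGroup.lift fun i : ι => transvectionHom i (Multiplicative.ofAdd 1)) := by
  have hfactor : (FreeGroup.lift fun i : ι => transvectionHom i (Multiplicative.ofAdd 1)) =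
      (Monoid.CoprodI.lift fun i => FreeGroup.lift fun _ : Unit =>
        transvectionHom i (Multiplicative.ofAdd 1)).comp
          (@freeGroupEquivCoprodI ι).toMonoidHom := by
    ext1 i
    simp
  rw [hfactor, MonoidHom.coe_comp]
  refine Function.Injective.comp ?_ (MulEquiv.injective freeGroupEquivCoprodI)
  refine Monoid.CoprodI.lift_injective_of_ping_pong _ ?_ dominated ?_ ?_ ?_
  · inhabit ι
    refine Or.inr ⟨default, ?_⟩
    rw [FreeGroup.freeGroupUnitEquivInt.cardinal_eq, Cardinal.mk_denumerable]
    exact Cardinal.natCast_le_aleph0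
  · intro i
    refine ⟨Pi.single i 1, by simp, ?_⟩
    rw [sum_eq_zero]
    · simp
    · intro j hj
      simp [Pi.single_eq_of_ne (ne_of_mem_erase hj)]
  · exact fun i j h => disjoint_dominated h
  · intro i j hij
    refine FreeGroup.freeGroupUnitEquivInt.forall_congr_left.mpr fun k hk => ?_
    have hk0 : k ≠ 0 := by
      rintro rfl
      exact hk (by simp [FreeGroup.freeGroupUnitEquivInt])
    rintro _ ⟨v, hv, rfl⟩
    change FreeGroup.lift (fun _ => _) (FreeGroup.of () ^ k) • v ∈ _
    rw [map_zpow, FreeGroup.lift_apply_of, transvectionHom_zpow_smul]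
    exact add_single_mem_dominated hij hk0 hv

/-- A free group of finite rank at least two embeds in `GL ι ℤ`, with image consisting of matrices
congruent to the identity modulo `8`. -/
theorem exists_faithful_congruence_rep [Nontrivial ι] :
    ∃ ρ : FreeGroup ι →* Matrix ι ι ℤ, Function.Injective ρ ∧
      ∀ g, ∃ B : Matrix ι ι ℤ, ρ g = 1 + (8 : ℤ) • B := by
  let ρ : FreeGroup ι →* Matrix ι ι ℤ :=
    (LinearMap.toMatrixAlgEquiv' (R := ℤ) (n := ι)).toMulEquiv.toMonoidHom.comp
      ((Units.coeHom _).comp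
        (FreeGroup.lift fun i : ι => transvectionHom i (Multiplicative.ofAdd 1)))
  refine ⟨ρ, ?_, fun g => ?_⟩
  · exact (LinearMap.toMatrixAlgEquiv' (R := ℤ) (n := ι)).injective.comp
      (Units.val_injective.comp lift_transvection_injective)
  · have hgen (k : ℤ) (i : ι) : ∃ B : Matrix ι ι ℤ, ρ (FreeGroup.of i ^ k) = 1 + (8 : ℤ) • B := by
      refine ⟨k • LinearMap.toMatrixAlgEquiv' (sumOthers i), ?_⟩
      have : ρ (FreeGroup.of i ^ k) = LinearMap.toMatrixAlgEquiv'
          (((transvectionHom i (Multiplicative.ofAdd 1) ^ k : (Module.End ℤ (ι → ℤ))ˣ)) :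
            Module.End ℤ (ι → ℤ)) := by
        simp [ρ]
      rw [this, ← map_zpow, ← ofAdd_zsmul]
      simp [transvectionHom, mul_smul, -zsmul_eq_mul]
    induction g using FreeGroup.induction_on with
    | C1 => exact ⟨0, by simp⟩
    | of i => simpa using hgen 1 i
    | inv_of i _ => simpa using hgen (-1) i
    | mul x y hx hy =>
      obtain ⟨B, hB⟩ := hx
      obtain ⟨C, hC⟩ := hy
      refine ⟨B + C + (8 : ℤ) • (B * C), ?_⟩
      rw [map_mul, hB, hC]
      simp only [add_mul, mul_add, one_mul, mul_one, smul_mul_smul_comm, smul_add, smul_smul]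
      abel

end PingPong

section Hopf

theorem Matrix.eq_of_forall_map_intCast_eq {ι : Type*} {A B : Matrix ι ι ℤ}
    (h : ∀ k : ℕ, A.map (Int.cast : ℤ → ZMod (8 ^ k)) = B.map Int.cast) : A = B := by
  ext i j
  obtain ⟨k, hk⟩ := pow_unbounded_of_one_lt (A i j - B i j).natAbs (by norm_num : 1 < 8)
  have hij : ((A i j : ℤ) : ZMod (8 ^ k)) = (B i j : ℤ) := congrFun (congrFun (h k) i) j
  have hdvd := (ZMod.intCast_eq_intCast_iff_dvd_sub _ _ _).1 hij.symm
  have := Int.eq_zero_of_abs_lt_dvd hdvd (by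
    rw [Int.abs_eq_natAbs]
    exact_mod_cast hk)
  omega

/-- Free groups of finite rank are Hopfian. -/
theorem FreeGroup.injective_of_surjective_s4 {ι : Type*} [Finite ι] [Nontrivial ι]
    (ψ : FreeGroup ι →* FreeGroup ι) (hψ : Function.Surjective ψ) : Function.Injective ψ := by
  classical
  have := Fintype.ofFinite ι
  obtain ⟨ρ, hρ, -⟩ := exists_faithful_congruence_rep (ι := ι)
  refine (injective_iff_map_eq_one ψ).2 fun g hg => hρ ?_
  rw [_root_.map_one]
  refine Matrix.eq_of_forall_map_intCast_eq fun k => ?_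
  let ρk : FreeGroup ι →* (Matrix ι ι (ZMod (8 ^ k)))ˣ :=
    MonoidHom.toHomUnits ((Int.castRingHom (ZMod (8 ^ k))).mapMatrix.toMonoidHom.comp ρ)
  have : Finite (FreeGroup ι →* (Matrix ι ι (ZMod (8 ^ k)))ˣ) :=
    Finite.of_equiv _ FreeGroup.lift
  have hinj : Function.Injective
      fun χ : FreeGroup ι →* (Matrix ι ι (ZMod (8 ^ k)))ˣ => χ.comp ψ :=
    fun χ χ' h => (MonoidHom.cancel_right hψ).1 h
  obtain ⟨χ, hχ⟩ := Finite.surjective_of_injective hinj ρk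
  have h1 : ρk g = 1 := by
    rw [← hχ, MonoidHom.comp_apply, hg, _root_.map_one]
  have h2 := congrArg Units.val h1
  simpa [ρk] using h2

theorem FreeGroup.isCyclic_of_subsingleton (X : Type*) [Subsingleton X] :
    IsCyclic (FreeGroup X) := by
  cases isEmpty_or_nonempty X
  · infer_instance
  · have : Unique X := uniqueOfSubsingleton (Classical.arbitrary X)
    infer_instance

/-- Two elements of a free group that do not commute freely generate a free subgroup. -/
theorem FreeGroup.lift_injective_of_not_commute {α : Type*} {x y : FreeGroup α}
    (h : ¬ Commute x y) : Function.Injective (FreeGroup.lift ![x, y]) := by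
  classical
  set φ := FreeGroup.lift ![x, y] with hφ
  let e : φ.range ≃* FreeGroup (IsFreeGroup.Generators φ.range) :=
    IsFreeGroup.toFreeGroup φ.range
  have hnt : Nontrivial (IsFreeGroup.Generators φ.range) := by
    by_contra hX
    rw [not_nontrivial_iff_subsingleton] at hX
    have := FreeGroup.isCyclic_of_subsingleton (IsFreeGroup.Generators φ.range)
    have hcomm : ∀ a b : FreeGroup (IsFreeGroup.Generators φ.range), a * b = b * a :=
      fun a b => (IsCyclic.isMulCommutative (α := FreeGroup _)).is_comm.comm a b
    let a : φ.range := ⟨x, FreeGroup.of 0, by simp [hφ]⟩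
    let b : φ.range := ⟨y, FreeGroup.of 1, by simp [hφ]⟩
    have hab : a * b = b * a := e.injective (by rw [_root_.map_mul, _root_.map_mul, hcomm])
    exact h (congrArg Subtype.val hab)
  obtain ⟨u, v, huv⟩ := exists_pair_ne (IsFreeGroup.Generators φ.range)
  let s : IsFreeGroup.Generators φ.range → Fin 2 := fun z => if z = u then 0 else 1
  have hs : Function.Surjective s := fun i => by
    fin_cases i
    · exact ⟨u, by simp [s]⟩
    · exact ⟨v, by simp [s, huv.symm]⟩
  let ψ : FreeGroup (Fin 2) →* FreeGroup (Fin 2) :=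
    (FreeGroup.map s).comp (e.toMonoidHom.comp φ.rangeRestrict)
  have hψ : Function.Surjective ψ :=
    (FreeGroup.map_surjective hs).comp (e.surjective.comp φ.rangeRestrict_surjective)
  have hinj := FreeGroup.injective_of_surjective_s4 ψ hψ
  intro g g' hg
  apply hinj
  have : φ.rangeRestrict g = φ.rangeRestrict g' := Subtype.ext hg
  simp [ψ, this]

end Hopf

section Fox

open MonoidAlgebra in
/-- The representation of a free group by upper triangular matrices whose corner entry is the Fox
derivative with respect to the generator `i`. -/
noncomputable def foxRep {ι : Type*} [DecidableEq ι] (i : ι) :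
    FreeGroup ι →* (Matrix (Fin 2) (Fin 2) (MonoidAlgebra ℤ (FreeGroup ι)))ˣ :=
  FreeGroup.lift fun j =>
    { val := !![1, if j = i then 1 else 0; 0, of ℤ _ (FreeGroup.of j)]
      inv := !![1, if j = i then -of ℤ _ (FreeGroup.of j)⁻¹ else 0; 0, of ℤ _ (FreeGroup.of j)⁻¹]
      val_inv := by
        rw [Matrix.mul_fin_two, ← map_mul]
        split_ifs <;> simp [Matrix.one_fin_two, one_def]
      inv_val := by
        rw [Matrix.mul_fin_two, ← map_mul]
        split_ifs <;> simp [Matrix.one_fin_two, one_def, single_mul_single] }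

theorem foxRep_row {ι : Type*} [DecidableEq ι] (i : ι) (g : FreeGroup ι) :
    (foxRep i g).val 1 0 = 0 ∧ (foxRep i g).val 1 1 = MonoidAlgebra.of ℤ _ g := by
  induction g using FreeGroup.induction_on with
  | C1 => simp [MonoidAlgebra.one_def]
  | of j => simp [foxRep]
  | inv_of j _ => simp [foxRep]
  | mul x y hx hy =>
    simp [Matrix.mul_apply, hx.1, hx.2, hy.1, hy.2, MonoidAlgebra.single_mul_single]

open MonoidAlgebra in
/-- The elements `1 - x` of the group ring of a free group, with `x` ranging over the generators,
are right linearly independent. -/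
theorem MonoidAlgebra.eq_zero_of_sum_one_sub_of_mul_eq_zero {ι : Type*} [Fintype ι]
    (U : ι → MonoidAlgebra ℤ (FreeGroup ι))
    (h : ∑ j, (1 - of ℤ _ (FreeGroup.of j)) * U j = 0) (i : ι) : U i = 0 := by
  classical
  let Ψ := lift ℤ (Matrix (Fin 2) (Fin 2) (MonoidAlgebra ℤ (FreeGroup ι))) (FreeGroup ι)
    ((Units.coeHom _).comp (foxRep i))
  have hΨ (z : MonoidAlgebra ℤ (FreeGroup ι)) : Ψ z 1 0 = 0 ∧ Ψ z 1 1 = z := by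
    induction z using MonoidAlgebra.induction_linear with
    | zero => simp
    | add x y hx hy => simp [hx.1, hx.2, hy.1, hy.2]
    | single g n =>
      have := foxRep_row i g
      simp [Ψ, this.1, this.2, Matrix.smul_apply]
  have h01 : Ψ (∑ j, (1 - of ℤ _ (FreeGroup.of j)) * U j) 0 1 = 0 := by
    rw [h, map_zero, Matrix.zero_apply]
  have hgen (j : ι) : Ψ (of ℤ _ (FreeGroup.of j)) =
      !![1, if j = i then 1 else 0; 0, of ℤ _ (FreeGroup.of j)] := by
    simp [Ψ, foxRep]
  have hterm (j : ι) : Ψ ((1 - of ℤ _ (FreeGroup.of j)) * U j) 0 1 =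
      if j = i then - U i else 0 := by
    rw [map_mul, map_sub, map_one, hgen, Matrix.mul_apply, Fin.sum_univ_two, (hΨ _).2]
    split_ifs with hj
    · simp [hj]
    · simp
  rw [map_sum, Matrix.sum_apply] at h01
  simpa only [hterm, Finset.sum_ite_eq', Finset.mem_univ, if_true, neg_eq_zero] using h01

end Fox

section FreeExtension

open Monoid (Coprod)
open MonoidAlgebra

variable {G ι : Type*} [Group G]

/-- The total degree in the letters `ι` on the free product of `G` with the free monoid on `ι`. -/
def Monoid.Coprod.letterDegree : Coprod G (FreeMonoid ι) →* Multiplicative ℕ :=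
  Coprod.lift 1 (FreeMonoid.lift fun _ => Multiplicative.ofAdd 1)

open Monoid.Coprod (letterDegree)

/-- The action on `G` in which `G` acts by left multiplication and all letters act as the constant
map with value `1`. -/
def Monoid.Coprod.headAction : Coprod G (FreeMonoid ι) →* Function.End G :=
  Coprod.lift MulAction.toEndHom (FreeMonoid.lift fun _ _ => 1)

open Monoid.Coprod (headAction)

theorem letterDegree_inl (g : G) :
    letterDegree (Coprod.inl g : Coprod G (FreeMonoid ι)) = 1 := by
  simp [letterDegree]

theorem letterDegree_conj (g h : G) (m : Coprod G (FreeMonoid ι)) :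
    letterDegree (Coprod.inl g * m * Coprod.inl h) = letterDegree m := by
  simp [letterDegree_inl]

theorem headAction_inl (g h : G) :
    headAction (Coprod.inl g : Coprod G (FreeMonoid ι)) h = g * h := rfl

theorem headAction_mul (x y : Coprod G (FreeMonoid ι)) (h : G) :
    headAction (x * y) h = headAction x (headAction y h) := by
  rw [map_mul]
  rfl

theorem exists_headAction_eq_const (m : Coprod G (FreeMonoid ι)) (hm : letterDegree m ≠ 1) :
    ∃ a, ∀ h, headAction m h = a := by
  have hmul (x y : Coprod G (FreeMonoid ι))
      (hx : letterDegree x ≠ 1 → ∃ a, ∀ h, headAction x h = a)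
      (hy : letterDegree y ≠ 1 → ∃ a, ∀ h, headAction y h = a)
      (hxy : letterDegree (x * y) ≠ 1) : ∃ a, ∀ h, headAction (x * y) h = a := by
    by_cases h1 : letterDegree x = 1
    · obtain ⟨a, ha⟩ := hy (by simpa [h1] using hxy)
      exact ⟨headAction x a, fun h => by rw [headAction_mul, ha]⟩
    · obtain ⟨a, ha⟩ := hx h1
      exact ⟨a, fun h => by rw [headAction_mul, ha]⟩
  induction m using Coprod.induction_on with
  | inl g => exact absurd (letterDegree_inl g) hm
  | inr l =>
    induction l using FreeMonoid.inductionOn with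
    | one => simp at hm
    | of i => exact ⟨1, fun h => rfl⟩
    | mul x y hx hy =>
      rw [map_mul] at hm ⊢
      exact hmul _ _ hx hy hm
  | mul x y hx hy => exact hmul x y hx hy hm

/-- Conjugation by `G` acts freely on the elements of positive degree. -/
theorem eq_one_of_conj_eq_self {g : G} {m : Coprod G (FreeMonoid ι)} (hm : letterDegree m ≠ 1)
    (h : Coprod.inl g * m * Coprod.inl g⁻¹ = m) : g = 1 := by
  obtain ⟨a, ha⟩ := exists_headAction_eq_const m hm
  have h1 := congrFun (congrArg headAction h) 1
  simpa [headAction_mul, headAction_inl, ha] using h1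

theorem inl_conj_injective {m : Coprod G (FreeMonoid ι)} (hm : letterDegree m ≠ 1) :
    Function.Injective fun g : G => Coprod.inl g * m * Coprod.inl g⁻¹ := by
  intro g h hgh
  refine inv_mul_eq_one.1 (eq_one_of_conj_eq_self (g := h⁻¹ * g) hm ?_) |>.symm
  have : (Coprod.inl (h⁻¹ * g) * m * Coprod.inl (h⁻¹ * g)⁻¹ : Coprod G (FreeMonoid ι)) =
      Coprod.inl h⁻¹ * (Coprod.inl g * m * Coprod.inl g⁻¹) * Coprod.inl h := by
    simp only [mul_inv_rev, inv_inv, map_mul, mul_assoc]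
  rw [this]
  simp only at hgh
  rw [hgh]
  simp only [← mul_assoc, ← map_mul]
  simp [mul_assoc, ← map_mul]

/-- Embedding of the free factor `G` in the monoid ring of the free product. -/
noncomputable def ofInl (g : G) : MonoidAlgebra ℤ (Coprod G (FreeMonoid ι)) :=
  of ℤ _ (Coprod.inl g)

theorem ofInl_mul (g h : G) : (ofInl (g * h) : MonoidAlgebra ℤ (Coprod G (FreeMonoid ι))) =
    ofInl g * ofInl h := by
  simp only [ofInl, map_mul]

theorem ofInl_one : (ofInl (1 : G) : MonoidAlgebra ℤ (Coprod G (FreeMonoid ι))) = 1 := by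
  simp only [ofInl, map_one]

theorem coeff_ofInl_conj (g : G) (u : MonoidAlgebra ℤ (Coprod G (FreeMonoid ι)))
    (m : Coprod G (FreeMonoid ι)) :
    (ofInl g * u * ofInl g⁻¹).coeff m = u.coeff (Coprod.inl g⁻¹ * m * Coprod.inl g) := by
  classical
  induction u using MonoidAlgebra.induction_linear with
  | zero => simp
  | add x y hx hy => simp only [mul_add, add_mul, coeff_add, Finsupp.add_apply, hx, hy]
  | single k n =>
    have : Coprod.inl g * k * Coprod.inl g⁻¹ = m ↔ k = Coprod.inl g⁻¹ * m * Coprod.inl g := by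
      constructor
      · rintro rfl
        simp only [← mul_assoc, ← map_mul]
        simp [mul_assoc, ← map_mul]
      · rintro rfl
        simp only [← mul_assoc, ← map_mul]
        simp [mul_assoc, ← map_mul]
    simp [ofInl, single_mul_single, Finsupp.single_apply, this]

/-- The elements supported in degree at least `k`. -/
def degreeFiltration (G ι : Type*) [Group G] (k : ℕ) :
    AddSubgroup (MonoidAlgebra ℤ (Coprod G (FreeMonoid ι))) where
  carrier := {z | ∀ m, (letterDegree m).toAdd < k → z.coeff m = 0}
  zero_mem' := by simp
  add_mem' := fun hx hy m hm => by simp [hx m hm, hy m hm]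
  neg_mem' := fun hx m hm => by simp [hx m hm]

theorem mem_degreeFiltration {k : ℕ} {z : MonoidAlgebra ℤ (Coprod G (FreeMonoid ι))} :
    z ∈ degreeFiltration G ι k ↔ ∀ m, (letterDegree m).toAdd < k → z.coeff m = 0 := Iff.rfl

theorem mul_mem_degreeFiltration {j k : ℕ} {x y : MonoidAlgebra ℤ (Coprod G (FreeMonoid ι))}
    (hx : x ∈ degreeFiltration G ι j) (hy : y ∈ degreeFiltration G ι k) :
    x * y ∈ degreeFiltration G ι (j + k) := by
  classical
  intro m hm
  by_contra hne
  have hmem := MonoidAlgebra.support_coeff_mul_subset x y (Finsupp.mem_support_iff.2 hne)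
  obtain ⟨a, ha, b, hb, rfl⟩ := Finset.mem_mul.1 hmem
  have h1 : j ≤ (letterDegree a).toAdd := by
    by_contra h
    exact Finsupp.mem_support_iff.1 ha (hx a (by omega))
  have h2 : k ≤ (letterDegree b).toAdd := by
    by_contra h
    exact Finsupp.mem_support_iff.1 hb (hy b (by omega))
  rw [map_mul, toAdd_mul] at hm
  omega

theorem mem_degreeFiltration_zero (x : MonoidAlgebra ℤ (Coprod G (FreeMonoid ι))) :
    x ∈ degreeFiltration G ι 0 := by
  simp [mem_degreeFiltration]

theorem degreeFiltration_mono {j k : ℕ} (h : j ≤ k) {x : MonoidAlgebra ℤ (Coprod G (FreeMonoid ι))}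
    (hx : x ∈ degreeFiltration G ι k) : x ∈ degreeFiltration G ι j :=
  fun m hm => hx m (hm.trans_le h)

theorem mul_mem_degreeFiltration_left {k : ℕ} (x : MonoidAlgebra ℤ (Coprod G (FreeMonoid ι)))
    {y : MonoidAlgebra ℤ (Coprod G (FreeMonoid ι))} (hy : y ∈ degreeFiltration G ι k) :
    x * y ∈ degreeFiltration G ι k := by
  simpa using mul_mem_degreeFiltration (mem_degreeFiltration_zero x) hy

theorem mul_mem_degreeFiltration_right {k : ℕ} {x : MonoidAlgebra ℤ (Coprod G (FreeMonoid ι))}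
    (hx : x ∈ degreeFiltration G ι k) (y : MonoidAlgebra ℤ (Coprod G (FreeMonoid ι))) :
    x * y ∈ degreeFiltration G ι k := by
  simpa using mul_mem_degreeFiltration hx (mem_degreeFiltration_zero y)

/-- If `e 0` and `e 1` freely generate a free group, the operators `1 - (conjugation by e i)` on a
positive graded piece are linearly independent. -/
theorem mem_degreeFiltration_succ_of_sum_conj {e : Fin 2 → G}
    (he : Function.Injective (FreeGroup.lift e)) {j : ℕ} (hj : j ≠ 0)
    {u : Fin 2 → MonoidAlgebra ℤ (Coprod G (FreeMonoid ι))}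
    (hu : ∀ i, u i ∈ degreeFiltration G ι j)
    (h : ∑ i, (u i - ofInl (e i) * u i * ofInl (e i)⁻¹) ∈ degreeFiltration G ι (j + 1))
    (i : Fin 2) : u i ∈ degreeFiltration G ι (j + 1) := by
  intro m hm
  rcases Nat.lt_succ_iff_lt_or_eq.1 hm with hlt | heq
  · exact hu i m hlt
  have hm1 : letterDegree m ≠ 1 := fun h1 => hj (by rw [← heq, h1]; rfl)
  let orbit : FreeGroup (Fin 2) → Coprod G (FreeMonoid ι) :=
    fun g => Coprod.inl (FreeGroup.lift e g) * m * Coprod.inl (FreeGroup.lift e g)⁻¹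
  have horbit : Function.Injective orbit := (inl_conj_injective hm1).comp he
  let U : Fin 2 → MonoidAlgebra ℤ (FreeGroup (Fin 2)) :=
    fun i => ofCoeff ((u i).coeff.comapDomain orbit horbit.injOn)
  have hU (i g) : (U i).coeff g = (u i).coeff (orbit g) := rfl
  have hrel : ∑ i, (1 - of ℤ _ (FreeGroup.of i)) * U i = 0 := by
    ext g
    have hg := h (orbit g) (by
      rw [letterDegree_conj]
      exact hm)
    have hshift (i : Fin 2) : Coprod.inl (e i)⁻¹ * orbit g * Coprod.inl (e i) =
        orbit ((FreeGroup.of i)⁻¹ * g) := by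
      simp only [orbit, map_mul, map_inv, FreeGroup.lift_apply_of, mul_inv_rev, inv_inv, mul_assoc]
    simp only [Fin.sum_univ_two, coeff_add, coeff_sub, Finsupp.add_apply, Finsupp.sub_apply,
      coeff_ofInl_conj, hshift] at hg
    simpa [Fin.sum_univ_two, sub_mul, hU, sub_add_sub_comm] using hg
  have := congrArg (fun z : MonoidAlgebra ℤ (FreeGroup (Fin 2)) => z.coeff 1)
    (MonoidAlgebra.eq_zero_of_sum_one_sub_of_mul_eq_zero U hrel i)
  simpa [hU, orbit] using this

end FreeExtension

section Truncation

open Monoid (Coprod)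
open MonoidAlgebra
open Monoid.Coprod (letterDegree)

variable {G ι : Type*} [Group G]

/-- The two-sided ideal of elements supported in degree at least `k`. -/
def degreeIdeal (G ι : Type*) [Group G] (k : ℕ) :
    Ideal (MonoidAlgebra ℤ (Coprod G (FreeMonoid ι))) where
  __ := degreeFiltration G ι k
  smul_mem' := fun x _ hy => mul_mem_degreeFiltration_left x hy

instance (k : ℕ) : (degreeIdeal G ι k).IsTwoSided :=
  ⟨fun y hx => mul_mem_degreeFiltration_right hx y⟩

theorem mk_eq_mk_iff {k : ℕ} {x y : MonoidAlgebra ℤ (Coprod G (FreeMonoid ι))} :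
    Ideal.Quotient.mk (degreeIdeal G ι k) x = Ideal.Quotient.mk _ y ↔
      x - y ∈ degreeFiltration G ι k :=
  Ideal.Quotient.mk_eq_mk_iff_sub_mem x y

theorem ofInl_mul_ofInl_inv (g : G) :
    (ofInl g * ofInl g⁻¹ : MonoidAlgebra ℤ (Coprod G (FreeMonoid ι))) = 1 := by
  rw [← ofInl_mul, mul_inv_cancel, ofInl_one]

theorem ofInl_inv_mul_ofInl (g : G) :
    (ofInl g⁻¹ * ofInl g : MonoidAlgebra ℤ (Coprod G (FreeMonoid ι))) = 1 := by
  rw [← ofInl_mul, inv_mul_cancel, ofInl_one]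

theorem pow_mem_degreeFiltration {x : MonoidAlgebra ℤ (Coprod G (FreeMonoid ι))}
    (hx : x ∈ degreeFiltration G ι 1) (k : ℕ) : x ^ k ∈ degreeFiltration G ι k := by
  induction k with
  | zero => exact mem_degreeFiltration_zero _
  | succ k ih =>
    rw [pow_succ]
    exact mul_mem_degreeFiltration ih hx

theorem isUnit_mk_ofInl_add (k : ℕ) (g : G) {x : MonoidAlgebra ℤ (Coprod G (FreeMonoid ι))}
    (hx : x ∈ degreeFiltration G ι 1) :
    IsUnit (Ideal.Quotient.mk (degreeIdeal G ι k) (ofInl g + x)) := by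
  have hfactor : ofInl g + x = ofInl g * (1 + ofInl g⁻¹ * x) := by
    rw [mul_add, mul_one, ← mul_assoc, ofInl_mul_ofInl_inv, one_mul]
  have hg : IsUnit (ofInl g : MonoidAlgebra ℤ (Coprod G (FreeMonoid ι))) :=
    ⟨⟨_, _, ofInl_mul_ofInl_inv g, ofInl_inv_mul_ofInl g⟩, rfl⟩
  rw [hfactor, map_mul, map_add, map_one]
  refine (hg.map _).mul (IsNilpotent.isUnit_one_add ⟨k, ?_⟩)
  rw [← map_pow, Ideal.Quotient.eq_zero_iff_mem]
  exact pow_mem_degreeFiltration (mul_mem_degreeFiltration_left _ hx) k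

/-- The letter `i` as an element of the monoid ring. -/
noncomputable def ofLetter (G : Type*) [Group G] (i : ι) :
    MonoidAlgebra ℤ (Coprod G (FreeMonoid ι)) :=
  of ℤ _ (Coprod.inr (FreeMonoid.of i))

theorem ofLetter_mem_degreeFiltration (i : ι) : ofLetter G i ∈ degreeFiltration G ι 1 := by
  classical
  intro m hm
  have hne : Coprod.inr (FreeMonoid.of i) ≠ m := by
    rintro rfl
    simp [letterDegree] at hm
  simp [ofLetter, hne]

/-- The deformation of `r` over the truncated ring which adds the letter `i` to the image of the
`i`-th generator. -/
noncomputable def deformation (r : FreeGroup ι →* G) (k : ℕ) :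
    FreeGroup ι →* (MonoidAlgebra ℤ (Coprod G (FreeMonoid ι)) ⧸ degreeIdeal G ι k)ˣ :=
  FreeGroup.lift fun i =>
    (isUnit_mk_ofInl_add k (r (FreeGroup.of i)) (ofLetter_mem_degreeFiltration i)).unit

theorem deformation_of (r : FreeGroup ι →* G) (k : ℕ) (i : ι) :
    (deformation r k (FreeGroup.of i)).val =
      Ideal.Quotient.mk _ (ofInl (r (FreeGroup.of i)) + ofLetter G i) := by
  simp only [deformation, FreeGroup.lift_apply_of, IsUnit.unit_spec]

theorem exists_deformation_eq (r : FreeGroup ι →* G) (k : ℕ) (g : FreeGroup ι) :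
    ∃ z ∈ degreeFiltration G ι 1,
      (deformation r k g).val = Ideal.Quotient.mk _ (ofInl (r g) + z) := by
  induction g using FreeGroup.induction_on with
  | C1 => exact ⟨0, zero_mem _, by simp [ofInl_one]⟩
  | of i => exact ⟨_, ofLetter_mem_degreeFiltration i, deformation_of r k i⟩
  | inv_of i hi =>
    obtain ⟨z, hz, hzi⟩ := hi
    generalize FreeGroup.of i = x at *
    obtain ⟨s, hs⟩ := Ideal.Quotient.mk_surjective (deformation r k x⁻¹).val
    refine ⟨-(ofInl (r x)⁻¹ * z * s),
      neg_mem (mul_mem_degreeFiltration_right (mul_mem_degreeFiltration_left _ hz) s), ?_⟩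
    have hone : Ideal.Quotient.mk (degreeIdeal G ι k) ((ofInl (r x) + z) * s) =
        Ideal.Quotient.mk _ 1 := by
      rw [map_mul, hs, ← hzi, map_inv, Units.mul_inv, map_one]
    have hmul := mul_mem_degreeFiltration_left (ofInl (r x)⁻¹) (mk_eq_mk_iff.1 hone)
    rw [← hs, mk_eq_mk_iff]
    convert hmul using 1
    have hcancel := ofInl_inv_mul_ofInl (ι := ι) (r x)
    rw [map_inv, mul_sub, add_mul, mul_add, ← mul_assoc, hcancel, one_mul, mul_one, mul_assoc]
    abel
  | mul x y hx hy =>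
    obtain ⟨z, hz, hzx⟩ := hx
    obtain ⟨t, ht, hty⟩ := hy
    refine ⟨ofInl (r x) * t + z * (ofInl (r y) + t), add_mem (mul_mem_degreeFiltration_left _ ht)
      (mul_mem_degreeFiltration_right hz _), ?_⟩
    rw [map_mul, Units.val_mul, hzx, hty, ← map_mul, map_mul r, ofInl_mul]
    congr 1
    noncomm_ring

theorem not_commute_conj {p q : G} (h : ¬ Commute p q) :
    ¬ Commute (p * q * p⁻¹) (p * q * p⁻¹ * q⁻¹ * p⁻¹) := by
  intro hc
  have h1 : p * q * p⁻¹ * q⁻¹ * p⁻¹ = p * q * p⁻¹ * p⁻¹ * (p * q * p⁻¹)⁻¹ := by group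
  have h2 : Commute (p * q * p⁻¹) p⁻¹ := by
    rw [h1] at hc
    exact (Commute.conj_iff (p * q * p⁻¹)).1 (by rwa [mul_inv_cancel_right])
  have h3 : Commute (p * q * p⁻¹) (p * p * p⁻¹) := by simpa using h2
  exact h ((Commute.conj_iff p).1 h3).symm

theorem mem_succ_of_deformed_relation {p q : G}
    (hinj : Function.Injective (FreeGroup.lift ![p * q * p⁻¹, p * q * p⁻¹ * q⁻¹ * p⁻¹]))
    {j : ℕ} (hj : j ≠ 0) {α β : MonoidAlgebra ℤ (Coprod G (FreeMonoid ι))}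
    (hα : α ∈ degreeFiltration G ι j) (hβ : β ∈ degreeFiltration G ι j)
    (h : ofInl p * β + α * ofInl q - ofInl (p * q * p⁻¹ * q⁻¹) * (ofInl q * α + β * ofInl p) ∈
      degreeFiltration G ι (j + 1)) :
    α ∈ degreeFiltration G ι (j + 1) ∧ β ∈ degreeFiltration G ι (j + 1) := by
  have hl (g : G) (x : MonoidAlgebra ℤ (Coprod G (FreeMonoid ι))) :
      ofInl g⁻¹ * (ofInl g * x) = x := by
    rw [← mul_assoc, ofInl_inv_mul_ofInl, one_mul]
  have hr (g : G) (x : MonoidAlgebra ℤ (Coprod G (FreeMonoid ι))) :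
      ofInl g * (ofInl g⁻¹ * x) = x := by
    rw [← mul_assoc, ofInl_mul_ofInl_inv, one_mul]
  let u : Fin 2 → MonoidAlgebra ℤ (Coprod G (FreeMonoid ι)) :=
    ![α * ofInl p⁻¹, ofInl p * (β * ofInl (q⁻¹ * p⁻¹))]
  have hu : ∀ i, u i ∈ degreeFiltration G ι j := by
    intro i
    fin_cases i
    · exact mul_mem_degreeFiltration_right hα _
    · exact mul_mem_degreeFiltration_left _ (mul_mem_degreeFiltration_right hβ _)
  have hsucc := mem_degreeFiltration_succ_of_sum_conj hinj hj hu (by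
    convert mul_mem_degreeFiltration_right h (ofInl (q⁻¹ * p⁻¹)) using 1
    simp only [Fin.sum_univ_two, u, Matrix.cons_val_zero, Matrix.cons_val_one, mul_inv_rev,
      inv_inv, ofInl_mul, mul_add, add_mul, sub_mul, mul_assoc, hl, hr]
    abel)
  constructor
  · have := mul_mem_degreeFiltration_right (hsucc 0) (ofInl p)
    simpa [u, mul_assoc, ofInl_inv_mul_ofInl] using this
  · have := mul_mem_degreeFiltration_left (ofInl p⁻¹)
      (mul_mem_degreeFiltration_right (hsucc 1) (ofInl (p * q)))
    simpa [u, mul_assoc, ofInl_mul, hl, ofInl_inv_mul_ofInl] using this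

theorem exists_deformation_sub_mem {r : FreeGroup ι →* G} (k : ℕ) {a b c d : FreeGroup ι}
    (hac : r a = r c) (hbd : r b = r d) (hcomm : a * b * a⁻¹ * b⁻¹ = c * d * c⁻¹ * d⁻¹)
    (hinj : Function.Injective (FreeGroup.lift
      ![r c * r d * (r c)⁻¹, r c * r d * (r c)⁻¹ * (r d)⁻¹ * (r c)⁻¹]))
    (j : ℕ) (hj : j < k) :
    ∃ α ∈ degreeFiltration G ι (j + 1), ∃ β ∈ degreeFiltration G ι (j + 1),
      (deformation r k a).val = (deformation r k c).val + Ideal.Quotient.mk _ α ∧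
      (deformation r k b).val = (deformation r k d).val + Ideal.Quotient.mk _ β := by
  obtain ⟨γ, hγ, hc⟩ := exists_deformation_eq r k c
  obtain ⟨δ, hδ, hd⟩ := exists_deformation_eq r k d
  induction j with
  | zero =>
    obtain ⟨α, hα, ha⟩ := exists_deformation_eq r k a
    obtain ⟨β, hβ, hb⟩ := exists_deformation_eq r k b
    refine ⟨α - γ, sub_mem hα hγ, β - δ, sub_mem hβ hδ, ?_, ?_⟩
    · rw [ha, hc, hac, ← map_add]
      congr 1
      abel
    · rw [hb, hd, hbd, ← map_add]
      congr 1
      abel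
  | succ j ih =>
    obtain ⟨α, hα, β, hβ, ha, hb⟩ := ih (by omega)
    obtain ⟨ω, hω, hw⟩ := exists_deformation_eq r k (c * d * c⁻¹ * d⁻¹)
    have hrelc : (deformation r k c).val * (deformation r k d).val =
        (deformation r k (c * d * c⁻¹ * d⁻¹)).val *
          ((deformation r k d).val * (deformation r k c).val) := by
      simp only [← Units.val_mul, ← map_mul]
      congr 2
      group
    have hrela : (deformation r k a).val * (deformation r k b).val =
        (deformation r k (c * d * c⁻¹ * d⁻¹)).val *
          ((deformation r k b).val * (deformation r k a).val) := by
      rw [← hcomm]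
      simp only [← Units.val_mul, ← map_mul]
      congr 2
      group
    rw [ha, hb] at hrela
    rw [hc, hd, hw] at hrelc hrela
    simp only [← map_add, ← map_mul, mk_eq_mk_iff] at hrelc hrela
    have hdiff := degreeFiltration_mono (show j + 1 + 1 ≤ k by omega) (sub_mem hrela hrelc)
    have hα₀ := degreeFiltration_mono (show 1 ≤ j + 1 by omega) hα
    have hβ₀ := degreeFiltration_mono (show 1 ≤ j + 1 by omega) hβ
    have hr : r (c * d * c⁻¹ * d⁻¹) = r c * r d * (r c)⁻¹ * (r d)⁻¹ := by simp
    rw [hr] at hdiff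
    have hl {x y : MonoidAlgebra ℤ (Coprod G (FreeMonoid ι))}
        (hx : x ∈ degreeFiltration G ι 1) (hy : y ∈ degreeFiltration G ι (j + 1)) :
        x * y ∈ degreeFiltration G ι (j + 1 + 1) := by
      rw [add_comm (j + 1)]
      exact mul_mem_degreeFiltration hx hy
    have herr : γ * β + α * δ + α * β - ω * ((ofInl (r d) + δ + β) * α + β * (ofInl (r c) + γ)) -
        ofInl (r c * r d * (r c)⁻¹ * (r d)⁻¹) * (δ * α + β * γ + β * α) ∈
          degreeFiltration G ι (j + 1 + 1) := by
      refine sub_mem (sub_mem (add_mem (add_mem (hl hγ hβ) (mul_mem_degreeFiltration hα hδ))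
        (hl hα₀ hβ)) (hl hω (add_mem (mul_mem_degreeFiltration_left _ hα)
          (mul_mem_degreeFiltration_right hβ _)))) (mul_mem_degreeFiltration_left _ ?_)
      exact add_mem (add_mem (hl hδ hα) (mul_mem_degreeFiltration hβ hγ)) (hl hβ₀ hα)
    have hmain := mem_succ_of_deformed_relation hinj (Nat.succ_ne_zero j) hα hβ (by
      convert sub_mem hdiff herr using 1
      noncomm_ring)
    exact ⟨α, hmain.1, β, hmain.2, ha, hb⟩

end Truncation

section Specialization

open Monoid (Coprod)
open Monoid.Coprod (letterDegree)

variable {ι A : Type*} [Ring A]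

/-- The specialization of the monoid ring through a representation `ρ`, sending the letter `i` to
the difference of `ρ` at the generator `i` and at its image under `r`. -/
noncomputable def specialization (ρ : FreeGroup ι →* A) (r : FreeGroup ι →* FreeGroup ι) :
    MonoidAlgebra ℤ (Coprod (FreeGroup ι) (FreeMonoid ι)) →ₐ[ℤ] A :=
  MonoidAlgebra.lift ℤ A _ (Coprod.lift ρ
    (FreeMonoid.lift fun i => ρ (FreeGroup.of i) - ρ (r (FreeGroup.of i))))

theorem exists_specialization_of_eq {ρ : FreeGroup ι →* A} {N : ℕ}
    (hρ : ∀ g, ∃ b, ρ g = 1 + N • b) (r : FreeGroup ι →* FreeGroup ι)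
    (m : Coprod (FreeGroup ι) (FreeMonoid ι)) :
    ∃ b, specialization ρ r (MonoidAlgebra.of ℤ _ m) = N ^ (letterDegree m).toAdd • b := by
  have hmul (x y : Coprod (FreeGroup ι) (FreeMonoid ι))
      (hx : ∃ b, specialization ρ r (MonoidAlgebra.of ℤ _ x) = N ^ (letterDegree x).toAdd • b)
      (hy : ∃ b, specialization ρ r (MonoidAlgebra.of ℤ _ y) = N ^ (letterDegree y).toAdd • b) :
      ∃ b, specialization ρ r (MonoidAlgebra.of ℤ _ (x * y)) =
        N ^ (letterDegree (x * y)).toAdd • b := by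
    obtain ⟨b, hb⟩ := hx
    obtain ⟨c, hc⟩ := hy
    refine ⟨b * c, ?_⟩
    rw [map_mul, map_mul, hb, hc, smul_mul_smul_comm, map_mul, toAdd_mul, pow_add]
  induction m using Coprod.induction_on with
  | inl g => exact ⟨_, by rw [letterDegree_inl, toAdd_one, pow_zero, one_smul]⟩
  | inr l =>
    induction l using FreeMonoid.inductionOn with
    | one => exact ⟨_, by rw [map_one, map_one letterDegree, toAdd_one, pow_zero, one_smul]⟩
    | of i =>
      obtain ⟨b, hb⟩ := hρ (FreeGroup.of i)
      obtain ⟨c, hc⟩ := hρ (r (FreeGroup.of i))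
      refine ⟨b - c, ?_⟩
      simp [specialization, letterDegree, hb, hc, mul_sub]
    | mul x y hx hy =>
      rw [map_mul]
      exact hmul _ _ hx hy
  | mul x y hx hy => exact hmul x y hx hy

theorem specialization_eq_zero {ρ : FreeGroup ι →* A} {N k : ℕ}
    (hρ : ∀ g, ∃ b, ρ g = 1 + N • b) (hN : (N : A) ^ k = 0) (r : FreeGroup ι →* FreeGroup ι)
    {z : MonoidAlgebra ℤ (Coprod (FreeGroup ι) (FreeMonoid ι))}
    (hz : z ∈ degreeFiltration (FreeGroup ι) ι k) : specialization ρ r z = 0 := by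
  rw [specialization, MonoidAlgebra.lift_apply]
  refine Finset.sum_eq_zero fun m _ => ?_
  by_cases hm : (letterDegree m).toAdd < k
  · simp only
    rw [hz m hm, zero_smul]
  · obtain ⟨b, hb⟩ := exists_specialization_of_eq hρ r m
    rw [specialization, MonoidAlgebra.lift_of] at hb
    simp only
    rw [hb, nsmul_eq_mul, Nat.cast_pow, ← Nat.sub_add_cancel (not_lt.1 hm), pow_add, hN, mul_zero,
      zero_mul, smul_zero]

theorem eq_of_deformation_eq {ρ : FreeGroup ι →* A} {N k : ℕ}
    (hρ : ∀ g, ∃ b, ρ g = 1 + N • b) (hN : (N : A) ^ k = 0) {r : FreeGroup ι →* FreeGroup ι}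
    {a c : FreeGroup ι} (h : deformation r k a = deformation r k c) : ρ a = ρ c := by
  let f : MonoidAlgebra ℤ (Coprod (FreeGroup ι) (FreeMonoid ι)) ⧸
      degreeIdeal (FreeGroup ι) ι k →+* A :=
    Ideal.Quotient.lift _ (specialization ρ r).toRingHom
      fun z hz => specialization_eq_zero hρ hN r hz
  have hf : (f : _ →* A).comp ((Units.coeHom _).comp (deformation r k)) = ρ := by
    ext i
    simp only [MonoidHom.comp_apply, Units.coeHom_apply, deformation_of]
    simp [f, specialization, ofInl, ofLetter]
  rw [← hf]
  simp only [MonoidHom.comp_apply, h]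

end Specialization

section Commutators

theorem eq_and_eq_of_commutator_eq {ι : Type*} [Finite ι] [Nontrivial ι]
    {r : FreeGroup ι →* FreeGroup ι} {a b c d : FreeGroup ι} (hac : r a = r c) (hbd : r b = r d)
    (hcomm : a * b * a⁻¹ * b⁻¹ = c * d * c⁻¹ * d⁻¹) (hcd : ¬ Commute (r c) (r d)) :
    a = c ∧ b = d := by
  classical
  cases nonempty_fintype ι
  obtain ⟨ρ, hinj, hρ⟩ := exists_faithful_congruence_rep (ι := ι)
  have hdef (k : ℕ) : deformation r (k + 1) a = deformation r (k + 1) c ∧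
      deformation r (k + 1) b = deformation r (k + 1) d := by
    obtain ⟨α, hα, β, hβ, ha, hb⟩ := exists_deformation_sub_mem (k + 1) hac hbd hcomm
      (FreeGroup.lift_injective_of_not_commute (not_commute_conj hcd)) k (Nat.lt_succ_self k)
    rw [Ideal.Quotient.eq_zero_iff_mem.2 hα, add_zero] at ha
    rw [Ideal.Quotient.eq_zero_iff_mem.2 hβ, add_zero] at hb
    exact ⟨Units.ext ha, Units.ext hb⟩
  have hred (x y : FreeGroup ι)
      (h : ∀ k, deformation r (k + 1) x = deformation r (k + 1) y) : x = y := by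
    refine hinj (Matrix.eq_of_forall_map_intCast_eq fun k => ?_)
    cases k with
    | zero =>
      have : Subsingleton (ZMod (8 ^ 0)) := inferInstanceAs (Subsingleton (ZMod 1))
      exact Subsingleton.elim _ _
    | succ k =>
      let F := (Int.castRingHom (ZMod (8 ^ (k + 1)))).mapMatrix (m := ι)
      refine eq_of_deformation_eq (ρ := F.toMonoidHom.comp ρ) (N := 8) (k := k + 1) ?_ ?_ (h k)
      · intro g
        obtain ⟨B, hB⟩ := hρ g
        refine ⟨F B, ?_⟩
        change F (ρ g) = _
        rw [hB, map_add, map_one, map_zsmul, ← natCast_zsmul]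
        rfl
      · have : ((8 ^ (k + 1) : ℕ) : Matrix ι ι (ZMod (8 ^ (k + 1)))) = 0 := by
          rw [← Matrix.diagonal_natCast, ZMod.natCast_self]
          simp
        exact_mod_cast this
  exact ⟨hred a c fun k => (hdef k).1, hred b d fun k => (hdef k).2⟩

theorem not_commute_iff_commutator_ne_one {G : Type*} [Group G] {a b : G} :
    ¬ Commute a b ↔ a * b * a⁻¹ * b⁻¹ ≠ 1 := by
  rw [Ne, mul_inv_eq_one, mul_inv_eq_iff_eq_mul]
  exact Iff.rfl

/-- A retraction of a free group fixing a nontrivial commutator fixes both its entries. -/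
theorem fixed_of_commutator_fixed {ι : Type*} [Finite ι] [Nontrivial ι]
    {r : FreeGroup ι →* FreeGroup ι} (hr : ∀ x, r (r x) = r x) {a b : FreeGroup ι}
    (hab : ¬ Commute a b) (h : r (a * b * a⁻¹ * b⁻¹) = a * b * a⁻¹ * b⁻¹) :
    r a = a ∧ r b = b := by
  have hcomm : a * b * a⁻¹ * b⁻¹ = r a * r b * (r a)⁻¹ * (r b)⁻¹ := by simpa using h.symm
  obtain ⟨ha, hb⟩ := eq_and_eq_of_commutator_eq (hr a).symm (hr b).symm hcomm (by
    rw [hr, hr]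
    rwa [not_commute_iff_commutator_ne_one, ← hcomm, ← not_commute_iff_commutator_ne_one])
  exact ⟨ha.symm, hb.symm⟩

end Commutators

section Covering

theorem not_commute_commutator {α : Type*} {x y : FreeGroup α} (h : ¬ Commute x y) :
    ¬ Commute (x * y * x⁻¹ * y⁻¹) x := by
  intro hc
  let a : FreeGroup (Fin 2) := FreeGroup.of 0
  let b : FreeGroup (Fin 2) := FreeGroup.of 1
  have hinj := FreeGroup.lift_injective_of_not_commute h
  have hab : a * b * a⁻¹ * b⁻¹ * a = a * (a * b * a⁻¹ * b⁻¹) := hinj (by simpa [a, b] using hc.eq)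
  revert hab
  decide

theorem isNoetherianRing_adjoin_of_finite {A : Type*} [CommRing A] {s : Set A} (hs : s.Finite) :
    IsNoetherianRing (Algebra.adjoin ℤ s) :=
  isNoetherianRing_of_fg ⟨hs.toFinset, by rw [hs.coe_toFinset]⟩

/-- The matrix coefficients of all words evaluated along a family of homomorphisms lie in one
Noetherian ring of functions on the index set of the family. -/
theorem exists_noetherian_coefficient_ring {ι κ I G : Type*} [Finite ι] [Fintype κ]
    [DecidableEq κ] [Group G] (ρ : G →* Matrix κ κ ℤ) (r : I → FreeGroup ι →* G) :
    ∃ A : Subalgebra ℤ (I → ℤ), IsNoetherianRing A ∧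
      ∀ g s t, (fun i => ρ (r i g) s t) ∈ A := by
  let coeff (g : FreeGroup ι) (s t : κ) : I → ℤ := fun i => ρ (r i g) s t
  let S : Set (I → ℤ) := (Set.range fun p : ι × κ × κ => coeff (FreeGroup.of p.1) p.2.1 p.2.2) ∪
    Set.range fun p : ι × κ × κ => coeff (FreeGroup.of p.1)⁻¹ p.2.1 p.2.2
  have hS : S.Finite := (Set.finite_range _).union (Set.finite_range _)
  refine ⟨Algebra.adjoin ℤ S, isNoetherianRing_adjoin_of_finite hS, fun g => ?_⟩
  induction g using FreeGroup.induction_on with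
  | C1 =>
    intro s t
    simp only [map_one]
    exact algebraMap_mem (Algebra.adjoin ℤ S) ((1 : Matrix κ κ ℤ) s t)
  | of x => exact fun s t => Algebra.subset_adjoin (.inl ⟨(x, s, t), rfl⟩)
  | inv_of x _ => exact fun s t => Algebra.subset_adjoin (.inr ⟨(x, s, t), rfl⟩)
  | mul x y hx hy =>
    intro s t
    have hmul : (fun i => ρ (r i (x * y)) s t) = ∑ u, coeff x s u * coeff y u t := by
      ext i
      simp [coeff, Matrix.mul_apply]
    rw [hmul]
    exact sum_mem fun u _ => mul_mem (hx s u) (hy u t)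

/-- The ideal of functions in a function ring vanishing on a set of points. -/
def Subalgebra.vanishingIdeal {I : Type*} (A : Subalgebra ℤ (I → ℤ)) (Z : Set I) : Ideal A where
  carrier := {f | ∀ i ∈ Z, f.1 i = 0}
  zero_mem' := fun _ _ => rfl
  add_mem' := fun hf hg i hi => by simp [hf i hi, hg i hi]
  smul_mem' := fun c f hf i hi => by simp [hf i hi]

/-- A nonabelian subgroup of a free group contains an element such that any member of a given
family of retractions fixing this element fixes the whole subgroup. -/
theorem exists_mem_forall_fixed {ι I : Type*} [Finite ι] [Nontrivial ι]
    (r : I → FreeGroup ι →* FreeGroup ι) (hr : ∀ i x, r i (r i x) = r i x)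
    (H : Subgroup (FreeGroup ι)) (hH : ∃ a ∈ H, ∃ b ∈ H, ¬ Commute a b) :
    ∃ h ∈ H, ∀ i, r i h = h → ∀ g ∈ H, r i g = g := by
  classical
  cases nonempty_fintype ι
  obtain ⟨ρ, hρ, -⟩ := exists_faithful_congruence_rep (ι := ι)
  obtain ⟨A, hA, hcoeff⟩ := exists_noetherian_coefficient_ring ρ r
  let J (h : FreeGroup ι) : Ideal A := A.vanishingIdeal {i | r i h = h}
  obtain ⟨_, ⟨h, ⟨hhH, g₀, hg₀H, hhg₀⟩, rfl⟩, hmax⟩ := set_has_maximal_iff_noetherian.2 hA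
    (J '' {h | h ∈ H ∧ ∃ g ∈ H, ¬ Commute h g})
    (by obtain ⟨a, ha, b, hb, hab⟩ := hH; exact ⟨_, a, ⟨ha, b, hb, hab⟩, rfl⟩)
  have hfix (g : FreeGroup ι) (hgH : g ∈ H) (hhg : ¬ Commute h g) (i : I) (hi : r i h = h) :
      r i g = g := by
    let w := h * g * h⁻¹ * g⁻¹
    have hwH : w ∈ H := mul_mem (mul_mem (mul_mem hhH hgH) (inv_mem hhH)) (inv_mem hgH)
    have hw (j : I) (hj : r j w = w) : r j h = h ∧ r j g = g :=
      fixed_of_commutator_fixed (hr j) hhg hj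
    have hle : J h ≤ J w := fun f hf j hj => hf j (hw j hj).1
    have heq : J h = J w := by
      by_contra hne
      exact hmax _ ⟨w, ⟨hwH, h, hhH, not_commute_commutator hhg⟩, rfl⟩ (lt_of_le_of_ne hle hne)
    refine hρ (Matrix.ext fun s t => ?_)
    let f : A := ⟨_, sub_mem (hcoeff g s t) (algebraMap_mem A (ρ g s t))⟩
    have hf : f ∈ J h := by
      rw [heq]
      intro j hj
      simp [f, (hw j hj).2]
    simpa [f, sub_eq_zero] using hf i hi
  refine ⟨h, hhH, fun i hi g hgH => ?_⟩
  by_cases hhg : Commute h g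
  · have hmul : ¬ Commute h (g * g₀) := fun hc => hhg₀ (by
      simpa using hhg.inv_right.mul_right hc)
    have := hfix _ (mul_mem hgH hg₀H) hmul i hi
    rw [map_mul, hfix g₀ hg₀H hhg₀ i hi] at this
    exact mul_right_cancel this
  · exact hfix g hgH hhg i hi

theorem isCyclic_of_forall_commute {α : Type*} (H : Subgroup (FreeGroup α))
    (hH : ∀ a ∈ H, ∀ b ∈ H, Commute a b) : IsCyclic H := by
  let e := IsFreeGroup.toFreeGroup H
  have : Subsingleton (IsFreeGroup.Generators H) := by
    refine ⟨fun x y => ?_⟩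
    by_contra hxy
    have hc : FreeGroup.of x * FreeGroup.of y = FreeGroup.of y * FreeGroup.of x := by
      apply e.symm.injective
      rw [map_mul, map_mul]
      exact Subtype.ext (hH _ (e.symm _).2 _ (e.symm _).2)
    classical
    have := congrArg FreeGroup.toWord hc
    simp [FreeGroup.of, FreeGroup.mul_mk, FreeGroup.toWord_mk, FreeGroup.reduce, hxy,
      Ne.symm hxy] at this
  have := FreeGroup.isCyclic_of_subsingleton (IsFreeGroup.Generators H)
  exact isCyclic_of_surjective e.symm e.symm.surjective

end Covering

theorem le_retract_of_subset_iUnion {n : ℕ} (hn : 2 ≤ n) {ι : Type*}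
    (R : ι → Subgroup (FreeGroup (Fin n))) (hR : ∀ i, IsRetract (R i))
    (H : Subgroup (FreeGroup (Fin n)))
    (hcover : (H : Set (FreeGroup (Fin n))) ⊆ ⋃ i, (R i : Set (FreeGroup (Fin n)))) :
    ∃ i, H ≤ R i := by
  have : Nontrivial (Fin n) := Fin.nontrivial_iff_two_le.2 hn
  choose r hrange hfix using hR
  have hmem (i : ι) (x : FreeGroup (Fin n)) : r i x ∈ R i := hrange i ▸ ⟨x, rfl⟩
  by_cases hH : ∃ a ∈ H, ∃ b ∈ H, ¬ Commute a b
  · obtain ⟨h, hhH, hh⟩ := exists_mem_forall_fixed r (fun i x => hfix i _ (hmem i x)) H hH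
    obtain ⟨i, hi⟩ := Set.mem_iUnion.1 (hcover hhH)
    exact ⟨i, fun g hg => hh i (hfix i h hi) g hg ▸ hmem i g⟩
  · push Not at hH
    obtain ⟨z, hz⟩ := (isCyclic_of_forall_commute H hH).exists_generator
    obtain ⟨i, hi⟩ := Set.mem_iUnion.1 (hcover z.2)
    refine ⟨i, fun g hg => ?_⟩
    obtain ⟨k, hk⟩ := Subgroup.mem_zpowers_iff.1 (hz ⟨g, hg⟩)
    have : (z : FreeGroup (Fin n)) ^ k = g := congrArg Subtype.val hk
    exact this ▸ zpow_mem hi k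
end

section
/- For every n ≥ 2, every m ≥ 3 and every 1 ≤ k ≤ n−1, there exist a subgroup H of F_n of rank m and a retract R of F_n of rank k such that H ∩ R is not a retract of H. -/
namespace BergmanRetract

variable {G : Type*} [Group G]

/-- The element `a`, the element `b²`, and the elements `b⁻¹ a⁻ʲ b aʲ b` for `j ≥ 1`. -/
def generator (a b : G) : ℕ → G
  | 0 => a
  | 1 => b ^ 2
  | i + 2 => b⁻¹ * (a ^ (i + 1))⁻¹ * b * a ^ (i + 1) * b

/-- The element generating the cyclic part of the retract. -/
def root (a b : G) : G := b⁻¹ * a⁻¹ * b * b * a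

theorem map_generator {K : Type*} [Group K] (f : G →* K) (a b : G) (i : ℕ) :
    f (generator a b i) = generator (f a) (f b) i := by
  match i with
  | 0 => rfl
  | 1 => simp [generator]
  | i + 2 => simp [generator]

theorem map_root {K : Type*} [Group K] (f : G →* K) (a b : G) :
    f (root a b) = root (f a) (f b) := by
  simp [root]

theorem root_sq (a b : G) :
    root a b ^ 2 = generator a b 2 ^ 2 *
      ((generator a b 1)⁻¹ * (generator a b 0)⁻¹ * generator a b 1 * generator a b 0) := by
  simp only [generator, root, pow_two, zero_add, pow_one]
  group

/-- The action of the first generator on the fibres over `Option ℤ`: a labelled loop at `none` and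
a shift of the line. -/
def shiftPerm (c : ℕ → G) : Equiv.Perm (Option ℤ × G) where
  toFun
    | (none, g) => (none, c 0 * g)
    | (some j, g) => (some (j + 1), g)
  invFun
    | (none, g) => (none, (c 0)⁻¹ * g)
    | (some j, g) => (some (j - 1), g)
  left_inv := by rintro ⟨_ | j, g⟩ <;> simp
  right_inv := by rintro ⟨_ | j, g⟩ <;> simp

/-- The action of the second generator on the fibres over `Option ℤ`: it exchanges `none` with the
origin of the line and has a labelled loop at every other point of the line. -/
def loopPerm (c : ℕ → G) : Equiv.Perm (Option ℤ × G) where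
  toFun
    | (none, g) => (some 0, g)
    | (some j, g) => if j = 0 then (none, c 1 * g) else (some j, c (j.toNat + 1) * g)
  invFun
    | (none, g) => (some 0, (c 1)⁻¹ * g)
    | (some j, g) => if j = 0 then (none, g) else (some j, (c (j.toNat + 1))⁻¹ * g)
  left_inv := by
    rintro ⟨_ | j, g⟩
    · simp
    · by_cases hj : j = 0 <;> simp [hj]
  right_inv := by
    rintro ⟨_ | j, g⟩
    · simp
    · by_cases hj : j = 0 <;> simp [hj]

theorem shiftPerm_pow_some (c : ℕ → G) (i : ℕ) (j : ℤ) (g : G) :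
    (shiftPerm c ^ i) (some j, g) = (some (j + i), g) := by
  induction i with
  | zero => simp
  | succ i ih =>
    rw [pow_succ', Equiv.Perm.mul_apply, ih]
    simp [shiftPerm, add_assoc]

theorem generator_perm_apply (c : ℕ → G) (i : ℕ) (g : G) :
    generator (shiftPerm c) (loopPerm c) i (none, g) = (none, c i * g) := by
  match i with
  | 0 => rfl
  | 1 => simp [generator, pow_two, loopPerm]
  | i + 2 =>
    have h₁ : loopPerm c (none, g) = (some 0, g) := rfl
    have h₂ : loopPerm c (some ((0 : ℤ) + ((i + 1 : ℕ) : ℤ)), g) =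
        (some ((0 : ℤ) + ((i + 1 : ℕ) : ℤ)), c (i + 2) * g) := by
      have h : (0 : ℤ) + ((i + 1 : ℕ) : ℤ) ≠ 0 := by omega
      have h' : ((0 : ℤ) + ((i + 1 : ℕ) : ℤ)).toNat + 1 = i + 2 := by omega
      simp only [loopPerm, Equiv.coe_fn_mk, if_neg h, h']
    simp only [generator, Equiv.Perm.mul_apply]
    rw [h₁, shiftPerm_pow_some, h₂, Equiv.Perm.inv_eq_iff_eq, Equiv.Perm.inv_eq_iff_eq,
      ← shiftPerm_pow_some]
    rfl

theorem root_perm_apply (c : ℕ → G) (g : G) :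
    (root (shiftPerm c) (loopPerm c) (none, g)).1 = some 0 := by
  rfl

/-- The homomorphism from the free group of rank `m` onto the subgroup generated by the first `m`
elements `generator a b i`. -/
def generatorHom (m : ℕ) (a b : G) : FreeGroup (Fin m) →* G :=
  FreeGroup.lift fun i => generator a b i

theorem generator_mem_range {m i : ℕ} (hi : i < m) (a b : G) :
    generator a b i ∈ (generatorHom m a b).range :=
  ⟨FreeGroup.of ⟨i, hi⟩, by simp [generatorHom]⟩

theorem map_generatorHom {K : Type*} [Group K] (f : G →* K) (m : ℕ) (a b : G)
    (w : FreeGroup (Fin m)) : f (generatorHom m a b w) = generatorHom m (f a) (f b) w := by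
  have : f.comp (generatorHom m a b) = generatorHom m (f a) (f b) := by
    ext i
    simp [generatorHom, map_generator]
  exact DFunLike.congr_fun this w

/-- The standard generators of the free group of rank `m`, extended by `1` to all of `ℕ`. -/
def letter (m : ℕ) (i : ℕ) : FreeGroup (Fin m) :=
  if h : i < m then FreeGroup.of ⟨i, h⟩ else 1

theorem generatorHom_perm_apply (m : ℕ) (w g : FreeGroup (Fin m)) :
    generatorHom m (shiftPerm (letter m)) (loopPerm (letter m)) w (none, g) = (none, w * g) := by
  induction w using FreeGroup.induction_on generalizing g with
  | C1 => simp
  | of i => simp [generatorHom, generator_perm_apply, letter]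
  | inv_of i _ =>
    rw [map_inv, Equiv.Perm.inv_eq_iff_eq]
    simp [generatorHom, generator_perm_apply, letter]
  | mul x y hx hy => rw [map_mul, Equiv.Perm.mul_apply, hy, hx, mul_assoc]

section Permutations

variable {m : ℕ} {a b : G} {f : G →* Equiv.Perm (Option ℤ × FreeGroup (Fin m))}

theorem generatorHom_injective (ha : f a = shiftPerm (letter m)) (hb : f b = loopPerm (letter m)) :
    Function.Injective (generatorHom m a b) := by
  rw [injective_iff_map_eq_one]
  intro w hw
  have h := map_generatorHom f m a b w
  rw [hw, map_one, ha, hb] at h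
  have h' := generatorHom_perm_apply m w 1
  rw [← h] at h'
  simpa using h'.symm

theorem root_notMem_range (ha : f a = shiftPerm (letter m)) (hb : f b = loopPerm (letter m)) :
    root a b ∉ (generatorHom m a b).range := by
  rintro ⟨w, hw⟩
  have h := map_generatorHom f m a b w
  rw [hw, map_root, ha, hb] at h
  have h' := root_perm_apply (letter m) 1
  rw [h, generatorHom_perm_apply] at h'
  simp at h'

end Permutations

/-- If `H` contains the first three elements `generator a b i` but not `root a b`, and every element
of `H ⊓ R` is a power of `root a b`, then `H ⊓ R` is not a retract of `H`, as soon as some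
homomorphism to `ℤ` takes the value `1` at `root a b`. -/
theorem not_isRetract_inf {a b : G} {H R : Subgroup G} (hgen : ∀ i < 3, generator a b i ∈ H)
    (hroot : root a b ∈ R) (hmem : root a b ∉ H)
    (hpow : ∀ s ∈ H ⊓ R, s ∈ Subgroup.zpowers (root a b))
    (e : G →* Multiplicative ℤ) (he : e (root a b) = Multiplicative.ofAdd 1) :
    ¬ IsRetract ((H ⊓ R).subgroupOf H) := by
  rintro ⟨ρ, hρ, hfix⟩
  let x : H := ⟨_, hgen 0 (by norm_num)⟩
  let y : H := ⟨_, hgen 1 (by norm_num)⟩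
  let z : H := ⟨_, hgen 2 (by norm_num)⟩
  have hsq : ((z ^ 2 * (y⁻¹ * x⁻¹ * y * x) : H) : G) = root a b ^ 2 := (root_sq a b).symm
  have hfixed : ρ (z ^ 2 * (y⁻¹ * x⁻¹ * y * x)) = z ^ 2 * (y⁻¹ * x⁻¹ * y * x) := by
    apply hfix
    rw [Subgroup.mem_subgroupOf]
    exact ⟨SetLike.coe_mem _, hsq ▸ pow_mem hroot 2⟩
  have hz : ((ρ z : H) : G) ∈ H ⊓ R := by
    have : ρ z ∈ (H ⊓ R).subgroupOf H := hρ ▸ ⟨z, rfl⟩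
    exact Subgroup.mem_subgroupOf.mp this
  obtain ⟨j, hj⟩ := Subgroup.mem_zpowers_iff.mp (hpow _ hz)
  have hval : e (root a b) ^ 2 = e (ρ z : H) ^ 2 := by
    rw [← map_pow e, ← hsq, ← hfixed]
    simp
  rw [← hj, map_zpow, he] at hval
  have hj1 : j = 1 := by
    have := congrArg Multiplicative.toAdd hval
    simp at this
    omega
  rw [hj1, zpow_one] at hj
  exact hmem (hj ▸ hz.1)

end BergmanRetract

open BergmanRetract in
theorem bergman_negative_answer {n : ℕ} (hn : 2 ≤ n) (m : ℕ) (hm : 3 ≤ m)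
    (k : ℕ) (hk1 : 1 ≤ k) (hk2 : k ≤ n - 1) :
    ∃ H R : Subgroup (FreeGroup (Fin n)), HasFreeRank H m ∧ IsRetract R ∧
      HasFreeRank R k ∧ ¬ IsRetract ((H ⊓ R).subgroupOf H) := by
  let a : FreeGroup (Fin n) := FreeGroup.of ⟨0, by omega⟩
  let b : FreeGroup (Fin n) := FreeGroup.of ⟨1, by omega⟩
  let f : FreeGroup (Fin n) →* Equiv.Perm (Option ℤ × FreeGroup (Fin m)) :=
    FreeGroup.lift fun i =>
      if (i : ℕ) = 0 then shiftPerm (letter m)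
      else if (i : ℕ) = 1 then loopPerm (letter m) else 1
  have hfa : f a = shiftPerm (letter m) := by simp [f, a]
  have hfb : f b = loopPerm (letter m) := by simp [f, b]
  let θ : FreeGroup (Fin k) →* FreeGroup (Fin n) :=
    FreeGroup.lift fun i =>
      if (i : ℕ) = 0 then root a b else FreeGroup.of ⟨i + 1, by omega⟩
  let proj : FreeGroup (Fin n) →* FreeGroup (Fin k) :=
    FreeGroup.lift fun i => if (i : ℕ) = 0 then 1 else letter k (i - 1)
  have hproj (w) : proj (θ w) = w := by
    have : proj.comp θ = MonoidHom.id _ := by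
      ext i
      by_cases hi : (i : ℕ) = 0
      · have hi' : i = ⟨0, hk1⟩ := Fin.ext hi
        subst hi'
        simp [θ, proj, root, a, b, letter, Nat.pos_of_ne_zero (by omega : k ≠ 0)]
      · simp [θ, proj, hi, letter]
    exact DFunLike.congr_fun this w
  have hroot : root a b ∈ θ.range := ⟨FreeGroup.of ⟨0, hk1⟩, by simp [θ]⟩
  let π : FreeGroup (Fin n) →* FreeGroup (Fin n) :=
    FreeGroup.lift fun i => if (i : ℕ) ≤ 1 then FreeGroup.of i else 1
  have hπa : π a = a := by simp [π, a]
  have hπb : π b = b := by simp [π, b]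
  have hπθ (w) : π (θ w) ∈ Subgroup.zpowers (root a b) := by
    induction w using FreeGroup.induction_on with
    | C1 => simp
    | of i =>
      by_cases hi : (i : ℕ) = 0
      · simp [θ, hi, map_root, hπa, hπb]
      · simp [θ, π, hi]
    | inv_of i h => simpa using h
    | mul x y hx hy => simpa using mul_mem hx hy
  let e : FreeGroup (Fin n) →* Multiplicative ℤ :=
    FreeGroup.lift fun i => if (i : ℕ) = 1 then Multiplicative.ofAdd 1 else 1
  refine ⟨(generatorHom m a b).range, θ.range, ⟨_, generatorHom_injective hfa hfb, rfl⟩,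
    ⟨θ.comp proj, ?_, ?_⟩, ⟨θ, Function.LeftInverse.injective hproj, rfl⟩,
    not_isRetract_inf (fun i hi => generator_mem_range (by omega) a b) hroot
      (root_notMem_range hfa hfb) ?_ e ?_⟩
  · rw [MonoidHom.range_comp, MonoidHom.range_eq_top.mpr (Function.RightInverse.surjective hproj),
      ← MonoidHom.range_eq_map]
  · rintro _ ⟨w, rfl⟩
    simp [hproj]
  · rintro s ⟨⟨v, hv⟩, ⟨w, hw⟩⟩
    have hs : π s = s := by rw [← hv, map_generatorHom, hπa, hπb]
    rw [← hs, ← hw]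
    exact hπθ w
  · simp [e, root, a, b]
end
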